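/- arXiv:2005.09287 — 3 statements merged into one kernel-verified Lean document; each statement's English description precedes it below -/
import Mathlib

section
/- Let (F_x)_{x∈ℝ^d} be a germ, f ∈ D', γ ∈ ℝ, r ∈ ℕ, C < ∞ and K ⊆ ℝ^d such that |(f − F_x)(ψ_x^λ)| ≤ C λ^γ for all x ∈ K, λ ∈ (0,1] and ψ ∈ B_r. Then, with α := min{−r−d, γ}, one has |(F_z − F_y)(ψ_y^λ)| ≤ 2C λ^α (|z−y| + λ)^{γ−α} for all y, z ∈ K with |z−y| ≤ 1/2, all λ ∈ (0,1/2], and all ψ ∈ B_r. -/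
open MeasureTheory Metric Set Filter

noncomputable section

abbrev Ed (d : ℕ) := EuclideanSpace ℝ (Fin d)

/-- Test functions: smooth compactly supported functions on ℝ^d. -/
def IsTestFunction {d : ℕ} (φ : Ed d → ℝ) : Prop :=
  ContDiff ℝ (⊤ : ℕ∞) φ ∧ HasCompactSupport φ

/-- The scaled test function `φ_x^λ(z) = λ^{-d} φ(λ⁻¹(z - x))`. -/
def scaled {d : ℕ} (φ : Ed d → ℝ) (x : Ed d) (l : ℝ) : Ed d → ℝ :=
  fun z => (l ^ d)⁻¹ * φ (l⁻¹ • (z - x))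

/-- The `C^r` norm: sup of the norms of the iterated derivatives of order ≤ r. -/
def Cnorm {d : ℕ} (r : ℕ) (φ : Ed d → ℝ) : ℝ :=
  ⨆ i : Fin (r + 1), ⨆ x : Ed d, ‖iteratedFDeriv ℝ (i : ℕ) φ x‖

/-- The family `B_r` of test functions supported in `B(0,1)` with `C^r` norm at most 1. -/
def Br {d : ℕ} (r : ℕ) (ψ : Ed d → ℝ) : Prop :=
  IsTestFunction ψ ∧ tsupport ψ ⊆ closedBall (0 : Ed d) 1 ∧ Cnorm r ψ ≤ 1

/-- A linear functional is a distribution if on every compact set it is bounded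
by some `C^r` norm. -/
def IsDistribution {d : ℕ} (T : (Ed d → ℝ) →ₗ[ℝ] ℝ) : Prop :=
  ∀ K : Set (Ed d), IsCompact K → ∃ r : ℕ, ∃ C : ℝ,
    ∀ φ : Ed d → ℝ, IsTestFunction φ → tsupport φ ⊆ K → |T φ| ≤ C * Cnorm r φ

/-- A germ: a measurable family of distributions. -/
def IsGerm {d : ℕ} (F : Ed d → ((Ed d → ℝ) →ₗ[ℝ] ℝ)) : Prop :=
  (∀ x, IsDistribution (F x)) ∧
  ∀ ψ : Ed d → ℝ, IsTestFunction ψ → Measurable fun x => F x ψ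

/-- Monomial `y^k` for a multi-index `k`. -/
def mono {d : ℕ} (k : Fin d → ℕ) (y : Ed d) : ℝ := ∏ i, (y i) ^ (k i)

/-- Convolution of two functions. -/
def conv {d : ℕ} (f g : Ed d → ℝ) : Ed d → ℝ := fun x => ∫ y, f (x - y) * g y

/-- `rIndex α` is the smallest integer `r > -α` (for `α ≤ 0`). -/
def rIndex (α : ℝ) : ℕ := Nat.floor (-α) + 1

/-- Negative Hölder space condition `T ∈ C^α` for `α ≤ 0`. -/
def HolderNeg {d : ℕ} (α : ℝ) (T : (Ed d → ℝ) →ₗ[ℝ] ℝ) : Prop :=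
  ∀ K : Set (Ed d), IsCompact K → ∃ C : ℝ, ∀ x ∈ K, ∀ ε ∈ Set.Ioc (0:ℝ) 1,
    ∀ ψ : Ed d → ℝ, Br (rIndex α) ψ → |T (scaled ψ x ε)| ≤ C * ε ^ α

/-- `(α,γ)`-coherence of a germ with respect to the test function φ. -/
def AlphaGammaCoherent {d : ℕ} (α γ : ℝ) (F : Ed d → ((Ed d → ℝ) →ₗ[ℝ] ℝ))
    (φ : Ed d → ℝ) : Prop :=
  ∀ K : Set (Ed d), IsCompact K → ∃ C : ℝ, ∀ y ∈ K, ∀ z ∈ K, ∀ ε ∈ Set.Ioc (0:ℝ) 1,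
    |F z (scaled φ y ε) - F y (scaled φ y ε)| ≤ C * ε ^ α * (‖z - y‖ + ε) ^ (γ - α)

/-- Global homogeneity bound β for a germ with respect to the test function φ. -/
def HomBound {d : ℕ} (β : ℝ) (F : Ed d → ((Ed d → ℝ) →ₗ[ℝ] ℝ)) (φ : Ed d → ℝ) : Prop :=
  ∀ K : Set (Ed d), IsCompact K → ∃ C : ℝ, ∀ x ∈ K, ∀ ε ∈ Set.Ioc (0:ℝ) 1,
    |F x (scaled φ x ε)| ≤ C * ε ^ β
lemma Br_affine {d : ℕ} {r : ℕ} {ψ : Ed d → ℝ} (hψ : Br r ψ) (a : Ed d) (s : ℝ)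
    (hs : 1 ≤ s) (ha : ‖a‖ + 1 ≤ s) : Br r (fun w => (s ^ r)⁻¹ * ψ (a + s • w)) := by
  obtain ⟨⟨hsm, hcs⟩, hsupp, hnorm⟩ := hψ
  have hs0 : 0 < s := by linarith
  have hz : ∀ u : Ed d, 1 < ‖u‖ → ψ u = 0 := by
    intro u hu
    by_contra hne
    have := hsupp (subset_tsupport ψ hne)
    rw [mem_closedBall_zero_iff] at this
    linarith
  have hsub : tsupport (fun w => (s ^ r)⁻¹ * ψ (a + s • w)) ⊆ closedBall (0 : Ed d) 1 := by
    apply closure_minimal _ isClosed_closedBall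
    intro w hw
    rw [mem_closedBall_zero_iff]
    by_contra hlt
    push Not at hlt
    apply hw
    have h1 : 1 < ‖a + s • w‖ := by
      have h2 : ‖s • w‖ = s * ‖w‖ := by rw [norm_smul, Real.norm_of_nonneg hs0.le]
      have h3 : ‖s • w‖ ≤ ‖a + s • w‖ + ‖a‖ := by
        have := norm_sub_le (a + s • w) a
        simpa using this
      nlinarith
    simp [hz _ h1]
  have hsm2 : ContDiff ℝ (⊤ : ℕ∞) (fun w : Ed d => ψ (a + s • w)) :=
    hsm.comp (contDiff_const.add (contDiff_id.const_smul s))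
  have hbd : ∀ i : ℕ, i ≤ r → ∀ u, ‖iteratedFDeriv ℝ i ψ u‖ ≤ 1 := by
    intro i hi u
    refine le_trans ?_ hnorm
    have hb : BddAbove (range fun x => ‖iteratedFDeriv ℝ i ψ x‖) :=
      ((hsm.continuous_iteratedFDeriv (mod_cast le_top)).norm).bddAbove_range_of_hasCompactSupport
        (hcs.iteratedFDeriv i).norm
    refine (le_ciSup hb u).trans ?_
    exact le_ciSup (f := fun i : Fin (r + 1) => ⨆ x : Ed d, ‖iteratedFDeriv ℝ (i : ℕ) ψ x‖)
      (Set.finite_range _).bddAbove ⟨i, by omega⟩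
  refine ⟨⟨contDiff_const.mul hsm2, ?_⟩, hsub, ?_⟩
  · exact (isCompact_closedBall (0 : Ed d) 1).of_isClosed_subset (isClosed_tsupport _) hsub
  · refine ciSup_le fun i => ciSup_le fun x => ?_
    have hi : (i : ℕ) ≤ r := by omega
    have e1 : iteratedFDeriv ℝ (i : ℕ) (fun w => (s ^ r)⁻¹ * ψ (a + s • w)) x =
        (s ^ r)⁻¹ • iteratedFDeriv ℝ (i : ℕ) (fun w => ψ (a + s • w)) x :=
      iteratedFDeriv_const_smul_apply' (𝕜 := ℝ) (i := (i : ℕ)) (a := (s ^ r)⁻¹) (x := x)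
        (f := fun w : Ed d => ψ (a + s • w)) (hsm2.of_le (mod_cast le_top)).contDiffAt
    have e2 : iteratedFDeriv ℝ (i : ℕ) (fun w => ψ (a + s • w)) x =
        s ^ (i : ℕ) • iteratedFDeriv ℝ (i : ℕ) ψ (a + s • x) := by
      have hc : ContDiff ℝ (i : ℕ) (fun u : Ed d => ψ (a + u)) :=
        (hsm.comp (contDiff_const.add contDiff_id)).of_le (mod_cast le_top)
      have := congrFun (iteratedFDeriv_comp_const_smul s hc) x
      rw [this, iteratedFDeriv_comp_add_left]
    rw [e1, e2, norm_smul, norm_smul, Real.norm_of_nonneg (by positivity),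
      Real.norm_of_nonneg (by positivity)]
    have h1 : s ^ (i : ℕ) ≤ s ^ r := pow_le_pow_right₀ hs hi
    have h2 := hbd i hi (a + s • x)
    rw [inv_mul_le_iff₀ (by positivity)]
    have h3 : 0 < s ^ (i : ℕ) := by positivity
    nlinarith

/-- Coherence is necessary for the reconstruction bound. -/
theorem stmt6 {d : ℕ} (F : Ed d → ((Ed d → ℝ) →ₗ[ℝ] ℝ))
    (f : (Ed d → ℝ) →ₗ[ℝ] ℝ) (γ : ℝ) (r : ℕ) (C : ℝ) (K : Set (Ed d))
    (h : ∀ x ∈ K, ∀ l ∈ Set.Ioc (0:ℝ) 1, ∀ ψ : Ed d → ℝ, Br r ψ →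
      |f (scaled ψ x l) - F x (scaled ψ x l)| ≤ C * l ^ γ) :
    ∀ y ∈ K, ∀ z ∈ K, ‖z - y‖ ≤ 1/2 → ∀ l ∈ Set.Ioc (0:ℝ) (1/2),
      ∀ ψ : Ed d → ℝ, Br r ψ →
        |F z (scaled ψ y l) - F y (scaled ψ y l)| ≤
          2 * C * l ^ (min (-(r:ℝ) - d) γ) * (‖z - y‖ + l) ^ (γ - min (-(r:ℝ) - d) γ) := by
  intro y hy z hz hzy l hl ψ hψ
  obtain ⟨hl0, hl1⟩ := hl
  have hn := norm_nonneg (z - y)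
  set L := ‖z - y‖ + l with hL
  have hL0 : 0 < L := by linarith
  have hL1 : L ≤ 1 := by linarith
  have hlL : l ≤ L := by linarith
  have hs : 1 ≤ L / l := by rw [le_div_iff₀ hl0]; linarith
  have hξ : Br r (fun w => ((L / l) ^ r)⁻¹ * ψ (l⁻¹ • (z - y) + (L / l) • w)) := by
    apply Br_affine hψ _ _ hs
    rw [norm_smul, Real.norm_of_nonneg (by positivity), hL]
    apply le_of_eq
    field_simp
  have hsc : scaled ψ y l = ((L / l) ^ (d + r)) •
      scaled (fun w => ((L / l) ^ r)⁻¹ * ψ (l⁻¹ • (z - y) + (L / l) • w)) z L := by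
    funext w
    have hw : l⁻¹ • (z - y) + (L / l) • L⁻¹ • (w - z) = l⁻¹ • (w - y) := by
      rw [smul_smul, show L / l * L⁻¹ = l⁻¹ by field_simp, ← smul_add]
      congr 1
      abel
    simp only [scaled, Pi.smul_apply, smul_eq_mul, hw]
    rw [pow_add, div_pow, div_pow]
    field_simp
  have hA := h y hy l ⟨hl0, by linarith⟩ ψ hψ
  have hB := h z hz L ⟨hL0, hL1⟩ _ hξ
  have hC : 0 ≤ C := by
    have h1 := (abs_nonneg _).trans hA
    exact nonneg_of_mul_nonneg_left h1 (Real.rpow_pos_of_pos hl0 _)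
  set α := min (-(r:ℝ) - d) γ with hα
  have hα1 : α ≤ -(r:ℝ) - d := min_le_left _ _
  have hα2 : α ≤ γ := min_le_right _ _
  have hB' : |f (scaled ψ y l) - F z (scaled ψ y l)| ≤ (L / l) ^ (d + r) * (C * L ^ γ) := by
    rw [hsc, map_smul, map_smul, ← smul_sub, smul_eq_mul, abs_mul,
      abs_of_nonneg (by positivity)]
    exact mul_le_mul_of_nonneg_left hB (by positivity)
  have k1 : (L / l) ^ (d + r) * L ^ γ ≤ l ^ α * L ^ (γ - α) := by
    have e : l ^ α * L ^ (γ - α) = (L / l) ^ (-α) * L ^ γ := by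
      rw [Real.rpow_neg (by positivity), Real.div_rpow hL0.le hl0.le, Real.rpow_sub hL0]
      have := Real.rpow_pos_of_pos hL0 α
      have := Real.rpow_pos_of_pos hl0 α
      field_simp
    rw [e, ← Real.rpow_natCast]
    apply mul_le_mul_of_nonneg_right _ (Real.rpow_nonneg hL0.le _)
    apply Real.rpow_le_rpow_of_exponent_le hs
    push_cast
    linarith
  have k2 : l ^ γ ≤ l ^ α * L ^ (γ - α) := by
    have e : l ^ γ = l ^ α * l ^ (γ - α) := by
      rw [← Real.rpow_add hl0]; congr 1; ring
    rw [e]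
    exact mul_le_mul_of_nonneg_left (Real.rpow_le_rpow hl0.le hlL (by linarith))
      (Real.rpow_nonneg hl0.le _)
  have m1 := mul_le_mul_of_nonneg_left k1 hC
  have m2 := mul_le_mul_of_nonneg_left k2 hC
  rw [abs_le] at hA hB' ⊢
  constructor <;> nlinarith [hA.1, hA.2, hB'.1, hB'.2]
end
end

section
/- Let γ > 0 and let F = (F_x)_{x∈ℝ^d} be a γ-coherent germ: there exist φ ∈ D with ∫φ ≠ 0 and, for each compact K, an exponent α_K ≤ min{0,γ} with |(F_z − F_y)(φ_y^ε)| ≲ ε^{α_K}(|z−y|+ε)^{γ−α_K} uniformly over y,z ∈ K, ε ∈ (0,1]. Then there exists a unique distribution f ∈ D'(ℝ^d) such that for every test function ξ ∈ D, |(f − F_x)(ξ_x^λ)| ≲ λ^γ uniformly for x in compact sets and λ ∈ (0,1]. Moreover the map F ↦ f is linear. -/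
open MeasureTheory Metric Set Filter

noncomputable section

/-- γ-coherence of a germ with respect to a fixed test function φ (with K-dependent
exponents α_K given existentially). -/
def GammaCoherentWith {d : ℕ} (γ : ℝ) (F : Ed d → ((Ed d → ℝ) →ₗ[ℝ] ℝ))
    (φ : Ed d → ℝ) : Prop :=
  ∀ K : Set (Ed d), IsCompact K → ∃ α : ℝ, α ≤ min 0 γ ∧ ∃ C : ℝ,
    ∀ y ∈ K, ∀ z ∈ K, ∀ ε ∈ Set.Ioc (0:ℝ) 1,
      |F z (scaled φ y ε) - F y (scaled φ y ε)| ≤ C * ε ^ α * (‖z - y‖ + ε) ^ (γ - α)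

/-- `f` reconstructs the germ `F` at rate `λ^γ`, for every test function `ξ`,
uniformly over compact sets. -/
def Reconstructs {d : ℕ} (γ : ℝ) (F : Ed d → ((Ed d → ℝ) →ₗ[ℝ] ℝ))
    (f : (Ed d → ℝ) →ₗ[ℝ] ℝ) : Prop :=
  ∀ ξ : Ed d → ℝ, IsTestFunction ξ → ∀ K : Set (Ed d), IsCompact K → ∃ C : ℝ,
    ∀ x ∈ K, ∀ l ∈ Set.Ioc (0:ℝ) 1,
      |f (scaled ξ x l) - F x (scaled ξ x l)| ≤ C * l ^ γ

namespace Recon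

/-- Smooth compactly supported functions with values in `E`. -/
def TF {d : ℕ} {E : Type} [NormedAddCommGroup E] [NormedSpace ℝ E] (g : Ed d → E) : Prop :=
  ContDiff ℝ (⊤ : ℕ∞) g ∧ HasCompactSupport g

/-- Convolution of a scalar kernel with an `E`-valued function. -/
def Cv {d : ℕ} {E : Type} [NormedAddCommGroup E] [NormedSpace ℝ E]
    (κ : Ed d → ℝ) (g : Ed d → E) : Ed d → E :=
  MeasureTheory.convolution κ g (ContinuousLinearMap.lsmul ℝ ℝ) volume

section basic

variable {d : ℕ} {E : Type} [NormedAddCommGroup E] [NormedSpace ℝ E]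
  {κ : Ed d → ℝ} {g h : Ed d → E}

lemma Cv_apply (κ : Ed d → ℝ) (g : Ed d → E) (x : Ed d) :
    Cv κ g x = ∫ t, κ t • g (x - t) := rfl

lemma TF.cont (hg : TF g) : Continuous g := hg.1.continuous

lemma TF.bdd (hg : TF g) : ∃ B : ℝ, 0 ≤ B ∧ ∀ x, ‖g x‖ ≤ B := by
  obtain ⟨C, hC⟩ := hg.2.exists_bound_of_continuous hg.cont
  exact ⟨C, (norm_nonneg _).trans (hC 0), hC⟩

lemma TF.sub (hg : TF g) (hh : TF h) : TF (g - h) :=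
  ⟨hg.1.sub hh.1, by
    have := hg.2.add hh.2.neg
    rwa [← sub_eq_add_neg] at this⟩

lemma TF.add (hg : TF g) (hh : TF h) : TF (g + h) :=
  ⟨hg.1.add hh.1, hg.2.add hh.2⟩

lemma TF.smul (c : ℝ) (hg : TF g) : TF (c • g) :=
  ⟨hg.1.const_smul c, hg.2.smul_left (f := fun _ => c)⟩

lemma TF.fderiv (hg : TF g) : TF (fderiv ℝ g) :=
  ⟨hg.1.fderiv_right (m := ((⊤ : ℕ∞) : WithTop ℕ∞)) (by simp), hg.2.fderiv (𝕜 := ℝ)⟩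

lemma TF.iter (hg : TF g) (i : ℕ) : TF (iteratedFDeriv ℝ i g) :=
  ⟨hg.1.iteratedFDeriv_right (m := ((⊤ : ℕ∞) : WithTop ℕ∞)) (by exact_mod_cast le_top),
    hg.2.iteratedFDeriv i⟩

lemma TF.Cv (hκ : TF κ) (hg : TF g) : TF (Cv κ g) :=
  ⟨hg.2.contDiff_convolution_right _ hκ.cont.locallyIntegrable hg.1,
    HasCompactSupport.convolution _ hκ.2 hg.2⟩

lemma integrable_Cv (hκ : TF κ) (hg : TF g) (x : Ed d) :
    Integrable (fun t => κ t • g (x - t)) := by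
  refine Continuous.integrable_of_hasCompactSupport ?_ ?_
  · exact hκ.cont.smul (hg.cont.comp (continuous_const.sub continuous_id))
  · exact hκ.2.smul_right

lemma fderiv_Cv (hκ : TF κ) (hg : TF g) : fderiv ℝ (Cv κ g) = Cv κ (fderiv ℝ g) := by
  funext x
  have := (hg.2.hasFDerivAt_convolution_right (ContinuousLinearMap.lsmul ℝ ℝ)
    hκ.cont.locallyIntegrable (μ := volume) (hg.1.of_le (by simp)) x).fderiv
  unfold Cv
  rw [this]
  rfl

lemma isom_int {A B : Type} [NormedAddCommGroup A] [NormedSpace ℝ A] [NormedAddCommGroup B]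
    [NormedSpace ℝ B] (e : A ≃ₗᵢ[ℝ] B) (κ : Ed d → ℝ) (f : Ed d → A) :
    e (∫ t, κ t • f t) = ∫ t, κ t • e (f t) := by
  have := e.toContinuousLinearEquiv.integral_comp_comm (μ := volume) (fun t => κ t • f t)
  simpa using this.symm

lemma iter_Cv (hκ : TF κ) (hg : TF g) (i : ℕ) :
    iteratedFDeriv ℝ i (Cv κ g) = Cv κ (iteratedFDeriv ℝ i g) := by
  induction i with
  | zero =>
    funext x
    rw [iteratedFDeriv_zero_eq_comp, iteratedFDeriv_zero_eq_comp, Function.comp, Cv_apply, Cv_apply]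
    exact ((continuousMultilinearCurryFin0 ℝ (Ed d) E).symm.toContinuousLinearEquiv.integral_comp_comm
      (fun t => κ t • g (x - t))).symm.trans (by simp)
  | succ i ih =>
    funext x
    rw [iteratedFDeriv_succ_eq_comp_left, iteratedFDeriv_succ_eq_comp_left, ih,
      fderiv_Cv hκ (hg.iter i), Function.comp, Cv_apply, Cv_apply]
    exact isom_int (B := ContinuousMultilinearMap ℝ (fun _ : Fin (i + 1) => Ed d) E)
      (continuousMultilinearCurryLeftEquiv ℝ (fun _ : Fin (i + 1) => Ed d) E).symm κ
      (fun t => (_root_.fderiv ℝ (iteratedFDeriv ℝ i g)) (x - t))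

lemma Cv_add (hκ : TF κ) (hg : TF g) (hh : TF h) : Cv κ (g + h) = Cv κ g + Cv κ h := by
  funext x
  simp only [Cv_apply, Pi.add_apply, smul_add]
  exact integral_add (integrable_Cv hκ hg x) (integrable_Cv hκ hh x)

lemma Cv_smul (c : ℝ) : Cv κ (c • g) = c • Cv κ g := convolution_smul

lemma Cv_comm {η ψ : Ed d → ℝ} : Cv η ψ = Cv ψ η := by
  funext x
  rw [Cv_apply, Cv_apply, ← integral_sub_left_eq_self _ volume x]
  simp [mul_comm]

lemma norm_Cv_le {B : ℝ} (hκ : TF κ) (hB : ∀ x, ‖g x‖ ≤ B) (x : Ed d) :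
    ‖Cv κ g x‖ ≤ (∫ t, |κ t|) * B := by
  rw [Cv_apply, ← integral_mul_const]
  refine norm_integral_le_of_norm_le
    ((hκ.cont.integrable_of_hasCompactSupport hκ.2).abs.mul_const B) (ae_of_all _ fun t => ?_)
  rw [norm_smul]
  exact mul_le_mul_of_nonneg_left (hB _) (norm_nonneg _)

lemma norm_sub_Cv_le [CompleteSpace E] {B s : ℝ} (hκ : TF κ) (hg : TF g)
    (hκ1 : ∫ t, κ t = 1) (hκs : ∀ t, s < ‖t‖ → κ t = 0)
    (hB : ∀ x, ‖fderiv ℝ g x‖ ≤ B) (x : Ed d) :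
    ‖g x - Cv κ g x‖ ≤ (∫ t, |κ t|) * (s * B) := by
  have hi := hκ.cont.integrable_of_hasCompactSupport hκ.2 (μ := volume)
  have hB0 : 0 ≤ B := (norm_nonneg _).trans (hB 0)
  have h1 : g x = ∫ t, κ t • g x := by rw [integral_smul_const, hκ1, one_smul]
  have h2 : g x - Cv κ g x = ∫ t, κ t • (g x - g (x - t)) := by
    simp_rw [smul_sub]
    rw [integral_sub (hi.smul_const _) (integrable_Cv hκ hg x), ← h1, Cv_apply]
  rw [h2, ← integral_mul_const]
  refine norm_integral_le_of_norm_le (hi.abs.mul_const _) (ae_of_all _ fun t => ?_)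
  rw [norm_smul, Real.norm_eq_abs]
  by_cases ht : s < ‖t‖
  · simp [hκs t ht]
  · have h3 : ‖g x - g (x - t)‖ ≤ B * ‖x - (x - t)‖ :=
      Convex.norm_image_sub_le_of_norm_fderiv_le (𝕜 := ℝ) (s := univ)
        (fun y _ => (hg.1.differentiable (by simp)).differentiableAt) (fun y _ => hB y) convex_univ
        (mem_univ _) (mem_univ _)
    refine mul_le_mul_of_nonneg_left (h3.trans ?_) (abs_nonneg _)
    rw [sub_sub_cancel, mul_comm]
    exact mul_le_mul_of_nonneg_right (not_lt.1 ht) hB0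

lemma Cv_supp {x : Ed d} {s r : ℝ} (hκs : ∀ t, s < ‖t‖ → κ t = 0)
    (hg : ∀ y, r < dist y x → g y = 0) : ∀ y, r + s < dist y x → Cv κ g y = 0 := by
  intro y hy
  rw [Cv_apply]
  have : ∀ t, κ t • g (y - t) = 0 := by
    intro t
    by_cases ht : s < ‖t‖
    · simp [hκs t ht]
    · rw [hg (y - t), smul_zero]
      have := dist_triangle y (y - t) x
      simp only [dist_self_sub_right] at this
      linarith [not_lt.1 ht]
  simp [this]

end basic

section scaledfacts

variable {d : ℕ} {φ : Ed d → ℝ}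

lemma scaled_TF (hφ : TF φ) (x : Ed d) {l : ℝ} (hl : 0 < l) : TF (scaled φ x l) := by
  constructor
  · unfold scaled
    exact contDiff_const.mul (hφ.1.comp ((contDiff_id.sub contDiff_const).const_smul l⁻¹))
  · have h1 : HasCompactSupport (fun z : Ed d => φ (l⁻¹ • (z - x))) := by
      have := hφ.2.comp_homeomorph ((Homeomorph.subRight x).trans
        (Homeomorph.smulOfNeZero (l⁻¹) (inv_ne_zero hl.ne')))
      exact this
    exact h1.mul_left

lemma scaled_eq (φ : Ed d → ℝ) (w x : Ed d) (l : ℝ) : scaled φ w l x = scaled φ 0 l (x - w) := by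
  simp [scaled]

lemma integral_scaled (φ : Ed d → ℝ) (x : Ed d) {l : ℝ} (hl : 0 < l) :
    ∫ t, scaled φ x l t = ∫ t, φ t := by
  have h1 : (fun t => scaled φ x l t) = fun t => scaled φ 0 l (t - x) := by
    funext t; exact scaled_eq _ _ _ _
  rw [h1, integral_sub_right_eq_self (scaled φ 0 l) x]
  unfold scaled
  simp only [sub_zero]
  rw [integral_const_mul, Measure.integral_comp_smul]
  have : l ^ d ≠ 0 := by positivity
  simp only [finrank_euclideanSpace_fin, inv_pow, inv_inv, smul_eq_mul]
  rw [abs_of_pos (by positivity), ← mul_assoc, inv_mul_cancel₀ this, one_mul]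

lemma integral_abs_scaled (φ : Ed d → ℝ) (x : Ed d) {l : ℝ} (hl : 0 < l) :
    ∫ t, |scaled φ x l t| = ∫ t, |φ t| := by
  rw [← integral_scaled (fun t => |φ t|) x hl]
  congr 1
  funext t
  simp only [scaled, abs_mul]
  rw [abs_of_pos (by positivity)]

lemma scaled_supp {ρ : ℝ} (hφs : ∀ t, ρ < ‖t‖ → φ t = 0) (x : Ed d) {l : ℝ} (hl : 0 < l) :
    ∀ t, ρ * l < dist t x → scaled φ x l t = 0 := by
  intro t ht
  rw [scaled, hφs, mul_zero]
  rw [norm_smul, norm_inv, Real.norm_eq_abs, abs_of_pos hl, ← dist_eq_norm, inv_mul_eq_div,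
    lt_div_iff₀ hl]
  exact ht

lemma norm_iter_scaled_le (hφ : TF φ) (i : ℕ) : ∃ B : ℝ, 0 ≤ B ∧ ∀ (x : Ed d) (l : ℝ), 0 < l →
    ∀ y, ‖iteratedFDeriv ℝ i (scaled φ x l) y‖ ≤ B * (l ^ d)⁻¹ * (l ^ i)⁻¹ := by
  obtain ⟨B, hB0, hB⟩ := (hφ.iter i).bdd
  refine ⟨B, hB0, fun x l hl y => ?_⟩
  have h1 : scaled φ x l = fun z => (l ^ d)⁻¹ • (fun u => (fun v => φ (l⁻¹ • v)) (u - x)) z := rfl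
  have hsm : ContDiff ℝ i (fun v : Ed d => φ (l⁻¹ • v)) :=
    (hφ.1.of_le (by exact_mod_cast le_top)).comp (contDiff_id.const_smul l⁻¹)
  have hsm2 : ContDiff ℝ i (fun u : Ed d => (fun v => φ (l⁻¹ • v)) (u - x)) :=
    hsm.comp (contDiff_id.sub contDiff_const)
  rw [h1, iteratedFDeriv_const_smul_apply' hsm2.contDiffAt]
  rw [iteratedFDeriv_comp_sub (f := fun v => φ (l⁻¹ • v)), iteratedFDeriv_comp_const_smul _ (hφ.1.of_le (by exact_mod_cast le_top))]
  rw [norm_smul, norm_smul, norm_inv, norm_pow, norm_pow, norm_inv, Real.norm_eq_abs, abs_of_pos hl,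
    inv_pow]
  have := hB (l⁻¹ • (y - x))
  have h3 : 0 ≤ (l ^ d)⁻¹ * (l ^ i)⁻¹ := by positivity
  nlinarith [mul_le_mul_of_nonneg_left this h3]

end scaledfacts

end Recon

namespace Recon

/-- A normalized mollifying kernel. -/
structure Ker {d : ℕ} (φ : Ed d → ℝ) (ρ : ℝ) : Prop where
  tf : TF φ
  one : ∫ t, φ t = 1
  nonneg : 0 ≤ ρ
  supp : ∀ t, ρ < ‖t‖ → φ t = 0

/-- Remainders of the multiscale decomposition. -/
def sq {d : ℕ} {E : Type} [NormedAddCommGroup E] [NormedSpace ℝ E] (φ : Ed d → ℝ) (ε : ℝ) :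
    ℕ → (Ed d → E) → (Ed d → E)
  | 0, g => g
  | n + 1, g => sq φ ε n g - Cv (scaled φ 0 (ε / 2 ^ n)) (sq φ ε n g)

section sqfacts

variable {d : ℕ} {E : Type} [NormedAddCommGroup E] [NormedSpace ℝ E]
  {φ : Ed d → ℝ} {ρ ε : ℝ} {g h : Ed d → E}

lemma Ker.sc (hφ : Ker φ ρ) (hε : 0 < ε) (n : ℕ) : TF (scaled φ 0 (ε / 2 ^ n)) :=
  scaled_TF hφ.tf 0 (by positivity)

lemma sq_zero (φ : Ed d → ℝ) (ε : ℝ) (g : Ed d → E) : sq φ ε 0 g = g := rfl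

lemma sq_succ (φ : Ed d → ℝ) (ε : ℝ) (n : ℕ) (g : Ed d → E) : sq φ ε (n + 1) g =
    sq φ ε n g - Cv (scaled φ 0 (ε / 2 ^ n)) (sq φ ε n g) := rfl

lemma sq_succ' (φ : Ed d → ℝ) (ε : ℝ) (n : ℕ) (g : Ed d → E) : sq φ ε (n + 1) g =
    sq φ (ε / 2) n (g - Cv (scaled φ 0 ε) g) := by
  induction n with
  | zero => simp [sq]
  | succ n ih =>
    rw [sq_succ, ih, sq_succ, pow_succ', div_div]

lemma sq_TF (hφ : Ker φ ρ) (hε : 0 < ε) (hg : TF g) (n : ℕ) : TF (sq φ ε n g) := by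
  induction n with
  | zero => exact hg
  | succ n ih => exact ih.sub ((hφ.sc hε n).Cv ih)

lemma sq_add (hφ : Ker φ ρ) (hε : 0 < ε) (hg : TF g) (hh : TF h) (n : ℕ) :
    sq φ ε n (g + h) = sq φ ε n g + sq φ ε n h := by
  induction n with
  | zero => rfl
  | succ n ih =>
    rw [sq_succ, ih, Cv_add (hφ.sc hε n) (sq_TF hφ hε hg n) (sq_TF hφ hε hh n), sq_succ, sq_succ]
    abel

lemma sq_smul (c : ℝ) (n : ℕ) : sq φ ε n (c • g) = c • sq φ ε n g := by
  induction n with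
  | zero => rfl
  | succ n ih => rw [sq_succ, ih, Cv_smul, sq_succ, smul_sub]

lemma fderiv_sq (hφ : Ker φ ρ) (hε : 0 < ε) (hg : TF g) (n : ℕ) :
    fderiv ℝ (sq φ ε n g) = sq φ ε n (fderiv ℝ g) := by
  induction n with
  | zero => rfl
  | succ n ih =>
    have h1 := sq_TF hφ hε hg n
    have h2 := (hφ.sc hε n).Cv h1
    rw [sq_succ, sq_succ, ← ih, ← fderiv_Cv (hφ.sc hε n) h1]
    funext x
    exact fderiv_sub (h1.1.differentiable (by simp)).differentiableAt
      (h2.1.differentiable (by simp)).differentiableAt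

lemma iter_sq (hφ : Ker φ ρ) (hε : 0 < ε) (hg : TF g) (i n : ℕ) :
    iteratedFDeriv ℝ i (sq φ ε n g) = sq φ ε n (iteratedFDeriv ℝ i g) := by
  induction n with
  | zero => rfl
  | succ n ih =>
    have h1 := sq_TF hφ hε hg n
    have h2 := (hφ.sc hε n).Cv h1
    rw [sq_succ, sq_succ, ← ih, ← iter_Cv (hφ.sc hε n) h1]
    funext x
    exact iteratedFDeriv_sub_apply (h1.1.contDiffAt.of_le (by exact_mod_cast le_top))
      (h2.1.contDiffAt.of_le (by exact_mod_cast le_top))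

lemma sq_supp (hφ : Ker φ ρ) (hε : 0 < ε) {x : Ed d} {r : ℝ}
    (hg : ∀ y, r < dist y x → g y = 0) (n : ℕ) :
    ∀ y, r + 2 * ρ * ε < dist y x → sq φ ε n g y = 0 := by
  have key : ∀ y, r + 2 * ρ * ε * (1 - 1 / 2 ^ n) < dist y x → sq φ ε n g y = 0 := by
    induction n with
    | zero => simpa [sq] using hg
    | succ n ih =>
      intro y hy
      have hn : (0 : ℝ) < 2 ^ n := by positivity
      have e1 : r + 2 * ρ * ε * (1 - 1 / 2 ^ (n + 1)) =
          r + 2 * ρ * ε * (1 - 1 / 2 ^ n) + ρ * (ε / 2 ^ n) := by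
        rw [pow_succ]; field_simp; ring
      have e2 : 0 ≤ ρ * (ε / 2 ^ n) := mul_nonneg hφ.nonneg (by positivity)
      rw [sq_succ, Pi.sub_apply, ih y (by linarith), zero_sub, neg_eq_zero]
      refine Cv_supp (s := ρ * (ε / 2 ^ n)) (fun t ht => ?_) ih y (by linarith)
      exact scaled_supp hφ.supp 0 (by positivity) t (by simpa using ht)
  intro y hy
  refine key y (lt_of_le_of_lt ?_ hy)
  have : 0 ≤ 2 * ρ * ε := by have := hφ.nonneg; positivity
  have h2 : (0 : ℝ) ≤ 1 / 2 ^ n := by positivity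
  nlinarith

end sqfacts

/-- The growth factor. -/
def qq {d : ℕ} (φ : Ed d → ℝ) : ℝ := 1 + ∫ t, |φ t|

lemma one_le_qq {d : ℕ} (φ : Ed d → ℝ) : 1 ≤ qq φ := by
  have : 0 ≤ ∫ t, |φ t| := integral_nonneg fun t => abs_nonneg _
  unfold qq; linarith

lemma decay {d : ℕ} {φ : Ed d → ℝ} {ρ : ℝ} (hφ : Ker φ ρ) (j : ℕ) : ∃ C : ℝ, 0 ≤ C ∧
    ∀ (E : Type) [NormedAddCommGroup E] [NormedSpace ℝ E] [CompleteSpace E] (g : Ed d → E)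
      (ε B : ℝ), 0 < ε → 0 ≤ B → TF g →
      (∀ i ≤ j, ∀ x, ‖iteratedFDeriv ℝ i g x‖ ≤ B * (ε ^ i)⁻¹) →
      ∀ n x, ‖sq φ ε n g x‖ ≤ C * B * (qq φ / 2 ^ j) ^ n := by
  have hL : 0 ≤ ∫ t, |φ t| := integral_nonneg fun t => abs_nonneg _
  have hq := one_le_qq φ
  induction j with
  | zero =>
    refine ⟨1, zero_le_one, fun E _ _ _ g ε B hε hB hg hb n => ?_⟩
    induction n with
    | zero => intro x; simpa [sq] using hb 0 le_rfl x
    | succ n ih =>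
      intro x
      rw [sq_succ, Pi.sub_apply]
      have h1 := norm_Cv_le (hφ.sc hε n) ih x
      rw [integral_abs_scaled _ _ (by positivity)] at h1
      refine (norm_sub_le _ _).trans ((add_le_add (ih x) h1).trans (le_of_eq ?_))
      rw [pow_succ]
      simp only [pow_zero, div_one]
      have : qq φ = 1 + ∫ t, |φ t| := rfl
      generalize qq φ ^ n = y
      rw [this]
      ring
  | succ j ihj =>
    obtain ⟨C, hC, H⟩ := ihj
    refine ⟨1 + (∫ t, |φ t|) * ρ * C * 2 ^ (j + 1), by have := hφ.nonneg; positivity,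
      fun E _ _ _ g ε B hε hB hg hb n => ?_⟩
    have hr := hφ.nonneg
    cases n with
    | zero =>
      intro x
      have h0 : ‖g x‖ ≤ B := by simpa using hb 0 (Nat.zero_le _) x
      have : 0 ≤ (∫ t, |φ t|) * ρ * C * 2 ^ (j + 1) * B := by positivity
      rw [sq_zero, pow_zero]
      linarith
    | succ n =>
      intro x
      have h1 : ∀ y, ‖fderiv ℝ (sq φ ε n g) y‖ ≤ C * (B / ε) * (qq φ / 2 ^ j) ^ n := by
        intro y
        rw [fderiv_sq hφ hε hg]
        refine H _ (fderiv ℝ g) ε (B / ε) hε (by positivity) hg.fderiv (fun i hi z => ?_) n y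
        rw [norm_iteratedFDeriv_fderiv]
        refine (hb (i + 1) (by omega) z).trans (le_of_eq ?_)
        rw [pow_succ]; field_simp
      have h2 := norm_sub_Cv_le (s := ρ * (ε / 2 ^ n)) (hφ.sc hε n) (sq_TF hφ hε hg n)
        (by rw [integral_scaled _ _ (by positivity)]; exact hφ.one)
        (fun t ht => scaled_supp hφ.supp 0 (by positivity) t (by simpa using ht)) h1 x
      rw [integral_abs_scaled _ _ (by positivity)] at h2
      rw [sq_succ, Pi.sub_apply]
      refine h2.trans ?_
      have e1 : (∫ t, |φ t|) * (ρ * (ε / 2 ^ n) * (C * (B / ε) * (qq φ / 2 ^ j) ^ n)) =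
          (∫ t, |φ t|) * ρ * C * B * (qq φ / 2 ^ (j + 1)) ^ n := by
        rw [pow_succ (2 : ℝ) j, ← div_div, div_pow _ (2 : ℝ) n]
        field_simp
      have e2 : (1 + (∫ t, |φ t|) * ρ * C * 2 ^ (j + 1)) * B * (qq φ / 2 ^ (j + 1)) ^ (n + 1) =
          B * (qq φ / 2 ^ (j + 1)) ^ (n + 1) +
          qq φ * ((∫ t, |φ t|) * ρ * C * B * (qq φ / 2 ^ (j + 1)) ^ n) := by
        rw [pow_succ (qq φ / 2 ^ (j + 1)) n]
        have h2 : (2 : ℝ) ^ (j + 1) ≠ 0 := by positivity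
        generalize (qq φ / 2 ^ (j + 1)) ^ n = y
        field_simp
      rw [e1, e2]
      have hq0 : 0 ≤ qq φ := by linarith
      have e3 : 0 ≤ B * (qq φ / 2 ^ (j + 1)) ^ (n + 1) := by positivity
      have e4 : 0 ≤ (∫ t, |φ t|) * ρ * C * B * (qq φ / 2 ^ (j + 1)) ^ n := by positivity
      nlinarith

/-- Any smooth compactly supported function admits weighted derivative bounds. -/
lemma TF.exB {d : ℕ} {E : Type} [NormedAddCommGroup E] [NormedSpace ℝ E] {g : Ed d → E}
    (hg : TF g) (j : ℕ) : ∃ B : ℝ, 0 ≤ B ∧ ∀ i ≤ j, ∀ x, ‖iteratedFDeriv ℝ i g x‖ ≤ B := by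
  induction j with
  | zero =>
    obtain ⟨B, hB, h⟩ := (hg.iter 0).bdd
    refine ⟨B, hB, fun i hi x => ?_⟩
    obtain rfl : i = 0 := by omega
    exact h x
  | succ j ih =>
    obtain ⟨B, hB, h⟩ := ih
    obtain ⟨B', hB', h'⟩ := (hg.iter (j + 1)).bdd
    refine ⟨B + B', by positivity, fun i hi x => ?_⟩
    rcases Nat.lt_or_ge i (j + 1) with hlt | hge
    · linarith [h i (by omega) x]
    · obtain rfl : i = j + 1 := by omega
      linarith [h' x]

lemma exists_jpow (a q : ℝ) : ∃ j : ℕ, a * (q / 2 ^ j) ≤ 1 / 2 := by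
  obtain ⟨j, hj⟩ := pow_unbounded_of_one_lt (2 * (a * q)) (one_lt_two (α := ℝ))
  refine ⟨j, ?_⟩
  have : (0 : ℝ) < 2 ^ j := by positivity
  rw [← mul_div_assoc, div_le_iff₀ this]
  linarith

/-- Rapid decay of the remainders. -/
lemma sq_tendsto {d : ℕ} {E : Type} [NormedAddCommGroup E] [NormedSpace ℝ E] [CompleteSpace E]
    {φ : Ed d → ℝ} {ρ ε : ℝ} (hφ : Ker φ ρ) (hε : 0 < ε) (hε1 : ε ≤ 1) {g : Ed d → E} (hg : TF g) :
    ∃ C : ℝ, 0 ≤ C ∧ ∀ n x, ‖sq φ ε n g x‖ ≤ C * (1 / 2) ^ n := by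
  have hq := one_le_qq φ
  obtain ⟨j, hj⟩ := exists_jpow 1 (qq φ)
  obtain ⟨C, hC, H⟩ := decay hφ j
  obtain ⟨B, hB, hb⟩ := hg.exB j
  refine ⟨C * B, by positivity, fun n x => ?_⟩
  refine (H E g ε B hε hB hg (fun i hi x => (hb i hi x).trans ?_) n x).trans ?_
  · exact le_mul_of_one_le_right hB ((one_le_inv₀ (by positivity)).2 (pow_le_one₀ hε.le hε1))
  · have : 0 ≤ qq φ / 2 ^ j := by positivity
    exact mul_le_mul_of_nonneg_left (pow_le_pow_left₀ this (by linarith) n) (by positivity)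

end Recon

namespace Recon

open scoped Pointwise

/-- The space of jets of order `r`. -/
def XX (d r : ℕ) : Type :=
  (i : Fin (r + 1)) → BoundedContinuousFunction (Ed d) (Ed d [×(i : ℕ)]→L[ℝ] ℝ)

instance instXXG (d r : ℕ) : NormedAddCommGroup (XX d r) :=
  inferInstanceAs (NormedAddCommGroup ((i : Fin (r + 1)) →
    BoundedContinuousFunction (Ed d) (Ed d [×(i : ℕ)]→L[ℝ] ℝ)))

instance instXXS (d r : ℕ) : NormedSpace ℝ (XX d r) :=
  inferInstanceAs (NormedSpace ℝ ((i : Fin (r + 1)) →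
    BoundedContinuousFunction (Ed d) (Ed d [×(i : ℕ)]→L[ℝ] ℝ)))

instance instXXC (d r : ℕ) : CompleteSpace (XX d r) :=
  inferInstanceAs (CompleteSpace ((i : Fin (r + 1)) →
    BoundedContinuousFunction (Ed d) (Ed d [×(i : ℕ)]→L[ℝ] ℝ)))

/-- Evaluation of a jet. -/
def XXev {d r : ℕ} (i : Fin (r + 1)) (x : Ed d) : XX d r →L[ℝ] (Ed d [×(i : ℕ)]→L[ℝ] ℝ) :=
  (BoundedContinuousFunction.evalCLM ℝ x).comp
    (ContinuousLinearMap.proj (R := ℝ) (φ := fun i : Fin (r + 1) =>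
      BoundedContinuousFunction (Ed d) (Ed d [×(i : ℕ)]→L[ℝ] ℝ)) i)

lemma XX_ext {d r : ℕ} {a b : XX d r} (h : ∀ i x, XXev i x a = XXev i x b) : a = b := by
  funext i
  ext1 x
  exact h i x

/-- The jet of a test function. -/
def JJ {d : ℕ} (r : ℕ) (u : Ed d → ℝ) (hu : TF u) : XX d r := fun i =>
  BoundedContinuousFunction.ofNormedAddCommGroup (iteratedFDeriv ℝ (i : ℕ) u) (hu.iter i).cont
    (Classical.choose (hu.iter i).bdd) (Classical.choose_spec (hu.iter i).bdd).2

lemma JJ_apply {d : ℕ} (r : ℕ) (u : Ed d → ℝ) (hu : TF u) (i : Fin (r + 1)) (x : Ed d) :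
    XXev i x (JJ r u hu) = iteratedFDeriv ℝ (i : ℕ) u x := rfl

lemma Cnorm_le_JJ {d : ℕ} (r : ℕ) (u : Ed d → ℝ) (hu : TF u) : Cnorm r u ≤ ‖JJ r u hu‖ := by
  unfold Cnorm
  refine ciSup_le fun i => ciSup_le fun x => ?_
  rw [← JJ_apply r u hu i x]
  exact ((JJ r u hu i).norm_coe_le_norm x).trans (norm_le_pi_norm
    (G := fun i : Fin (r + 1) => BoundedContinuousFunction (Ed d) (Ed d [×(i : ℕ)]→L[ℝ] ℝ))
    (JJ r u hu) i)

lemma le_Cnorm {d : ℕ} (r : ℕ) (u : Ed d → ℝ) (hu : TF u) (i : ℕ) (hi : i ≤ r) (x : Ed d) :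
    ‖iteratedFDeriv ℝ i u x‖ ≤ Cnorm r u := by
  unfold Cnorm
  have h1 : ∀ i : ℕ, BddAbove (range fun x => ‖iteratedFDeriv ℝ i u x‖) := fun i => by
    obtain ⟨B, -, hB⟩ := (hu.iter i).bdd
    exact ⟨B, by rintro _ ⟨x, rfl⟩; exact hB x⟩
  refine (le_ciSup (h1 i) x).trans ?_
  exact le_ciSup (f := fun i : Fin (r + 1) => ⨆ x : Ed d, ‖iteratedFDeriv ℝ (i : ℕ) u x‖)
    (Set.finite_range _).bddAbove ⟨i, by omega⟩

lemma Cnorm_nonneg {d : ℕ} (r : ℕ) (u : Ed d → ℝ) : 0 ≤ Cnorm r u :=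
  Real.iSup_nonneg fun _ => Real.iSup_nonneg fun _ => norm_nonneg _

/-- Test functions vanishing outside `K`. -/
def DK {d : ℕ} (K : Set (Ed d)) : Submodule ℝ (Ed d → ℝ) where
  carrier := {u | TF u ∧ ∀ x ∉ K, u x = 0}
  add_mem' := fun ha hb => ⟨ha.1.add hb.1, fun x hx => by simp [ha.2 x hx, hb.2 x hx]⟩
  zero_mem' := ⟨⟨contDiff_const, HasCompactSupport.zero⟩, fun x _ => rfl⟩
  smul_mem' := fun c _ ha => ⟨ha.1.smul c, fun x hx => by simp [ha.2 x hx]⟩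

lemma TF.cdi {d : ℕ} {E : Type} [NormedAddCommGroup E] [NormedSpace ℝ E] {u : Ed d → E} (hu : TF u)
    (i : ℕ) : ContDiff ℝ i u := hu.1.of_le (by exact_mod_cast le_top)

lemma hb_ext {d : ℕ} {T : (Ed d → ℝ) →ₗ[ℝ] ℝ} (hT : IsDistribution T) {K : Set (Ed d)}
    (hK : IsCompact K) : ∃ r : ℕ, ∃ S : XX d r →L[ℝ] ℝ, ∀ (u : Ed d → ℝ) (hu : TF u),
      (∀ x ∉ K, u x = 0) → S (JJ r u hu) = T u := by
  obtain ⟨r, C, hC⟩ := hT K hK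
  refine ⟨r, ?_⟩
  let J : DK K →ₗ[ℝ] XX d r :=
    { toFun := fun u => JJ r u.1 u.2.1
      map_add' := fun u v => by
        refine XX_ext fun i x => ?_
        rw [map_add, JJ_apply, JJ_apply, JJ_apply]
        exact iteratedFDeriv_add_apply (u.2.1.cdi i).contDiffAt (v.2.1.cdi i).contDiffAt
      map_smul' := fun c u => by
        refine XX_ext fun i x => ?_
        rw [RingHom.id_apply, map_smul, JJ_apply, JJ_apply]
        exact iteratedFDeriv_const_smul_apply (u.2.1.cdi i).contDiffAt }
  have hinj : Function.Injective J := by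
    intro u v huv
    ext x
    have h1 : XXev 0 x (JJ r u.1 u.2.1) = XXev 0 x (JJ r v.1 v.2.1) := by
      have : JJ r u.1 u.2.1 = JJ r v.1 v.2.1 := huv
      rw [this]
    rw [JJ_apply, JJ_apply] at h1
    have h2 := congrArg (fun m => m (fun _ => (0 : Ed d))) h1
    exact h2
  let e := LinearEquiv.ofInjective J hinj
  let T' : LinearMap.range J →ₗ[ℝ] ℝ := (T ∘ₗ (DK K).subtype) ∘ₗ e.symm.toLinearMap
  have hb : ∀ y, ‖T' y‖ ≤ max C 0 * ‖y‖ := by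
    intro y
    obtain ⟨u, rfl⟩ := e.surjective y
    have h1 : T' (e u) = T u.1 := by simp [T']
    have h2 : ‖e u‖ = ‖JJ r u.1 u.2.1‖ := rfl
    rw [h1, h2]
    have h3 : tsupport u.1 ⊆ K := closure_minimal (fun x hx => by
      by_contra hxK; exact hx (u.2.2 x hxK)) hK.isClosed
    refine (hC u.1 u.2.1 h3).trans ?_
    refine (mul_le_mul_of_nonneg_right (le_max_left C 0) (Cnorm_nonneg _ _)).trans ?_
    exact mul_le_mul_of_nonneg_left (Cnorm_le_JJ r _ _) (le_max_right _ _)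
  obtain ⟨S, hS, -⟩ := exists_extension_norm_eq (LinearMap.range J) (T'.mkContinuous _ hb)
  refine ⟨S, fun u hu huK => ?_⟩
  have h1 := hS (e ⟨u, hu, huK⟩)
  have h2 : ((e ⟨u, hu, huK⟩ : LinearMap.range J) : XX d r) = JJ r u hu := rfl
  rw [h2] at h1
  rw [h1]
  simp [T']

lemma TF.trans {d : ℕ} {η : Ed d → ℝ} (hη : TF η) (w : Ed d) : TF (fun x => η (x - w)) :=
  ⟨hη.1.comp (contDiff_id.sub contDiff_const),
    hη.2.comp_homeomorph (Homeomorph.subRight w)⟩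

lemma JJ_trans_cont {d : ℕ} (r : ℕ) {η : Ed d → ℝ} (hη : TF η) :
    Continuous fun w => JJ r (fun x => η (x - w)) (hη.trans w) := by
  refine continuous_pi (A := fun i : Fin (r + 1) =>
    BoundedContinuousFunction (Ed d) (Ed d [×(i : ℕ)]→L[ℝ] ℝ)) fun i => ?_
  rw [Metric.continuous_iff]
  intro w e he
  have huc : UniformContinuous (iteratedFDeriv ℝ (i : ℕ) η) :=
    (hη.iter i).2.uniformContinuous_of_continuous (hη.iter i).cont
  obtain ⟨δ, hδ, H⟩ := Metric.uniformContinuous_iff.1 huc (e / 2) (by positivity)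
  refine ⟨δ, hδ, fun v hv => lt_of_le_of_lt ?_ (half_lt_self he)⟩
  refine (BoundedContinuousFunction.dist_le (by positivity)).2 fun x => ?_
  change dist (iteratedFDeriv ℝ (i : ℕ) (fun x => η (x - v)) x)
    (iteratedFDeriv ℝ (i : ℕ) (fun x => η (x - w)) x) ≤ _
  rw [iteratedFDeriv_comp_sub, iteratedFDeriv_comp_sub]
  refine (H ?_).le
  rwa [dist_sub_left]

/-- Distributions commute with convolution integrals. -/
lemma exchange {d : ℕ} {T : (Ed d → ℝ) →ₗ[ℝ] ℝ} (hT : IsDistribution T) {η ψ : Ed d → ℝ}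
    (hη : TF η) (hψ : TF ψ) : T (Cv η ψ) = ∫ w, T (fun x => η (x - w)) * ψ w := by
  obtain ⟨K, hK, hKs⟩ : ∃ K : Set (Ed d), IsCompact K ∧
      ∀ w, ψ w ≠ 0 → ∀ x ∉ K, η (x - w) = 0 := by
    refine ⟨tsupport η + tsupport ψ, hη.2.isCompact.add hψ.2.isCompact, fun w hw x hx => ?_⟩
    by_contra h
    exact hx ⟨x - w, subset_tsupport _ h, w, subset_tsupport _ hw, by simp⟩
  obtain ⟨r, S, hS⟩ := hb_ext hT hK
  have hCT : TF (Cv ψ η) := hψ.Cv hη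
  have hCK : ∀ x ∉ K, Cv ψ η x = 0 := by
    intro x hx
    rw [Cv_apply]
    have : ∀ t, ψ t • η (x - t) = 0 := fun t => by
      by_cases ht : ψ t = 0
      · simp [ht]
      · simp [hKs t ht x hx]
    simp only [this, integral_zero]
  have hJint : Integrable (fun w => ψ w • JJ r (fun x => η (x - w)) (hη.trans w)) :=
    (hψ.cont.smul (JJ_trans_cont r hη)).integrable_of_hasCompactSupport hψ.2.smul_right
  have hJ : ∫ w, ψ w • JJ r (fun x => η (x - w)) (hη.trans w) = JJ r (Cv ψ η) hCT := by
    refine XX_ext fun i x => ?_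
    rw [← (XXev i x).integral_comp_comm hJint, JJ_apply, iter_Cv hψ hη, Cv_apply]
    congr 1
    funext w
    rw [map_smul, JJ_apply, iteratedFDeriv_comp_sub]
  rw [Cv_comm, ← hS _ hCT hCK, ← hJ, ← S.integral_comp_comm hJint]
  congr 1
  funext w
  rw [map_smul, smul_eq_mul, mul_comm]
  by_cases hw : ψ w = 0
  · simp [hw]
  · rw [hS _ _ (hKs w hw)]

lemma T_trans_cont {d : ℕ} {T : (Ed d → ℝ) →ₗ[ℝ] ℝ} (hT : IsDistribution T) {η : Ed d → ℝ}
    (hη : TF η) : Continuous fun w => T (fun x => η (x - w)) := by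
  rw [continuous_iff_continuousAt]
  intro w₀
  have hK : IsCompact (tsupport η + closedBall w₀ 1) :=
    hη.2.isCompact.add (isCompact_closedBall w₀ 1)
  obtain ⟨r, S, hS⟩ := hb_ext hT hK
  have h1 : ContinuousAt (fun w => S (JJ r (fun x => η (x - w)) (hη.trans w))) w₀ :=
    (S.continuous.comp (JJ_trans_cont r hη)).continuousAt
  refine h1.congr ?_
  filter_upwards [closedBall_mem_nhds w₀ one_pos] with w hw
  refine hS _ _ fun x hx => ?_
  by_contra h
  exact hx ⟨x - w, subset_tsupport _ h, w, hw, by simp⟩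

end Recon

namespace Recon

open scoped Topology

lemma TF.suppR {d : ℕ} {E : Type} [NormedAddCommGroup E] [NormedSpace ℝ E] {g : Ed d → E}
    (hg : TF g) : ∃ s : ℝ, 0 ≤ s ∧ ∀ y, s < ‖y‖ → g y = 0 := by
  obtain ⟨s, hs⟩ := hg.2.isCompact.isBounded.subset_closedBall 0
  refine ⟨max s 0, le_max_right _ _, fun y hy => ?_⟩
  by_contra h
  have := hs (subset_tsupport _ h)
  rw [mem_closedBall, dist_zero_right] at this
  exact absurd (this.trans (le_max_left s 0)) (not_le.2 hy)

lemma Cnorm_le {d : ℕ} (r : ℕ) (u : Ed d → ℝ) (D : ℝ)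
    (h : ∀ i ≤ r, ∀ x, ‖iteratedFDeriv ℝ i u x‖ ≤ D) : Cnorm r u ≤ D := by
  unfold Cnorm
  exact ciSup_le fun i => ciSup_le fun x => h i (by omega) x

lemma Cnorm_mono {d : ℕ} {r s : ℕ} (hrs : r ≤ s) {u : Ed d → ℝ} (hu : TF u) :
    Cnorm r u ≤ Cnorm s u :=
  Cnorm_le _ _ _ fun i hi x => le_Cnorm s u hu i (hi.trans hrs) x

lemma dist_add {d : ℕ} {T S : (Ed d → ℝ) →ₗ[ℝ] ℝ} (hT : IsDistribution T)
    (hS : IsDistribution S) : IsDistribution (T + S) := by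
  intro K hK
  obtain ⟨r, C, h⟩ := hT K hK
  obtain ⟨r', C', h'⟩ := hS K hK
  refine ⟨max r r', |C| + |C'|, fun ψ hψ hs => ?_⟩
  rw [LinearMap.add_apply, add_mul]
  refine (abs_add_le _ _).trans (add_le_add ((h ψ hψ hs).trans ?_) ((h' ψ hψ hs).trans ?_))
  · exact (mul_le_mul_of_nonneg_right (le_abs_self C) (Cnorm_nonneg _ _)).trans
      (mul_le_mul_of_nonneg_left (Cnorm_mono (le_max_left _ _) hψ) (abs_nonneg _))
  · exact (mul_le_mul_of_nonneg_right (le_abs_self C') (Cnorm_nonneg _ _)).trans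
      (mul_le_mul_of_nonneg_left (Cnorm_mono (le_max_right _ _) hψ) (abs_nonneg _))

lemma dist_sub' {d : ℕ} {T S : (Ed d → ℝ) →ₗ[ℝ] ℝ} (hT : IsDistribution T)
    (hS : IsDistribution S) : IsDistribution (T - S) := by
  rw [sub_eq_add_neg]
  refine dist_add hT fun K hK => ?_
  obtain ⟨r, C, h⟩ := hS K hK
  exact ⟨r, C, fun ψ hψ hs => by rw [LinearMap.neg_apply, abs_neg]; exact h ψ hψ hs⟩

lemma exchange' {d : ℕ} {T : (Ed d → ℝ) →ₗ[ℝ] ℝ} (hT : IsDistribution T) {φ ψ : Ed d → ℝ}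
    (hφ : TF φ) (hψ : TF ψ) {l : ℝ} (hl : 0 < l) :
    T (Cv (scaled φ 0 l) ψ) = ∫ w, T (scaled φ w l) * ψ w := by
  rw [exchange hT (scaled_TF hφ 0 hl) hψ]
  congr 1
  funext w
  congr 2
  funext x
  exact (scaled_eq φ w x l).symm

lemma T_scaled_cont {d : ℕ} {T : (Ed d → ℝ) →ₗ[ℝ] ℝ} (hT : IsDistribution T) {φ : Ed d → ℝ}
    (hφ : TF φ) {l : ℝ} (hl : 0 < l) : Continuous fun w => T (scaled φ w l) := by
  have := T_trans_cont hT (scaled_TF hφ 0 hl)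
  refine this.congr fun w => ?_
  congr 1
  funext x
  exact (scaled_eq φ w x l).symm

/-- Multiscale representation of a distribution. -/
lemma repr {d : ℕ} {T : (Ed d → ℝ) →ₗ[ℝ] ℝ} (hT : IsDistribution T) {φ ψ : Ed d → ℝ} {ρ ε : ℝ}
    (hφ : Ker φ ρ) (hε : 0 < ε) (hε1 : ε ≤ 1) (hψ : TF ψ) :
    Tendsto (fun N => ∑ n ∈ Finset.range N,
      ∫ w, T (scaled φ w (ε / 2 ^ n)) * sq φ ε n ψ w) atTop (𝓝 (T ψ)) := by
  have h1 : ∀ N, ∑ n ∈ Finset.range N, ∫ w, T (scaled φ w (ε / 2 ^ n)) * sq φ ε n ψ w =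
      T ψ - T (sq φ ε N ψ) := by
    intro N
    induction N with
    | zero => simp [sq]
    | succ N ih =>
      rw [Finset.sum_range_succ, ih, ← exchange' hT hφ.tf (sq_TF hφ hε hψ N) (by positivity),
        sq_succ, map_sub]
      ring
  simp_rw [h1]
  obtain ⟨s, hs0, hs⟩ := hψ.suppR
  obtain ⟨r, C, hC⟩ := hT (closedBall 0 (s + 2 * ρ * ε)) (isCompact_closedBall _ _)
  have h2 : ∀ i : ℕ, ∃ D : ℝ, 0 ≤ D ∧ ∀ n x, ‖iteratedFDeriv ℝ i (sq φ ε n ψ) x‖ ≤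
      D * (1 / 2) ^ n := by
    intro i
    obtain ⟨D, hD, h⟩ := sq_tendsto hφ hε hε1 (hψ.iter i)
    refine ⟨D, hD, fun n x => ?_⟩
    rw [iter_sq hφ hε hψ]
    exact h n x
  choose D hD0 hD using h2
  have h3 : ∀ n, |T (sq φ ε n ψ)| ≤ |C| * (∑ i ∈ Finset.range (r + 1), D i) * (1 / 2) ^ n := by
    intro n
    have h4 : tsupport (sq φ ε n ψ) ⊆ closedBall 0 (s + 2 * ρ * ε) := by
      refine closure_minimal (fun y hy => ?_) isClosed_closedBall
      by_contra h
      rw [mem_closedBall, not_le] at h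
      exact hy (sq_supp hφ hε (x := 0) (fun y hy => hs y (by simpa using hy)) n y h)
    refine (hC _ (sq_TF hφ hε hψ n) h4).trans ?_
    refine (mul_le_mul_of_nonneg_right (le_abs_self C) (Cnorm_nonneg _ _)).trans ?_
    rw [mul_assoc]
    refine mul_le_mul_of_nonneg_left (Cnorm_le _ _ _ fun i hi x => (hD i n x).trans ?_)
      (abs_nonneg _)
    refine mul_le_mul_of_nonneg_right ?_ (by positivity)
    exact Finset.single_le_sum (fun i _ => hD0 i) (Finset.mem_range.2 (by omega))
  have h5 : Tendsto (fun n => T (sq φ ε n ψ)) atTop (𝓝 0) := by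
    refine squeeze_zero_norm h3 ?_
    have := (tendsto_pow_atTop_nhds_zero_of_lt_one (r := (1 / 2 : ℝ)) (by norm_num)
      (by norm_num)).const_mul (|C| * (∑ i ∈ Finset.range (r + 1), D i))
    simpa using this
  simpa using tendsto_const_nhds.sub h5

lemma int_bound {d : ℕ} {h u : Ed d → ℝ} {x : Ed d} {r M N : ℝ} (hr : 0 ≤ r)
    (hu : ∀ y, r < dist y x → u y = 0) (hN : ∀ y, |u y| ≤ N) (hM0 : 0 ≤ M)
    (hM : ∀ y, dist y x ≤ r → |h y| ≤ M) :
    |∫ w, h w * u w| ≤ M * N * (r ^ d * volume.real (closedBall (0 : Ed d) 1)) := by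
  have h1 : ∫ w in closedBall x r, h w * u w = ∫ w, h w * u w := by
    refine setIntegral_eq_integral_of_forall_compl_eq_zero fun y hy => ?_
    rw [hu y (by simpa using hy), mul_zero]
  have h2 : volume.real (closedBall x r) = r ^ d * volume.real (closedBall (0 : Ed d) 1) := by
    rw [Measure.addHaar_real_closedBall' _ _ hr]
    simp
  rw [← h1, ← h2, ← Real.norm_eq_abs]
  refine norm_setIntegral_le_of_norm_le_const (isCompact_closedBall x r).measure_lt_top
    fun y hy => ?_
  rw [Real.norm_eq_abs, abs_mul]
  exact mul_le_mul (hM y hy) (hN y) (abs_nonneg _) hM0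

lemma int_able {d : ℕ} {h u : Ed d → ℝ} {x : Ed d} {r M : ℝ} (hh : Measurable h)
    (hu : ∀ y, r < dist y x → u y = 0) (huc : TF u)
    (hM : ∀ y, dist y x ≤ r → |h y| ≤ M) : Integrable fun w => h w * u w := by
  obtain ⟨N, hN0, hN⟩ := huc.bdd
  have h1 : IntegrableOn (fun w => h w * u w) (closedBall x r) := by
    refine Measure.integrableOn_of_bounded (M := M * N) (isCompact_closedBall x r).measure_lt_top.ne
      (hh.mul huc.cont.measurable).aestronglyMeasurable ?_
    refine (ae_restrict_iff' measurableSet_closedBall).2 (ae_of_all _ fun y hy => ?_)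
    rw [norm_mul]
    exact mul_le_mul (hM y hy) (hN y) (norm_nonneg _) ((abs_nonneg _).trans (hM y hy))
  refine (integrableOn_iff_integrable_of_support_subset fun y hy => ?_).1 h1
  by_contra hc
  rw [mem_closedBall, not_le] at hc
  exact hy (by simp [hu y hc])

lemma meas_diag {d : ℕ} {F : Ed d → ((Ed d → ℝ) →ₗ[ℝ] ℝ)} (hF : IsGerm F) {φ : Ed d → ℝ}
    (hφ : TF φ) {l : ℝ} (hl : 0 < l) : Measurable fun w => F w (scaled φ w l) := by
  have h1 : Measurable (Function.uncurry fun w z : Ed d => F z (scaled φ w l)) :=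
    measurable_uncurry_of_continuous_of_measurable
      (fun z => T_scaled_cont (hF.1 z) hφ hl) (fun w => hF.2 _ (scaled_TF hφ w hl))
  exact h1.comp (measurable_id.prodMk measurable_id)

/-- The terms of the multiscale series. -/
def term {d : ℕ} (F : Ed d → ((Ed d → ℝ) →ₗ[ℝ] ℝ)) (φ : Ed d → ℝ) (x : Ed d) (ε : ℝ) (n : ℕ)
    (ψ : Ed d → ℝ) : ℝ :=
  ∫ w, (F w (scaled φ w (ε / 2 ^ n)) - F x (scaled φ w (ε / 2 ^ n))) * sq φ ε n ψ w

/-- Integrability of the integrand of `term`. -/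
def TI {d : ℕ} (F : Ed d → ((Ed d → ℝ) →ₗ[ℝ] ℝ)) (φ : Ed d → ℝ) (x : Ed d) (ε : ℝ) (n : ℕ)
    (ψ : Ed d → ℝ) : Prop :=
  Integrable fun w =>
    (F w (scaled φ w (ε / 2 ^ n)) - F x (scaled φ w (ε / 2 ^ n))) * sq φ ε n ψ w

lemma alg_aux (c z4 z2 p z3 C2 B E z1 R V : ℝ) (hE : E ≠ 0) :
    c * (z4 * z2) * (p * z3) * (C2 * (B * E⁻¹) * z1) * (R * E * V) =
      c * p * C2 * (R * V) * B * (z4 * z3) * (z2 * z1) := by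
  have h := inv_mul_cancel₀ hE
  linear_combination (c * p * C2 * (R * V) * B * (z4 * z3) * (z2 * z1)) * h

set_option maxHeartbeats 1000000 in
lemma term_bound {d : ℕ} {γ : ℝ} (hγ : 0 < γ) {F : Ed d → ((Ed d → ℝ) →ₗ[ℝ] ℝ)}
    {φ : Ed d → ℝ} {ρ : ℝ} (hφ : Ker φ ρ) (hF : IsGerm F) (hc : GammaCoherentWith γ F φ)
    (M R : ℝ) (hR : 0 ≤ R) : ∃ k : ℕ, ∃ C : ℝ, 0 ≤ C ∧ ∀ x : Ed d, ‖x‖ ≤ M →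
      ∀ ε : ℝ, 0 < ε → ε ≤ 1 → ∀ B : ℝ, 0 ≤ B → ∀ ψ : Ed d → ℝ, TF ψ →
      (∀ y, R * ε < dist y x → ψ y = 0) →
      (∀ i ≤ k, ∀ y, ‖iteratedFDeriv ℝ i ψ y‖ ≤ B * (ε ^ d)⁻¹ * (ε ^ i)⁻¹) →
      ∀ n, TI F φ x ε n ψ ∧ |term F φ x ε n ψ| ≤ C * B * ε ^ γ * (1 / 2) ^ n := by
  have hρ := hφ.nonneg
  obtain ⟨α, hα, C0, hC0⟩ := hc (closedBall 0 (M + (R + 2 * ρ))) (isCompact_closedBall _ _)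
  have hα0 : α ≤ 0 := hα.trans (min_le_left _ _)
  have hga : 0 ≤ γ - α := by linarith
  obtain ⟨j, hj⟩ := exists_jpow ((2 : ℝ) ^ (-α)) (qq φ)
  obtain ⟨C2, hC2, hdec⟩ := decay hφ j
  set V : ℝ := volume.real (closedBall (0 : Ed d) 1) with hV
  have hV0 : 0 ≤ V := measureReal_nonneg
  set R' := R + 2 * ρ with hR'
  have hR'0 : 0 ≤ R' := by positivity
  refine ⟨j, max C0 0 * (R' + 1) ^ (γ - α) * C2 * (R' ^ d * V), by positivity, ?_⟩
  intro x hx ε hε hε1 B hB ψ hψ hsupp hder n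
  have h2n : (1 : ℝ) ≤ 2 ^ n := one_le_pow₀ (by norm_num)
  have hδ : 0 < ε / 2 ^ n := by positivity
  have hδε : ε / 2 ^ n ≤ ε := div_le_self hε.le h2n
  have hsq : ∀ y, R' * ε < dist y x → sq φ ε n ψ y = 0 := by
    intro y hy
    refine sq_supp hφ hε hsupp n y (lt_of_le_of_lt (le_of_eq ?_) hy)
    rw [hR']; ring
  have hM : ∀ y, dist y x ≤ R' * ε →
      |F y (scaled φ y (ε / 2 ^ n)) - F x (scaled φ y (ε / 2 ^ n))| ≤
      max C0 0 * (ε / 2 ^ n) ^ α * ((R' + 1) * ε) ^ (γ - α) := by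
    intro y hy
    have hxK : x ∈ closedBall (0 : Ed d) (M + R') := by
      rw [mem_closedBall, dist_zero_right]; linarith
    have hyK : y ∈ closedBall (0 : Ed d) (M + R') := by
      rw [mem_closedBall, dist_zero_right]
      have h1 := norm_le_norm_add_norm_sub' y x
      rw [← dist_eq_norm] at h1
      have : R' * ε ≤ R' := mul_le_of_le_one_right hR'0 hε1
      linarith
    have h1 := hC0 y hyK x hxK (ε / 2 ^ n) ⟨hδ, hδε.trans hε1⟩
    rw [abs_sub_comm]
    refine h1.trans ?_
    have h3 : ‖x - y‖ + ε / 2 ^ n ≤ (R' + 1) * ε := by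
      rw [← dist_eq_norm, dist_comm]; linarith
    have h4 : (‖x - y‖ + ε / 2 ^ n) ^ (γ - α) ≤ ((R' + 1) * ε) ^ (γ - α) :=
      Real.rpow_le_rpow (by positivity) h3 hga
    refine mul_le_mul ?_ h4 (by positivity) (by positivity)
    exact mul_le_mul_of_nonneg_right (le_max_left _ _) (by positivity)
  have hmeas : Measurable fun w => F w (scaled φ w (ε / 2 ^ n)) - F x (scaled φ w (ε / 2 ^ n)) :=
    (meas_diag hF hφ.tf hδ).sub (T_scaled_cont (hF.1 x) hφ.tf hδ).measurable
  refine ⟨int_able hmeas hsq (sq_TF hφ hε hψ n) hM, ?_⟩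
  have hN := hdec ℝ ψ ε (B * (ε ^ d)⁻¹) hε (by positivity) hψ hder n
  have h6 := int_bound (by positivity) hsq hN (by positivity) hM
  refine h6.trans ?_
  have e1 : (ε / 2 ^ n) ^ α = ε ^ α * ((2 : ℝ) ^ (-α)) ^ n := by
    rw [Real.div_rpow hε.le (by positivity), div_eq_mul_inv, ← Real.rpow_neg (by positivity),
      ← Real.rpow_natCast, ← Real.rpow_natCast, ← Real.rpow_mul (by norm_num),
      ← Real.rpow_mul (by norm_num), mul_comm (n : ℝ)]
  have e2 : ε ^ γ = ε ^ α * ε ^ (γ - α) := by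
    rw [← Real.rpow_add hε]; congr 1; ring
  rw [e1, e2, Real.mul_rpow (by positivity) hε.le]
  have e3 : max C0 0 * (ε ^ α * ((2 : ℝ) ^ (-α)) ^ n) * ((R' + 1) ^ (γ - α) * ε ^ (γ - α)) *
      (C2 * (B * (ε ^ d)⁻¹) * (qq φ / 2 ^ j) ^ n) * ((R' * ε) ^ d * V) =
      max C0 0 * (R' + 1) ^ (γ - α) * C2 * (R' ^ d * V) * B * (ε ^ α * ε ^ (γ - α)) *
        ((2 : ℝ) ^ (-α) * (qq φ / 2 ^ j)) ^ n := by
    rw [mul_pow ((2 : ℝ) ^ (-α)), mul_pow R']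
    have : ε ^ d ≠ 0 := by positivity
    exact alg_aux _ _ _ _ _ _ _ _ _ _ _ this
  rw [e3]
  refine mul_le_mul_of_nonneg_left (pow_le_pow_left₀ ?_ hj n) (by positivity)
  have := one_le_qq φ
  positivity

end Recon

namespace Recon

open scoped Topology

structure Ctx {d : ℕ} (γ : ℝ) (F : Ed d → ((Ed d → ℝ) →ₗ[ℝ] ℝ)) (φ : Ed d → ℝ) (ρ : ℝ) : Prop where
  pos : 0 < γ
  ker : Ker φ ρ
  germ : IsGerm F
  coh : GammaCoherentWith γ F φ

/-- The approximate reconstruction at scale `ε`. -/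
def fE {d : ℕ} (F : Ed d → ((Ed d → ℝ) →ₗ[ℝ] ℝ)) (φ : Ed d → ℝ) (ε : ℝ) (ψ : Ed d → ℝ) : ℝ :=
  F 0 ψ + ∑' n, term F φ 0 ε n ψ

lemma one_le_scale {ε : ℝ} (hε : 0 < ε) (hε1 : ε ≤ 1) (d i : ℕ) :
    1 ≤ (ε ^ d)⁻¹ * (ε ^ i)⁻¹ :=
  one_le_mul_of_one_le_of_one_le ((one_le_inv₀ (by positivity)).2 (pow_le_one₀ hε.le hε1))
    ((one_le_inv₀ (by positivity)).2 (pow_le_one₀ hε.le hε1))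

lemma summ_aux {u : ℕ → ℝ} {A : ℝ} (h : ∀ n, |u n| ≤ A * (1 / 2) ^ n) : Summable u :=
  Summable.of_norm_bounded (summable_geometric_two.mul_left A) h

section main

variable {d : ℕ} {γ : ℝ} {F : Ed d → ((Ed d → ℝ) →ₗ[ℝ] ℝ)} {φ : Ed d → ℝ} {ρ : ℝ}

lemma supp_aux {s ε : ℝ} (hε : 0 < ε) {ψ : Ed d → ℝ} (hs : ∀ y, s < ‖y‖ → ψ y = 0) :
    ∀ y, s / ε * ε < dist y 0 → ψ y = 0 := by
  intro y hy
  rw [div_mul_cancel₀ _ hε.ne', dist_zero_right] at hy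
  exact hs y hy

lemma ti0 (H : Ctx γ F φ ρ) {ε : ℝ} (hε : 0 < ε) (hε1 : ε ≤ 1) {ψ : Ed d → ℝ} (hψ : TF ψ) :
    (∀ n, TI F φ 0 ε n ψ) ∧ Summable fun n => term F φ 0 ε n ψ := by
  obtain ⟨s, hs0, hs⟩ := hψ.suppR
  obtain ⟨k, C, hC, h⟩ := term_bound H.pos H.ker H.germ H.coh 0 (s / ε) (by positivity)
  obtain ⟨B, hB, hb⟩ := hψ.exB k
  have h1 := h 0 (by simp) ε hε hε1 B hB ψ hψ (supp_aux hε hs) (fun i hi y => by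
    refine (hb i hi y).trans ?_
    rw [mul_assoc]
    exact le_mul_of_one_le_right hB (one_le_scale hε hε1 d i))
  exact ⟨fun n => (h1 n).1, summ_aux fun n => (h1 n).2⟩

lemma K2 (H : Ctx γ F φ ρ) (M R : ℝ) (hR : 0 ≤ R) : ∃ k : ℕ, ∃ C : ℝ, 0 ≤ C ∧
      ∀ x : Ed d, ‖x‖ ≤ M →
      ∀ ε : ℝ, 0 < ε → ε ≤ 1 → ∀ B : ℝ, 0 ≤ B → ∀ ψ : Ed d → ℝ, TF ψ →
      (∀ y, R * ε < dist y x → ψ y = 0) →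
      (∀ i ≤ k, ∀ y, ‖iteratedFDeriv ℝ i ψ y‖ ≤ B * (ε ^ d)⁻¹ * (ε ^ i)⁻¹) →
      |fE F φ ε ψ - F x ψ| ≤ C * B * ε ^ γ := by
  obtain ⟨k, C, hC, h⟩ := term_bound H.pos H.ker H.germ H.coh M R hR
  refine ⟨k, C * 2, by positivity, ?_⟩
  intro x hx ε hε hε1 B hB ψ hψ hs hd
  have h1 := h x hx ε hε hε1 B hB ψ hψ hs hd
  obtain ⟨t0, s0⟩ := ti0 H hε hε1 hψ
  have sx : Summable fun n => term F φ x ε n ψ := summ_aux fun n => (h1 n).2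
  have e1 : ∀ n, term F φ 0 ε n ψ - term F φ x ε n ψ =
      ∫ w, (F x - F 0) (scaled φ w (ε / 2 ^ n)) * sq φ ε n ψ w := by
    intro n
    unfold term
    rw [← integral_sub (t0 n) (h1 n).1]
    congr 1
    funext w
    rw [LinearMap.sub_apply]
    ring
  have e2 := repr (dist_sub' (H.germ.1 x) (H.germ.1 0)) H.ker hε hε1 hψ
  have e3 := (s0.hasSum.sub sx.hasSum).tendsto_sum_nat
  simp_rw [e1] at e3
  have e4 := tendsto_nhds_unique e2 e3
  rw [LinearMap.sub_apply] at e4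
  have e5 : fE F φ ε ψ - F x ψ = ∑' n, term F φ x ε n ψ := by
    unfold fE
    linarith
  rw [e5]
  have e6 := tsum_of_norm_bounded (f := fun n => term F φ x ε n ψ) (hasSum_geometric_two.mul_left (C * B * ε ^ γ))
    (fun n => (h1 n).2)
  rw [Real.norm_eq_abs] at e6
  exact e6.trans (le_of_eq (by ring))

lemma exB_scaled {ξ : Ed d → ℝ} (hξ : TF ξ) (k : ℕ) : ∃ B : ℝ, 0 ≤ B ∧ ∀ i ≤ k,
    ∀ (x : Ed d) (l : ℝ), 0 < l →
    ∀ y, ‖iteratedFDeriv ℝ i (scaled ξ x l) y‖ ≤ B * (l ^ d)⁻¹ * (l ^ i)⁻¹ := by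
  choose D hD0 hD using fun i => norm_iter_scaled_le hξ i
  refine ⟨∑ i ∈ Finset.range (k + 1), D i, Finset.sum_nonneg fun i _ => hD0 i,
    fun i hi x l hl y => (hD i x l hl y).trans ?_⟩
  rw [mul_assoc, mul_assoc]
  refine mul_le_mul_of_nonneg_right ?_ (by positivity)
  exact Finset.single_le_sum (fun i _ => hD0 i) (Finset.mem_range.2 (by omega))

lemma K2s (H : Ctx γ F φ ρ) (M : ℝ) {ξ : Ed d → ℝ} (hξ : TF ξ) : ∃ C : ℝ, 0 ≤ C ∧
      ∀ x : Ed d, ‖x‖ ≤ M → ∀ ε l : ℝ, 0 < ε → ε ≤ 1 → ε ≤ l → l ≤ 2 * ε →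
      |fE F φ ε (scaled ξ x l) - F x (scaled ξ x l)| ≤ C * ε ^ γ := by
  obtain ⟨s, hs0, hs⟩ := hξ.suppR
  obtain ⟨k, C, hC, h⟩ := K2 H M (2 * s) (by positivity)
  obtain ⟨B, hB, hb⟩ := exB_scaled hξ k
  refine ⟨C * B, by positivity, fun x hx ε l hε hε1 hl hl2 => ?_⟩
  have hl0 : 0 < l := hε.trans_le hl
  refine h x hx ε hε hε1 B hB _ (scaled_TF hξ x hl0) ?_ ?_
  · intro y hy
    refine scaled_supp hs x hl0 y (lt_of_le_of_lt ?_ hy)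
    nlinarith
  · intro i hi y
    refine (hb i hi x l hl0 y).trans ?_
    rw [mul_assoc, mul_assoc]
    refine mul_le_mul_of_nonneg_left ?_ hB
    gcongr

lemma ext_lin (g : (Ed d → ℝ) → ℝ) (ha : ∀ u v, TF u → TF v → g (u + v) = g u + g v)
    (hs : ∀ (c : ℝ) u, TF u → g (c • u) = c * g u) :
    ∃ T : (Ed d → ℝ) →ₗ[ℝ] ℝ, ∀ u, TF u → T u = g u := by
  let T0 : DK (d := d) univ →ₗ[ℝ] ℝ :=
    { toFun := fun u => g u.1
      map_add' := fun u v => ha _ _ u.2.1 v.2.1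
      map_smul' := fun c u => hs c _ u.2.1 }
  obtain ⟨T, hT⟩ := LinearMap.exists_extend T0
  refine ⟨T, fun u hu => ?_⟩
  exact LinearMap.congr_fun hT ⟨u, hu, fun x hx => absurd (mem_univ x) hx⟩

lemma fE_add (H : Ctx γ F φ ρ) {ε : ℝ} (hε : 0 < ε) (hε1 : ε ≤ 1) {u v : Ed d → ℝ} (hu : TF u)
    (hv : TF v) : fE F φ ε (u + v) = fE F φ ε u + fE F φ ε v := by
  obtain ⟨tu, su⟩ := ti0 H hε hε1 hu
  obtain ⟨tv, sv⟩ := ti0 H hε hε1 hv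
  have : ∀ n, term F φ 0 ε n (u + v) = term F φ 0 ε n u + term F φ 0 ε n v := by
    intro n
    unfold term
    rw [← integral_add (tu n) (tv n), sq_add H.ker hε hu hv]
    congr 1
    funext w
    rw [Pi.add_apply, mul_add]
  unfold fE
  simp_rw [this]
  rw [su.tsum_add sv, map_add]
  ring

lemma fE_smul (c : ℝ) {ε : ℝ} (u : Ed d → ℝ) : fE F φ ε (c • u) = c * fE F φ ε u := by
  have : ∀ n, term F φ 0 ε n (c • u) = c * term F φ 0 ε n u := by
    intro n
    unfold term
    rw [← integral_const_mul, sq_smul]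
    congr 1
    funext w
    rw [Pi.smul_apply, smul_eq_mul]
    ring
  unfold fE
  simp_rw [this]
  rw [tsum_mul_left, map_smul, smul_eq_mul, mul_add]

lemma supp_of_tsupport {K : Set (Ed d)} {s : ℝ} (hs : K ⊆ closedBall 0 s) {u : Ed d → ℝ}
    (hu : tsupport u ⊆ K) : ∀ y, s < ‖y‖ → u y = 0 := by
  intro y hy
  by_contra h
  have := hs (hu (subset_tsupport _ h))
  rw [mem_closedBall, dist_zero_right] at this
  linarith

lemma exball {K : Set (Ed d)} (hK : IsCompact K) : ∃ s : ℝ, 0 ≤ s ∧ K ⊆ closedBall 0 s := by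
  obtain ⟨s, hs⟩ := hK.isBounded.subset_closedBall 0
  exact ⟨max s 0, le_max_right _ _, hs.trans (closedBall_subset_closedBall (le_max_left _ _))⟩

lemma fE_dist (H : Ctx γ F φ ρ) {ε : ℝ} (hε : 0 < ε) (hε1 : ε ≤ 1) :
    ∃ T : (Ed d → ℝ) →ₗ[ℝ] ℝ, IsDistribution T ∧ ∀ u, TF u → T u = fE F φ ε u := by
  obtain ⟨T, hT⟩ := ext_lin (fE F φ ε) (fun u v hu hv => fE_add H hε hε1 hu hv)
    (fun c u _ => fE_smul c u)
  refine ⟨T, ?_, hT⟩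
  have : IsDistribution (T - F 0) := by
    intro K hK
    obtain ⟨s, hs0, hs⟩ := exball hK
    obtain ⟨k, C, hC, h⟩ := K2 H 0 (s / ε) (by positivity)
    refine ⟨k, C * ε ^ γ, fun u hu hsu => ?_⟩
    rw [LinearMap.sub_apply, hT u hu]
    refine (h 0 (by simp) ε hε hε1 (Cnorm k u) (Cnorm_nonneg _ _) u hu
      (supp_aux hε (supp_of_tsupport hs hsu)) fun i hi y => ?_).trans (le_of_eq (by ring))
    refine (le_Cnorm k u hu i hi y).trans ?_
    rw [mul_assoc]
    exact le_mul_of_one_le_right (Cnorm_nonneg _ _) (one_le_scale hε hε1 d i)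
  simpa using dist_add this (H.germ.1 0)

end main

end Recon

namespace Recon

open scoped Topology

section main2

variable {d : ℕ} {γ : ℝ} {F : Ed d → ((Ed d → ℝ) →ₗ[ℝ] ℝ)} {φ : Ed d → ℝ} {ρ : ℝ}

lemma K3 (H : Ctx γ F φ ρ) (M : ℝ) : ∃ C : ℝ, 0 ≤ C ∧ ∀ ε : ℝ, 0 < ε → ε ≤ 1 →
    ∀ ψ : Ed d → ℝ, TF ψ → (∀ y, M < ‖y‖ → ψ y = 0) →
    |fE F φ ε ψ - fE F φ (ε / 2) ψ| ≤ C * ε ^ γ * ∫ y, |ψ y| := by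
  obtain ⟨C, hC, h⟩ := K2s H M H.ker.tf
  refine ⟨C, hC, fun ε hε hε1 ψ hψ hs => ?_⟩
  have hε2 : 0 < ε / 2 := by positivity
  have hε21 : ε / 2 ≤ 1 := by linarith
  obtain ⟨T, hTd, hT⟩ := fE_dist H hε2 hε21
  have hA : TF (Cv (scaled φ 0 ε) ψ) := (scaled_TF H.ker.tf 0 hε).Cv hψ
  obtain ⟨t0, s0⟩ := ti0 H hε hε1 hψ
  have e1 : ∀ n, term F φ 0 ε (n + 1) ψ = term F φ 0 (ε / 2) n (ψ - Cv (scaled φ 0 ε) ψ) := by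
    intro n
    unfold term
    rw [sq_succ', pow_succ', div_div]
  have e2 : fE F φ ε ψ = F 0 ψ + (term F φ 0 ε 0 ψ +
      ∑' n, term F φ 0 (ε / 2) n (ψ - Cv (scaled φ 0 ε) ψ)) := by
    unfold fE
    rw [s0.tsum_eq_zero_add]
    simp_rw [e1]
  have e3 : fE F φ (ε / 2) (ψ - Cv (scaled φ 0 ε) ψ) = F 0 (ψ - Cv (scaled φ 0 ε) ψ) +
    ∑' n, term F φ 0 (ε / 2) n (ψ - Cv (scaled φ 0 ε) ψ) := rfl
  rw [← hT _ (hψ.sub hA), map_sub, map_sub, hT ψ hψ] at e3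
  have e4 : fE F φ ε ψ - fE F φ (ε / 2) ψ = term F φ 0 ε 0 ψ +
      (F 0 - T) (Cv (scaled φ 0 ε) ψ) := by
    rw [LinearMap.sub_apply]
    linarith
  have hDi := dist_sub' (H.germ.1 0) hTd
  have i1 : Integrable fun w => (F 0 - T) (scaled φ w ε) * ψ w :=
    Continuous.integrable_of_hasCompactSupport ((T_scaled_cont hDi H.ker.tf hε).mul hψ.cont)
      (hψ.2.mul_left (f := fun w => (F 0 - T) (scaled φ w ε)))
  have i2 := t0 0
  unfold TI at i2
  rw [e4, exchange' hDi H.ker.tf hψ hε]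
  unfold term
  rw [← integral_add i2 i1]
  have e5 : ∀ w, (F w (scaled φ w (ε / 2 ^ 0)) - F 0 (scaled φ w (ε / 2 ^ 0))) * sq φ ε 0 ψ w +
      (F 0 - T) (scaled φ w ε) * ψ w = (F w (scaled φ w ε) - T (scaled φ w ε)) * ψ w := by
    intro w
    rw [pow_zero, div_one, sq_zero, LinearMap.sub_apply]
    ring
  simp_rw [e5]
  rw [← integral_const_mul, ← Real.norm_eq_abs]
  have i3 : Integrable fun w => |ψ w| :=
    (hψ.cont.integrable_of_hasCompactSupport hψ.2).abs
  refine norm_integral_le_of_norm_le (i3.const_mul _) (ae_of_all _ fun w => ?_)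
  rw [norm_mul, Real.norm_eq_abs, Real.norm_eq_abs]
  by_cases hw : ‖w‖ ≤ M
  · refine mul_le_mul_of_nonneg_right ?_ (abs_nonneg _)
    rw [hT _ (scaled_TF H.ker.tf w hε), abs_sub_comm]
    refine (h w hw (ε / 2) ε hε2 hε21 (by linarith) (by linarith)).trans ?_
    exact mul_le_mul_of_nonneg_left
      (Real.rpow_le_rpow hε2.le (by linarith) H.pos.le) hC
  · rw [hs w (not_le.1 hw)]
    simp

lemma K4 (H : Ctx γ F φ ρ) (M : ℝ) : ∃ C : ℝ, 0 ≤ C ∧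
    ∀ ψ : Ed d → ℝ, TF ψ → (∀ y, M < ‖y‖ → ψ y = 0) →
    ∃ L : ℝ, Tendsto (fun N : ℕ => fE F φ ((1 / 2) ^ N) ψ) atTop (𝓝 L) ∧
    ∀ N : ℕ, |fE F φ ((1 / 2) ^ N) ψ - L| ≤ C * ((1 / 2 : ℝ) ^ N) ^ γ * ∫ y, |ψ y| := by
  obtain ⟨C, hC, h⟩ := K3 H M
  have hr : (1 / 2 : ℝ) ^ γ < 1 := Real.rpow_lt_one (by norm_num) (by norm_num) H.pos
  have hp : ∀ N : ℕ, ((1 / 2 : ℝ) ^ N) ^ γ = ((1 / 2 : ℝ) ^ γ) ^ N := by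
    intro N
    rw [← Real.rpow_natCast, ← Real.rpow_natCast, ← Real.rpow_mul (by norm_num),
      ← Real.rpow_mul (by norm_num), mul_comm]
  refine ⟨C / (1 - (1 / 2 : ℝ) ^ γ), div_nonneg hC (by linarith), fun ψ hψ hs => ?_⟩
  have h1 : ∀ N : ℕ, dist (fE F φ ((1 / 2) ^ N) ψ) (fE F φ ((1 / 2) ^ (N + 1)) ψ) ≤
      (C * ∫ y, |ψ y|) * ((1 / 2 : ℝ) ^ γ) ^ N := by
    intro N
    have h2 := h ((1 / 2) ^ N) (by positivity) (pow_le_one₀ (by norm_num) (by norm_num)) ψ hψ hs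
    rw [hp] at h2
    rw [Real.dist_eq, pow_succ, mul_one_div]
    exact h2.trans (le_of_eq (by ring))
  obtain ⟨L, hL⟩ := cauchySeq_tendsto_of_complete (cauchySeq_of_le_geometric _ _ hr h1)
  refine ⟨L, hL, fun N => ?_⟩
  have h3 := dist_le_of_le_geometric_of_tendsto _ _ hr h1 hL N
  rw [Real.dist_eq] at h3
  rw [hp]
  exact h3.trans (le_of_eq (by ring))

lemma existence (H : Ctx γ F φ ρ) : ∃ f : (Ed d → ℝ) →ₗ[ℝ] ℝ, IsDistribution f ∧
    Reconstructs γ F f := by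
  have hex : ∀ ψ : Ed d → ℝ, ∃ L : ℝ, TF ψ →
      Tendsto (fun N : ℕ => fE F φ ((1 / 2) ^ N) ψ) atTop (𝓝 L) := by
    intro ψ
    by_cases hψ : TF ψ
    · obtain ⟨s, hs0, hs⟩ := hψ.suppR
      obtain ⟨C, hC, h⟩ := K4 H s
      obtain ⟨L, hL, -⟩ := h ψ hψ hs
      exact ⟨L, fun _ => hL⟩
    · exact ⟨0, fun h => absurd h hψ⟩
  choose g hg using hex
  have hpos : ∀ N : ℕ, (0 : ℝ) < (1 / 2) ^ N := fun N => by positivity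
  have hle : ∀ N : ℕ, ((1 : ℝ) / 2) ^ N ≤ 1 := fun N => pow_le_one₀ (by norm_num) (by norm_num)
  obtain ⟨f, hf⟩ := ext_lin g (fun u v hu hv => by
      refine tendsto_nhds_unique (hg _ (hu.add hv)) (((hg u hu).add (hg v hv)).congr fun N => ?_)
      exact (fE_add H (hpos N) (hle N) hu hv).symm)
    (fun c u hu => by
      refine tendsto_nhds_unique (hg _ (hu.smul c)) (((hg u hu).const_mul c).congr fun N => ?_)
      exact (fE_smul c u).symm)
  have K4' : ∀ M : ℝ, ∃ C : ℝ, 0 ≤ C ∧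
    ∀ ψ : Ed d → ℝ, TF ψ → (∀ y, M < ‖y‖ → ψ y = 0) →
    ∀ N : ℕ, |fE F φ ((1 / 2) ^ N) ψ - f ψ| ≤ C * ((1 / 2 : ℝ) ^ N) ^ γ * ∫ y, |ψ y| := by
    intro M
    obtain ⟨C, hC, h⟩ := K4 H M
    refine ⟨C, hC, fun ψ hψ hs N => ?_⟩
    obtain ⟨L, hL, h'⟩ := h ψ hψ hs
    rw [hf ψ hψ, tendsto_nhds_unique (hg ψ hψ) hL]
    exact h' N
  refine ⟨f, ?_, ?_⟩
  · obtain ⟨T, hTd, hT⟩ := fE_dist H one_pos le_rfl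
    have : IsDistribution (T - f) := by
      intro K hK
      obtain ⟨s, hs0, hs⟩ := exball hK
      obtain ⟨C, hC, h⟩ := K4' s
      refine ⟨0, C * (s ^ d * volume.real (closedBall (0 : Ed d) 1)), fun u hu hsu => ?_⟩
      have hsu' := supp_of_tsupport hs hsu
      have h1 := h u hu hsu' 0
      rw [LinearMap.sub_apply, hT u hu]
      rw [pow_zero, Real.one_rpow, mul_one] at h1
      refine h1.trans ?_
      rw [mul_assoc]
      refine mul_le_mul_of_nonneg_left ?_ hC
      have h2 := int_bound (h := fun _ => 1) (u := fun y => |u y|) (x := 0) (r := s) (M := 1)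
        (N := Cnorm 0 u) hs0 (fun y hy => by
          rw [dist_zero_right] at hy
          rw [hsu' y hy, abs_zero])
        (fun y => by
          have := le_Cnorm 0 u hu 0 le_rfl y
          rw [norm_iteratedFDeriv_zero, Real.norm_eq_abs] at this
          rwa [abs_abs]) zero_le_one (fun y _ => by simp)
      simp only [one_mul] at h2
      exact (le_abs_self _).trans (h2.trans (le_of_eq (by ring)))
    have h2 := dist_sub' hTd this
    rwa [sub_sub_cancel] at h2
  · intro ξ hξ K hK
    obtain ⟨M, hM0, hM⟩ := exball hK
    obtain ⟨s, hs0, hs⟩ := TF.suppR (g := ξ) hξ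
    obtain ⟨C1, hC1, h1⟩ := K2s H M (ξ := ξ) hξ
    obtain ⟨C2, hC2, h2⟩ := K4' (M + s)
    have hI : 0 ≤ ∫ y, |ξ y| := integral_nonneg fun y => abs_nonneg _
    refine ⟨C2 * (∫ y, |ξ y|) + C1, fun x hx l hl => ?_⟩
    have hxM : ‖x‖ ≤ M := by simpa using hM hx
    obtain ⟨N, hN1, hN2⟩ := exists_nat_pow_near_of_lt_one hl.1 hl.2
      (by norm_num : (0 : ℝ) < 1 / 2) (by norm_num)
    have hsc := scaled_TF (φ := ξ) hξ x hl.1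
    have b1 := h1 x hxM ((1 / 2) ^ (N + 1)) l (hpos _) (hle _) hN1.le (by
      rw [pow_succ]; linarith)
    have b2 := h2 _ hsc (fun y hy => by
      refine scaled_supp hs x hl.1 y ?_
      have h3 := norm_le_norm_add_norm_sub' y x
      rw [← dist_eq_norm] at h3
      have h4 : s * l ≤ s := mul_le_of_le_one_right hs0 hl.2
      linarith) (N + 1)
    rw [integral_abs_scaled ξ x hl.1] at b2
    have b3 : ((1 / 2 : ℝ) ^ (N + 1)) ^ γ ≤ l ^ γ :=
      Real.rpow_le_rpow (hpos _).le hN1.le H.pos.le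
    rw [abs_sub_comm] at b2
    refine (abs_sub_le _ (fE F φ ((1 / 2) ^ (N + 1)) (scaled ξ x l)) _).trans ?_
    have b4 : C2 * ((1 / 2 : ℝ) ^ (N + 1)) ^ γ * (∫ y, |ξ y|) ≤ C2 * l ^ γ * (∫ y, |ξ y|) :=
      mul_le_mul_of_nonneg_right (mul_le_mul_of_nonneg_left b3 hC2) hI
    have b5 := mul_le_mul_of_nonneg_left b3 hC1
    linarith

lemma uniqueness (hγ : 0 < γ) (hφ : Ker φ ρ) {f g : (Ed d → ℝ) →ₗ[ℝ] ℝ} (hf : IsDistribution f)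
    (hg : IsDistribution g) (rf : Reconstructs γ F f) (rg : Reconstructs γ F g)
    {ψ : Ed d → ℝ} (hψ : TF ψ) : g ψ = f ψ := by
  have hρ := hφ.nonneg
  obtain ⟨s, hs0, hs⟩ := hψ.suppR
  have hTd := dist_sub' hg hf
  obtain ⟨C1, h1⟩ := rf φ hφ.tf (closedBall 0 (s + 2 * ρ)) (isCompact_closedBall _ _)
  obtain ⟨C2, h2⟩ := rg φ hφ.tf (closedBall 0 (s + 2 * ρ)) (isCompact_closedBall _ _)
  have hT : ∀ w ∈ closedBall (0 : Ed d) (s + 2 * ρ), ∀ l ∈ Set.Ioc (0 : ℝ) 1,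
      |(g - f) (scaled φ w l)| ≤ (|C1| + |C2|) * l ^ γ := by
    intro w hw l hl
    have a1 := h1 w hw l hl
    have a2 := h2 w hw l hl
    rw [abs_sub_comm] at a1
    rw [LinearMap.sub_apply]
    have hlp : 0 ≤ l ^ γ := Real.rpow_nonneg hl.1.le _
    have a3 := mul_le_mul_of_nonneg_right (le_abs_self C1) hlp
    have a4 := mul_le_mul_of_nonneg_right (le_abs_self C2) hlp
    have a5 := abs_sub_le (g (scaled φ w l)) (F w (scaled φ w l)) (f (scaled φ w l))
    linarith
  have hq := one_le_qq φ
  obtain ⟨j, hj⟩ := exists_jpow 1 (qq φ)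
  obtain ⟨C, hC, hdec⟩ := decay hφ j
  obtain ⟨B, hB, hb⟩ := hψ.exB j
  set V : ℝ := (s + 2 * ρ) ^ d * volume.real (closedBall (0 : Ed d) 1) with hV
  have hV0 : 0 ≤ V := by positivity
  have key : ∀ ε : ℝ, 0 < ε → ε ≤ 1 →
      |(g - f) ψ| ≤ (|C1| + |C2|) * ε ^ γ * (C * B) * V * 2 := by
    intro ε hε hε1
    have hr := repr hTd hφ hε hε1 hψ
    have hεp : 0 ≤ ε ^ γ := Real.rpow_nonneg hε.le _
    have ht : ∀ n : ℕ, |∫ w, (g - f) (scaled φ w (ε / 2 ^ n)) * sq φ ε n ψ w| ≤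
        (|C1| + |C2|) * ε ^ γ * (C * B) * V * (1 / 2) ^ n := by
      intro n
      have h2n : (1 : ℝ) ≤ 2 ^ n := one_le_pow₀ (by norm_num)
      have hδ : 0 < ε / 2 ^ n := by positivity
      have hδε : ε / 2 ^ n ≤ ε := div_le_self hε.le h2n
      have hN := hdec ℝ ψ ε B hε hB hψ (fun i hi x => (hb i hi x).trans
        (le_mul_of_one_le_right hB ((one_le_inv₀ (by positivity)).2 (pow_le_one₀ hε.le hε1)))) n
      have hsq : ∀ y, s + 2 * ρ < dist y 0 → sq φ ε n ψ y = 0 := by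
        intro y hy
        refine sq_supp hφ hε (x := 0) (r := s) (fun y hy => hs y (by simpa using hy)) n y
          (lt_of_le_of_lt ?_ hy)
        have : 2 * ρ * ε ≤ 2 * ρ := mul_le_of_le_one_right (by positivity) hε1
        linarith
      have h6 := int_bound (by positivity) hsq hN
        (M := (|C1| + |C2|) * ε ^ γ) (by positivity)
        (h := fun w => (g - f) (scaled φ w (ε / 2 ^ n))) (fun y hy => by
          refine (hT y hy _ ⟨hδ, hδε.trans hε1⟩).trans ?_
          exact mul_le_mul_of_nonneg_left (Real.rpow_le_rpow hδ.le hδε hγ.le) (by positivity))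
      refine h6.trans ?_
      rw [one_mul] at hj
      have h7 : (qq φ / 2 ^ j) ^ n ≤ (1 / 2 : ℝ) ^ n := pow_le_pow_left₀ (by positivity) hj n
      have h8 := mul_le_mul_of_nonneg_left h7
        (by positivity : 0 ≤ (|C1| + |C2|) * ε ^ γ * (C * B) * V)
      exact le_trans (le_of_eq (by rw [hV]; ring)) h8
    have hsum := (summ_aux ht).hasSum
    rw [tendsto_nhds_unique hr hsum.tendsto_sum_nat]
    exact tsum_of_norm_bounded
      (f := fun n : ℕ => ∫ w, (g - f) (scaled φ w (ε / 2 ^ n)) * sq φ ε n ψ w)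
      (hasSum_geometric_two.mul_left _) ht
  have hlim : Tendsto (fun N : ℕ => (|C1| + |C2|) * (1 / ((N : ℝ) + 1)) ^ γ * (C * B) * V * 2)
      atTop (𝓝 0) := by
    have h0 : Tendsto (fun N : ℕ => (1 / ((N : ℝ) + 1)) ^ γ) atTop (𝓝 0) := by
      have := (tendsto_one_div_add_atTop_nhds_zero_nat (𝕜 := ℝ)).rpow_const (p := γ)
        (Or.inr hγ.le)
      rwa [Real.zero_rpow hγ.ne'] at this
    have := ((((h0.const_mul (|C1| + |C2|)).mul_const (C * B)).mul_const V).mul_const 2)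
    simpa using this
  have hz : |(g - f) ψ| ≤ 0 := ge_of_tendsto' hlim fun N => key _ (by positivity) (by
    rw [div_le_one (by positivity)]
    have : (0 : ℝ) ≤ N := N.cast_nonneg
    linarith)
  have := abs_nonpos_iff.1 hz
  rw [LinearMap.sub_apply] at this
  linarith

end main2

end Recon

/-- Reconstruction Theorem for γ > 0: existence, uniqueness,
and linearity of the reconstruction map. -/
theorem stmt8 {d : ℕ} (γ : ℝ) (hγ : 0 < γ)
    (φ : Ed d → ℝ) (hφ : IsTestFunction φ) (hφi : (∫ x, φ x) ≠ 0) :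
    (∀ F : Ed d → ((Ed d → ℝ) →ₗ[ℝ] ℝ), IsGerm F → GammaCoherentWith γ F φ →
      ∃ f : (Ed d → ℝ) →ₗ[ℝ] ℝ, IsDistribution f ∧ Reconstructs γ F f ∧
        ∀ g : (Ed d → ℝ) →ₗ[ℝ] ℝ, IsDistribution g → Reconstructs γ F g →
          ∀ ψ : Ed d → ℝ, IsTestFunction ψ → g ψ = f ψ) ∧
    (∀ F₁ F₂ : Ed d → ((Ed d → ℝ) →ₗ[ℝ] ℝ), ∀ f₁ f₂ : (Ed d → ℝ) →ₗ[ℝ] ℝ, ∀ a b : ℝ,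
      IsGerm F₁ → IsGerm F₂ → GammaCoherentWith γ F₁ φ → GammaCoherentWith γ F₂ φ →
      IsDistribution f₁ → IsDistribution f₂ →
      Reconstructs γ F₁ f₁ → Reconstructs γ F₂ f₂ →
      Reconstructs γ (fun x => a • F₁ x + b • F₂ x) (a • f₁ + b • f₂)) := by
  constructor
  · intro F hF hc
    have hφ' : Recon.TF φ := hφ
    obtain ⟨s, hs0, hs⟩ := hφ'.suppR
    set c : ℝ := (∫ x, φ x)⁻¹ with hcdef
    have hker : Recon.Ker (c • φ) s :=
      { tf := hφ'.smul c
        one := by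
          simp only [Pi.smul_apply, smul_eq_mul]
          rw [integral_const_mul]
          exact inv_mul_cancel₀ hφi
        nonneg := hs0
        supp := fun t ht => by rw [Pi.smul_apply, hs t ht, smul_zero] }
    have hsc : ∀ x l, scaled (c • φ) x l = c • scaled φ x l := by
      intro x l
      funext z
      simp only [scaled, Pi.smul_apply, smul_eq_mul]
      ring
    have hcoh : GammaCoherentWith γ F (c • φ) := by
      intro K hK
      obtain ⟨α, hα, C, hC⟩ := hc K hK
      refine ⟨α, hα, |c| * C, fun y hy z hz ε hε => ?_⟩
      rw [hsc, map_smul, map_smul, smul_eq_mul, smul_eq_mul, ← mul_sub, abs_mul, mul_assoc,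
        mul_assoc]
      refine mul_le_mul_of_nonneg_left ?_ (abs_nonneg _)
      rw [← mul_assoc]
      exact hC y hy z hz ε hε
    obtain ⟨f, hfd, hfr⟩ := Recon.existence (ρ := s) ⟨hγ, hker, hF, hcoh⟩
    exact ⟨f, hfd, hfr, fun g hgd hgr ψ hψ => Recon.uniqueness hγ hker hfd hgd hfr hgr hψ⟩
  · intro F₁ F₂ f₁ f₂ a b _ _ _ _ _ _ h1 h2 ξ hξ K hK
    obtain ⟨C1, k1⟩ := h1 ξ hξ K hK
    obtain ⟨C2, k2⟩ := h2 ξ hξ K hK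
    refine ⟨|a| * C1 + |b| * C2, fun x hx l hl => ?_⟩
    have e : (a • f₁ + b • f₂) (scaled ξ x l) - (a • F₁ x + b • F₂ x) (scaled ξ x l) =
        a * (f₁ (scaled ξ x l) - F₁ x (scaled ξ x l)) +
        b * (f₂ (scaled ξ x l) - F₂ x (scaled ξ x l)) := by
      simp only [LinearMap.add_apply, LinearMap.smul_apply, smul_eq_mul]
      ring
    refine (le_of_eq (congrArg _ e)).trans ((abs_add_le _ _).trans ?_)
    rw [abs_mul, abs_mul, add_mul, mul_assoc, mul_assoc]
    exact add_le_add (mul_le_mul_of_nonneg_left (k1 x hx l hl) (abs_nonneg _))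
      (mul_le_mul_of_nonneg_left (k2 x hx l hl) (abs_nonneg _))
end
end

section
/- Let γ ≤ 0, α ≤ γ, β ≤ 0, and let F = (F_x)_{x∈ℝ^d} be an (α,γ)-coherent germ with global homogeneity bound β (i.e., the coherence condition holds with exponent α on every compact set, and |F_x(φ_x^ε)| ≲ ε^β uniformly on compacts). Then there exists a distribution f ∈ D'(ℝ^d) such that for every compact K and integer r > max{−α, −β}, one has |(f − F_x)(ψ_x^λ)| ≲ λ^γ (if γ < 0) or ≲ 1 + |log λ| (if γ = 0), uniformly for ψ ∈ B_r, x ∈ K, λ ∈ (0,1]. Moreover f can be chosen so that F ↦ f is linear on the vector space of such germs. -/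
open MeasureTheory Metric Set Filter

noncomputable section

section Helpers

open scoped Topology Convolution BoundedContinuousFunction

variable {d : ℕ}


lemma tf_bound {g : Ed d → ℝ} (hg : IsTestFunction g) (i : ℕ) :
    ∃ M, ∀ x, ‖iteratedFDeriv ℝ i g x‖ ≤ M :=
  (hg.1.continuous_iteratedFDeriv (m := i) (by exact_mod_cast le_top)).bounded_above_of_compact_support
    (hg.2.iteratedFDeriv i)

lemma le_Cnorm {g : Ed d → ℝ} (hg : IsTestFunction g) {i r : ℕ} (hi : i ≤ r) (x : Ed d) :
    ‖iteratedFDeriv ℝ i g x‖ ≤ Cnorm r g := by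
  have hb : BddAbove (range fun x => ‖iteratedFDeriv ℝ i g x‖) := by
    obtain ⟨M, hM⟩ := tf_bound hg i
    exact ⟨M, by rintro _ ⟨x, rfl⟩; exact hM x⟩
  refine (le_ciSup hb x).trans ?_
  exact le_ciSup (f := fun i : Fin (r + 1) => ⨆ x : Ed d, ‖iteratedFDeriv ℝ (i : ℕ) g x‖)
    (Set.finite_range _).bddAbove ⟨i, by omega⟩

lemma Cnorm_le {g : Ed d → ℝ} {r : ℕ} {M : ℝ}
    (h : ∀ i ≤ r, ∀ x, ‖iteratedFDeriv ℝ i g x‖ ≤ M) : Cnorm r g ≤ M :=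
  ciSup_le fun i => ciSup_le fun x => h i (by omega) x

lemma Cnorm_nonneg {g : Ed d → ℝ} (hg : IsTestFunction g) (r : ℕ) : 0 ≤ Cnorm r g :=
  (norm_nonneg _).trans (le_Cnorm hg (Nat.zero_le r) 0)

lemma Cnorm_mono {g : Ed d → ℝ} (hg : IsTestFunction g) {r s : ℕ} (h : r ≤ s) :
    Cnorm r g ≤ Cnorm s g :=
  Cnorm_le fun _ hi x => le_Cnorm hg (hi.trans h) x

lemma tf_continuous {g : Ed d → ℝ} (hg : IsTestFunction g) : Continuous g := hg.1.continuous

lemma tf_add {g h : Ed d → ℝ} (hg : IsTestFunction g) (hh : IsTestFunction h) :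
    IsTestFunction (g + h) := ⟨hg.1.add hh.1, hg.2.add hh.2⟩

lemma tf_smul (c : ℝ) {g : Ed d → ℝ} (hg : IsTestFunction g) : IsTestFunction (c • g) :=
  ⟨hg.1.const_smul c, hg.2.smul_left (f := fun _ => c)⟩

lemma tf_sub {g h : Ed d → ℝ} (hg : IsTestFunction g) (hh : IsTestFunction h) :
    IsTestFunction (g - h) := ⟨hg.1.sub hh.1, hg.2.sub hh.2⟩

lemma tf_zero : IsTestFunction (0 : Ed d → ℝ) := ⟨contDiff_const, HasCompactSupport.zero⟩

lemma tf_shift {g : Ed d → ℝ} (hg : IsTestFunction g) (y : Ed d) :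
    IsTestFunction (fun z => g (z - y)) :=
  ⟨hg.1.comp (contDiff_id.sub contDiff_const), by
    have := hg.2.comp_homeomorph (Homeomorph.subRight y)
    exact this⟩

lemma tf_sum {ι : Type*} (s : Finset ι) {g : ι → Ed d → ℝ} (hg : ∀ i, IsTestFunction (g i)) :
    IsTestFunction (∑ i ∈ s, g i) := by
  classical
  induction s using Finset.induction_on with
  | empty => simpa using tf_zero
  | insert a s ha ih => rw [Finset.sum_insert ha]; exact tf_add (hg a) ih

lemma tf_scaled {g : Ed d → ℝ} (hg : IsTestFunction g) (y : Ed d) {l : ℝ} (hl : 0 < l) :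
    IsTestFunction (scaled g y l) := by
  have h1 : IsTestFunction (fun z => g (l⁻¹ • z)) :=
    ⟨hg.1.comp (contDiff_id.const_smul _), by
      exact hg.2.comp_homeomorph (Homeomorph.smulOfNeZero l⁻¹ (inv_ne_zero hl.ne'))⟩
  exact tf_smul ((l ^ d)⁻¹) (tf_shift h1 y)

lemma conv_eq (k h : Ed d → ℝ) : conv k h = (k ⋆[ContinuousLinearMap.mul ℝ ℝ] h) := by
  funext x; exact convolution_mul_swap.symm

lemma conv_comm' (k h : Ed d → ℝ) : conv k h = conv h k := by
  rw [conv_eq]; funext x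
  rw [convolution_mul]
  simp only [conv, mul_comm]

lemma tf_conv {k h : Ed d → ℝ} (hk : IsTestFunction k) (hh : IsTestFunction h) :
    IsTestFunction (conv k h) := by
  rw [conv_eq]
  exact ⟨hk.2.contDiff_convolution_left _ hk.1 (tf_continuous hh).locallyIntegrable,
    hk.2.convolution _ hh.2⟩

lemma conv_integrable {k h : Ed d → ℝ} (hk : IsTestFunction k) (hh : IsTestFunction h) (x : Ed d) :
    Integrable (fun y => k (x - y) * h y) :=
  (((tf_continuous hk).comp (by fun_prop)).mul (tf_continuous hh)).integrable_of_hasCompactSupport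
    hh.2.mul_left

lemma conv_add {k g h : Ed d → ℝ} (hk : IsTestFunction k) (hg : IsTestFunction g)
    (hh : IsTestFunction h) : conv k (g + h) = conv k g + conv k h := by
  funext x
  simp only [conv, Pi.add_apply, mul_add]
  exact integral_add (conv_integrable hk hg x) (conv_integrable hk hh x)

lemma conv_smul (c : ℝ) (k g : Ed d → ℝ) : conv k (c • g) = c • conv k g := by
  funext x
  simp only [conv, Pi.smul_apply, smul_eq_mul]
  rw [← integral_const_mul]; congr 1; funext y; ring

lemma conv_sub {k g h : Ed d → ℝ} (hk : IsTestFunction k) (hg : IsTestFunction g)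
    (hh : IsTestFunction h) : conv k (g - h) = conv k g - conv k h := by
  funext x
  simp only [conv, Pi.sub_apply, mul_sub]
  exact integral_sub (conv_integrable hk hg x) (conv_integrable hk hh x)

lemma conv_apply' (k g : Ed d → ℝ) (x : Ed d) : conv k g x = ∫ u, k u * g (x - u) := by
  rw [conv_eq, convolution_mul]

lemma conv_left_comm {k k' g : Ed d → ℝ} (hk : IsTestFunction k) (hk' : IsTestFunction k')
    (hg : IsTestFunction g) : conv k (conv k' g) = conv k' (conv k g) := by
  funext x
  have h1 : ∀ {p q : Ed d → ℝ}, conv p (conv q g) x = ∫ u, ∫ v, p u * q v * g (x - u - v) := by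
    intro p q
    rw [conv_apply']
    congr 1; funext u
    rw [conv_apply', ← integral_const_mul]
    congr 1; funext v; ring
  rw [h1, h1, integral_integral_swap_of_hasCompactSupport]
  · congr 1; funext u; congr 1; funext v
    rw [sub_right_comm]; ring
  · have := tf_continuous hk; have := tf_continuous hk'; have := tf_continuous hg
    unfold Function.uncurry
    fun_prop
  · refine HasCompactSupport.intro (K := tsupport k ×ˢ tsupport k') (hk.2.prod hk'.2) ?_
    rintro ⟨u, v⟩ huv
    simp only [mem_prod, not_and_or] at huv
    simp only [Function.uncurry]
    rcases huv with h | h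
    · simp [image_eq_zero_of_notMem_tsupport h]
    · simp [image_eq_zero_of_notMem_tsupport h]

lemma conv_shift (k g : Ed d → ℝ) (y : Ed d) :
    (fun z => conv k g (z - y)) = conv k (fun z => g (z - y)) := by
  funext z
  rw [conv_apply', conv_apply']
  congr 1; funext u; rw [sub_right_comm]

lemma fderiv_smul_conv {W : Type*} [NormedAddCommGroup W] [NormedSpace ℝ W]
    {W' : Type*} [NormedAddCommGroup W'] [NormedSpace ℝ W'] [CompleteSpace W] [CompleteSpace W']
    {h : Ed d → ℝ} (hh : IsTestFunction h) {G : Ed d → W} (hc : HasCompactSupport G)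
    (hd : ContDiff ℝ 1 G) (x : Ed d) (L : (Ed d →L[ℝ] W) ≃ₗᵢ[ℝ] W') :
    L (fderiv ℝ (fun x => ∫ y, h y • G (x - y)) x) = ∫ y, h y • L (fderiv ℝ G (x - y)) := by
  have h2 := (HasCompactSupport.hasFDerivAt_convolution_right (μ := volume)
      (ContinuousLinearMap.lsmul ℝ ℝ) hc (tf_continuous hh).locallyIntegrable hd x).fderiv
  have h3 : (h ⋆[ContinuousLinearMap.lsmul ℝ ℝ, volume] G)
      = fun x => ∫ y, h y • G (x - y) := by
    funext x; rfl
  rw [h3] at h2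
  rw [h2]
  have hi : Integrable (fun y => h y • fderiv ℝ G (x - y)) := by
    refine Continuous.integrable_of_hasCompactSupport ?_ hh.2.smul_right
    exact (tf_continuous hh).smul ((hd.continuous_fderiv one_ne_zero).comp (by fun_prop))
  have h4 : (h ⋆[ContinuousLinearMap.precompR (Ed d) (ContinuousLinearMap.lsmul ℝ ℝ), volume]
      fderiv ℝ G) x = ∫ y, h y • fderiv ℝ G (x - y) := by
    rw [convolution]
    congr 1
  rw [h4]
  have := (L.toContinuousLinearEquiv.toContinuousLinearMap).integral_comp_comm hi
  refine this.symm.trans ?_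
  congr 1; funext y
  simp

lemma iteratedFDeriv_conv {k h : Ed d → ℝ} (hk : IsTestFunction k) (hh : IsTestFunction h) (n : ℕ) :
    iteratedFDeriv ℝ n (conv k h) = fun x => ∫ y, h y • iteratedFDeriv ℝ n k (x - y) := by
  induction n with
  | zero =>
    funext x
    rw [iteratedFDeriv_zero_eq_comp]
    simp only [Function.comp]
    have := ((continuousMultilinearCurryFin0 ℝ (Ed d) ℝ).symm.toContinuousLinearEquiv.toContinuousLinearMap).integral_comp_comm (conv_integrable hk hh x)
    refine this.symm.trans ?_
    congr 1; funext y
    rw [iteratedFDeriv_zero_eq_comp]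
    simp [mul_comm, ← smul_eq_mul]
  | succ n ih =>
    funext x
    rw [iteratedFDeriv_succ_eq_comp_left, ih]
    have hc : HasCompactSupport (iteratedFDeriv ℝ n k) := hk.2.iteratedFDeriv n
    have hd : ContDiff ℝ 1 (iteratedFDeriv ℝ n k) :=
      hk.1.iteratedFDeriv_right (i := n) (m := 1) (by exact_mod_cast le_top)
    exact fderiv_smul_conv hh hc hd x
      (continuousMultilinearCurryLeftEquiv ℝ (fun _ : Fin (n + 1) => Ed d) ℝ).symm



/-- The space of `m`-jets. -/
def Jt (d m : ℕ) := ∀ i : Fin (m + 1), ContinuousMultilinearMap ℝ (fun _ : Fin (i : ℕ) => Ed d) ℝ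

instance (d m : ℕ) : NormedAddCommGroup (Jt d m) :=
  inferInstanceAs (NormedAddCommGroup
    (∀ i : Fin (m + 1), ContinuousMultilinearMap ℝ (fun _ : Fin (i : ℕ) => Ed d) ℝ))

instance (d m : ℕ) : NormedSpace ℝ (Jt d m) :=
  inferInstanceAs (NormedSpace ℝ
    (∀ i : Fin (m + 1), ContinuousMultilinearMap ℝ (fun _ : Fin (i : ℕ) => Ed d) ℝ))

instance (d m : ℕ) : CompleteSpace (Jt d m) :=
  inferInstanceAs (CompleteSpace
    (∀ i : Fin (m + 1), ContinuousMultilinearMap ℝ (fun _ : Fin (i : ℕ) => Ed d) ℝ))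

/-- Component of a jet. -/
def jproj (d m : ℕ) (i : Fin (m + 1)) :
    Jt d m →L[ℝ] ContinuousMultilinearMap ℝ (fun _ : Fin (i : ℕ) => Ed d) ℝ :=
  (ContinuousLinearMap.proj (R := ℝ) (φ := fun i : Fin (m + 1) =>
        ContinuousMultilinearMap ℝ (fun _ : Fin (i : ℕ) => Ed d) ℝ) i)

lemma jproj_apply (d m : ℕ) (i : Fin (m + 1)) (v : Jt d m) : jproj d m i v = v i := rfl

/-- The pointwise jet. -/
def jet0 (m : ℕ) (g : Ed d → ℝ) (x : Ed d) : Jt d m := fun i => iteratedFDeriv ℝ (i : ℕ) g x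

lemma jet0_continuous (m : ℕ) {g : Ed d → ℝ} (hg : IsTestFunction g) : Continuous (jet0 m g) :=
  continuous_pi fun i => hg.1.continuous_iteratedFDeriv (m := (i : ℕ)) (by exact_mod_cast le_top)

lemma jet0_compact (m : ℕ) {g : Ed d → ℝ} (hg : IsTestFunction g) :
    HasCompactSupport (jet0 m g) := by
  refine HasCompactSupport.intro hg.2 fun x hx => ?_
  funext i
  exact image_eq_zero_of_notMem_tsupport fun h => hx (tsupport_iteratedFDeriv_subset _ h)

/-- The jet as a bounded continuous function. -/
def jet (m : ℕ) (g : Ed d → ℝ) (hg : IsTestFunction g) : Ed d →ᵇ Jt d m :=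
  BoundedContinuousFunction.ofNormedAddCommGroup (jet0 m g) (jet0_continuous m hg)
    ((jet0_continuous m hg).bounded_above_of_compact_support (jet0_compact m hg)).choose
    ((jet0_continuous m hg).bounded_above_of_compact_support (jet0_compact m hg)).choose_spec

@[simp] lemma jet_apply (m : ℕ) (g : Ed d → ℝ) (hg : IsTestFunction g) (x : Ed d)
    (i : Fin (m + 1)) : jet m g hg x i = iteratedFDeriv ℝ (i : ℕ) g x := rfl

lemma Cnorm_le_jet (m : ℕ) (g : Ed d → ℝ) (hg : IsTestFunction g) :
    Cnorm m g ≤ ‖jet m g hg‖ := by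
  refine Cnorm_le fun i hi x => ?_
  exact (norm_le_pi_norm (jet m g hg x) ⟨i, by omega⟩).trans ((jet m g hg).norm_coe_le_norm x)

/-- Test functions supported in `K`. -/
def DK (K : Set (Ed d)) : Submodule ℝ (Ed d → ℝ) where
  carrier := {g | IsTestFunction g ∧ tsupport g ⊆ K}
  add_mem' := fun {a b} ha hb => ⟨tf_add ha.1 hb.1,
    (tsupport_add a b).trans (union_subset ha.2 hb.2)⟩
  zero_mem' := ⟨tf_zero, by simp [tsupport]⟩
  smul_mem' := fun c a ha => ⟨tf_smul c ha.1,
    (closure_mono (Function.support_const_smul_subset c a)).trans ha.2⟩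

/-- The jet map. -/
def jetL (m : ℕ) (K : Set (Ed d)) : DK K →ₗ[ℝ] (Ed d →ᵇ Jt d m) where
  toFun g := jet m g.1 g.2.1
  map_add' a b := by
    ext1 x; funext i
    exact iteratedFDeriv_add_apply ((a.2.1.1.of_le (by exact_mod_cast le_top)).contDiffAt)
      ((b.2.1.1.of_le (by exact_mod_cast le_top)).contDiffAt)
  map_smul' c a := by
    ext1 x; funext i
    exact iteratedFDeriv_const_smul_apply ((a.2.1.1.of_le (by exact_mod_cast le_top)).contDiffAt)

lemma jetL_inj (m : ℕ) (K : Set (Ed d)) : Function.Injective (jetL m K) := by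
  intro a b h
  ext x
  have h1 : jet m a.1 a.2.1 x 0 = jet m b.1 b.2.1 x 0 := by
    have : jet m a.1 a.2.1 = jet m b.1 b.2.1 := h
    rw [this]
  have h2 := congrArg (fun t => t (fun _ => 0)) h1
  rw [jet_apply, jet_apply] at h2
  exact h2

lemma exists_ext {T : (Ed d → ℝ) →ₗ[ℝ] ℝ} (hT : IsDistribution T) {K : Set (Ed d)}
    (hK : IsCompact K) : ∃ m : ℕ, ∃ L : (Ed d →ᵇ Jt d m) →L[ℝ] ℝ,
      ∀ (g : Ed d → ℝ) (hg : IsTestFunction g), tsupport g ⊆ K → L (jet m g hg) = T g := by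
  obtain ⟨m, C, hC⟩ := hT K hK
  refine ⟨m, ?_⟩
  let e := LinearEquiv.ofInjective (jetL m K) (jetL_inj m K)
  let f0 : (LinearMap.range (jetL m K)) →ₗ[ℝ] ℝ := T ∘ₗ (DK K).subtype ∘ₗ e.symm.toLinearMap
  have hf0 : ∀ v, ‖f0 v‖ ≤ |C| * ‖v‖ := by
    intro v
    obtain ⟨g, rfl⟩ := e.surjective v
    have h1 : f0 (e g) = T g.1 := by simp [f0]
    rw [h1]
    refine (hC g.1 g.2.1 g.2.2).trans ?_
    have h2 : Cnorm m g.1 ≤ ‖e g‖ := Cnorm_le_jet m g.1 g.2.1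
    exact (mul_le_mul_of_nonneg_right (le_abs_self C) (Cnorm_nonneg g.2.1 m)).trans
      (mul_le_mul_of_nonneg_left h2 (abs_nonneg C))
  obtain ⟨L, hL, -⟩ := exists_extension_norm_eq (LinearMap.range (jetL m K)) (f0.mkContinuous _ hf0)
  refine ⟨L, fun g hg hgK => ?_⟩
  have := hL (e ⟨g, hg, hgK⟩)
  have h1 : f0 (e ⟨g, hg, hgK⟩) = T g := by simp [f0]
  rw [LinearMap.mkContinuous_apply, h1] at this
  exact this

lemma jet_shift_continuous (m : ℕ) {g : Ed d → ℝ} (hg : IsTestFunction g) :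
    Continuous fun y => jet m (fun z => g (z - y)) (tf_shift hg y) := by
  have hu := (jet0_compact m hg).uniformContinuous_of_continuous (jet0_continuous m hg)
  have happ : ∀ y x, jet m (fun z => g (z - y)) (tf_shift hg y) x = jet0 m g (x - y) := by
    intro y x; funext i
    simp [jet0, iteratedFDeriv_comp_sub]
  rw [Metric.continuous_iff]
  intro y ε hε
  obtain ⟨δ, hδ, h⟩ := Metric.uniformContinuous_iff.1 hu (ε / 2) (by positivity)
  refine ⟨δ, hδ, fun a ha => ?_⟩
  refine lt_of_le_of_lt ((BoundedContinuousFunction.dist_le (C := ε / 2) (by positivity)).2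
    fun x => ?_) (by linarith)
  rw [happ, happ]
  exact (h (by rwa [dist_sub_left])).le

lemma tsupport_subset_closedBall {g : Ed d → ℝ} {c : Ed d} {R : ℝ}
    (h : ∀ x, R < dist x c → g x = 0) : tsupport g ⊆ closedBall c R :=
  closure_minimal (fun x hx => by
    by_contra hc
    exact hx (h x (by simpa using hc))) isClosed_closedBall

lemma exists_radius {g : Ed d → ℝ} (hg : IsTestFunction g) :
    ∃ R : ℝ, 0 < R ∧ ∀ x, R < ‖x‖ → g x = 0 := by
  obtain ⟨R, hR0, hR⟩ := hg.2.isBounded.subset_closedBall_lt 0 0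
  refine ⟨R, hR0, fun x hx => image_eq_zero_of_notMem_tsupport fun h => ?_⟩
  have := hR h
  simp at this; linarith

lemma T_shift_continuous {T : (Ed d → ℝ) →ₗ[ℝ] ℝ} (hT : IsDistribution T) {g : Ed d → ℝ}
    (hg : IsTestFunction g) : Continuous fun y => T (fun z => g (z - y)) := by
  obtain ⟨R, hR0, hR⟩ := exists_radius hg
  rw [continuous_iff_continuousAt]
  intro y0
  obtain ⟨m, L, hL⟩ := exists_ext hT (isCompact_closedBall (0 : Ed d) (R + ‖y0‖ + 1))
  have h1 : Continuous fun y => L (jet m (fun z => g (z - y)) (tf_shift hg y)) :=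
    L.continuous.comp (jet_shift_continuous m hg)
  refine h1.continuousAt.congr ?_
  filter_upwards [Metric.ball_mem_nhds y0 one_pos] with y hy
  refine hL _ _ (tsupport_subset_closedBall fun x hx => hR _ ?_)
  rw [dist_zero_right] at hx
  have h2 : ‖y‖ ≤ ‖y0‖ + 1 := by
    have := norm_le_norm_add_norm_sub y0 y
    rw [mem_ball, dist_eq_norm, norm_sub_rev] at hy
    have := norm_sub_norm_le y y0
    rw [norm_sub_rev] at this
    linarith
  have := norm_sub_norm_le x y
  linarith

lemma T_conv {T : (Ed d → ℝ) →ₗ[ℝ] ℝ} (hT : IsDistribution T) {k h : Ed d → ℝ}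
    (hk : IsTestFunction k) (hh : IsTestFunction h) :
    T (conv k h) = ∫ y, T (fun z => k (z - y)) * h y := by
  obtain ⟨R, hR0, hR⟩ := exists_radius hk
  obtain ⟨S, hS0, hS⟩ := exists_radius hh
  obtain ⟨m, L, hL⟩ := exists_ext hT (isCompact_closedBall (0 : Ed d) (R + S))
  have hi : Integrable fun y => h y • jet m (fun z => k (z - y)) (tf_shift hk y) :=
    Continuous.integrable_of_hasCompactSupport
      ((tf_continuous hh).smul (jet_shift_continuous m hk)) hh.2.smul_right
  have h1 : jet m (conv k h) (tf_conv hk hh)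
      = ∫ y, h y • jet m (fun z => k (z - y)) (tf_shift hk y) := by
    ext1 x; funext i
    let P : (Ed d →ᵇ Jt d m) →L[ℝ] _ :=
      (jproj d m i).comp (BoundedContinuousFunction.evalCLM ℝ x)
    have h2 := P.integral_comp_comm hi
    rw [jet_apply, iteratedFDeriv_conv hk hh]
    refine Eq.trans ?_ h2
    refine integral_congr_ae (Eventually.of_forall fun y => ?_)
    simp only [P, map_smul, ContinuousLinearMap.comp_apply, jproj_apply,
      BoundedContinuousFunction.evalCLM_apply, jet_apply, iteratedFDeriv_comp_sub]
  have hz : ∀ x, R + S < ‖x‖ → ∀ y, ‖y‖ ≤ S → k (x - y) = 0 := by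
    intro x hx y hy
    refine hR _ ?_
    have := norm_sub_norm_le x y
    linarith
  rw [← hL _ (tf_conv hk hh), h1, ← L.integral_comp_comm hi]
  · congr 1; funext y
    rw [map_smul, smul_eq_mul, mul_comm]
    by_cases hy : ‖y‖ ≤ S
    · rw [hL _ _ (tsupport_subset_closedBall fun x hx => hz x (by simpa using hx) y hy)]
    · rw [hS y (by linarith)]; simp
  · refine tsupport_subset_closedBall fun x hx => ?_
    rw [dist_zero_right] at hx
    have : ∀ y, k (x - y) * h y = 0 := by
      intro y
      by_cases hy : ‖y‖ ≤ S
      · rw [hz x hx y hy, zero_mul]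
      · rw [hS y (by linarith), mul_zero]
    simp [conv, this]



lemma exists_coeff (n : ℕ) : ∃ c : ℕ → ℝ, ∀ k ≤ n,
    ∑ i ∈ Finset.range (n + 1), c i * ((i + 1 : ℝ)⁻¹) ^ k = if k = 0 then 1 else 0 := by
  let v : ℕ → ℝ := fun i => (i + 1 : ℝ)⁻¹
  have hv : Set.InjOn v (Finset.range (n + 1)) := by
    intro a _ b _ h
    simp only [v] at h
    exact_mod_cast add_right_cancel (inv_injective h)
  refine ⟨fun i => (Lagrange.basis (Finset.range (n + 1)) v i).eval 0, fun k hk => ?_⟩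
  have h1 := Lagrange.eq_interpolate (f := (Polynomial.X ^ k : Polynomial ℝ)) hv (by
    rw [Polynomial.degree_X_pow, Finset.card_range]; exact_mod_cast Nat.lt_succ_of_le hk)
  have h2 := congrArg (Polynomial.eval 0) h1
  rw [Lagrange.interpolate_apply, Polynomial.eval_finsetSum] at h2
  simp only [Polynomial.eval_pow, Polynomial.eval_X, Polynomial.eval_mul, Polynomial.eval_C] at h2
  rw [zero_pow_eq] at h2
  rw [h2]
  exact Finset.sum_congr rfl fun i _ => mul_comm _ _

lemma taylor_coeff {n : ℕ} {c : ℕ → ℝ} (hc : ∀ k ≤ n,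
    ∑ i ∈ Finset.range (n + 1), c i * ((i + 1 : ℝ)⁻¹) ^ k = if k = 0 then 1 else 0)
    {G : ℝ → ℝ} (hG : ContDiff ℝ (⊤ : ℕ∞) G) {M : ℝ} (hM : ∀ t, ‖iteratedDeriv (n + 1) G t‖ ≤ M)
    {s : ℝ} (hs : 0 < s) :
    |∑ i ∈ Finset.range (n + 1), c i * G (s * (i + 1 : ℝ)⁻¹) - G 0|
      ≤ (∑ i ∈ Finset.range (n + 1), |c i|) * (M * s ^ (n + 1)) := by
  have hM0 : 0 ≤ M := (norm_nonneg _).trans (hM 0)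
  have hl : ∀ i : ℕ, (0 : ℝ) < (i + 1 : ℝ)⁻¹ ∧ (i + 1 : ℝ)⁻¹ ≤ 1 := fun i =>
    ⟨by positivity, inv_le_one_of_one_le₀ (by linarith [(Nat.cast_nonneg i : (0:ℝ) ≤ i)])⟩
  have hrem : ∀ i : ℕ, |G (s * (i + 1 : ℝ)⁻¹) -
      taylorWithinEval G n (Icc 0 s) 0 (s * (i + 1 : ℝ)⁻¹)| ≤ M * s ^ (n + 1) := by
    intro i
    have hx : s * (i + 1 : ℝ)⁻¹ ∈ Icc 0 s :=
      ⟨by have := (hl i).1; positivity, mul_le_of_le_one_right hs.le (hl i).2⟩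
    have := taylor_mean_remainder_bound (n := n) hs.le
      (hG.contDiffOn.of_le (by exact_mod_cast le_top)) hx (C := M) (fun y hy => by
        rw [iteratedDerivWithin_eq_iteratedDeriv (uniqueDiffOn_Icc hs)
          ((hG.of_le (by exact_mod_cast le_top)).contDiffAt) hy]
        exact hM y)
    refine this.trans ?_
    rw [sub_zero]
    refine (div_le_self (by have := hx.1; positivity)
      (by exact_mod_cast Nat.one_le_iff_ne_zero.2 (Nat.factorial_ne_zero n))).trans ?_
    gcongr
    exact hx.2
  have hpoly : ∑ i ∈ Finset.range (n + 1), c i *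
      taylorWithinEval G n (Icc 0 s) 0 (s * (i + 1 : ℝ)⁻¹) = G 0 := by
    simp only [taylor_within_apply, sub_zero, smul_eq_mul, Finset.mul_sum]
    rw [Finset.sum_comm]
    have : ∀ k ∈ Finset.range (n + 1), ∑ i ∈ Finset.range (n + 1),
        c i * ((k.factorial : ℝ)⁻¹ * (s * (i + 1 : ℝ)⁻¹) ^ k * iteratedDerivWithin k G (Icc 0 s) 0)
        = if k = 0 then G 0 else 0 := by
      intro k hk
      have h1 := hc k (by simpa [Nat.lt_succ_iff] using hk)
      have h2 : ∀ i ∈ Finset.range (n + 1), c i * ((k.factorial : ℝ)⁻¹ * (s * (i + 1 : ℝ)⁻¹) ^ k *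
          iteratedDerivWithin k G (Icc 0 s) 0) =
          ((k.factorial : ℝ)⁻¹ * s ^ k * iteratedDerivWithin k G (Icc 0 s) 0) *
            (c i * ((i + 1 : ℝ)⁻¹) ^ k) := by
        intro i _; rw [mul_pow]; ring
      rw [Finset.sum_congr rfl h2, ← Finset.mul_sum, h1]
      split_ifs with hk0
      · subst hk0; simp
      · simp
    rw [Finset.sum_congr rfl this]
    simp
  rw [← hpoly, ← Finset.sum_sub_distrib, Finset.sum_mul]
  refine (Finset.abs_sum_le_sum_abs _ _).trans (Finset.sum_le_sum fun i _ => ?_)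
  rw [← mul_sub, abs_mul]
  rw [hpoly] at *
  exact mul_le_mul_of_nonneg_left (hrem i) (abs_nonneg _)

lemma dir_deriv_bound {g : Ed d → ℝ} (hg : IsTestFunction g) {n : ℕ} {M : ℝ}
    (hM : ∀ x, ‖iteratedFDeriv ℝ n g x‖ ≤ M) (y u : Ed d) (t : ℝ) :
    ‖iteratedDeriv n (fun t : ℝ => g (y - t • u)) t‖ ≤ M * ‖u‖ ^ n := by
  rw [← norm_iteratedFDeriv_eq_norm_iteratedDeriv]
  let L : ℝ →L[ℝ] Ed d := ContinuousLinearMap.toSpanSingleton ℝ (-u)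
  have h1 : (fun t : ℝ => g (y - t • u)) = (fun z => g (z + y)) ∘ L := by
    funext t; simp [L, sub_eq_add_neg, add_comm]
  have h2 : ContDiff ℝ (⊤ : ℕ∞) (fun z => g (z + y)) := hg.1.comp (contDiff_id.add contDiff_const)
  rw [h1, L.iteratedFDeriv_comp_right h2 t (by exact_mod_cast le_top)]
  refine (ContinuousMultilinearMap.norm_compContinuousLinearMap_le _ _).trans ?_
  rw [iteratedFDeriv_comp_add_right]
  have hL : ‖L‖ = ‖u‖ := by simp [L]
  simp only [hL, Finset.prod_const, Finset.card_univ, Fintype.card_fin]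
  gcongr
  exact hM _

lemma int_scaled (k f : Ed d → ℝ) {l : ℝ} (hl : 0 < l) :
    ∫ u, scaled k 0 l u * f u = ∫ u, k u * f (l • u) := by
  have := Measure.integral_comp_inv_smul_of_nonneg (volume : Measure (Ed d))
    (fun u => k u * f (l • u)) hl.le
  simp only [smul_inv_smul₀ hl.ne', finrank_euclideanSpace, Fintype.card_fin, smul_eq_mul] at this
  have h2 : ∀ u, scaled k 0 l u * f u = (l ^ d)⁻¹ * (k (l⁻¹ • u) * f u) := by
    intro u; simp [scaled]; ring
  simp only [h2]
  rw [integral_const_mul, this, ← mul_assoc, inv_mul_cancel₀ (by positivity), one_mul]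

lemma scaled_shift (k : Ed d → ℝ) (y : Ed d) (l : ℝ) :
    scaled k y l = fun z => scaled k 0 l (z - y) := by
  funext z; simp [scaled]

lemma scaled_scaled (k : Ed d → ℝ) (y : Ed d) (l e : ℝ) :
    scaled (scaled k 0 l) y e = scaled k y (l * e) := by
  funext z; simp only [scaled, sub_zero, smul_smul, mul_inv, mul_pow]; ring

/-- The kernel. -/
def khat (φ : Ed d → ℝ) (c : ℕ → ℝ) (n : ℕ) : Ed d → ℝ :=
  ∑ i ∈ Finset.range (n + 1), (c i / ∫ x, φ x) • scaled φ 0 ((i + 1 : ℝ)⁻¹)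

lemma tf_khat {φ : Ed d → ℝ} (hφ : IsTestFunction φ) (c : ℕ → ℝ) (n : ℕ) :
    IsTestFunction (khat φ c n) :=
  tf_sum _ fun i => tf_smul _ (tf_scaled hφ 0 (by positivity))

lemma scaled_khat (φ : Ed d → ℝ) (c : ℕ → ℝ) (n : ℕ) (y : Ed d) (e : ℝ) :
    scaled (khat φ c n) y e =
      ∑ i ∈ Finset.range (n + 1), (c i / ∫ x, φ x) • scaled φ y ((i + 1 : ℝ)⁻¹ * e) := by
  simp only [← scaled_scaled]
  funext z
  simp only [khat, Finset.sum_apply, Pi.smul_apply, smul_eq_mul]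
  rw [scaled]
  simp only [Finset.sum_apply, Pi.smul_apply, smul_eq_mul, Finset.mul_sum]
  refine Finset.sum_congr rfl fun i _ => ?_
  simp only [scaled]; ring

lemma khat_approx {φ : Ed d → ℝ} (hφ : IsTestFunction φ) (hφi : (∫ x, φ x) ≠ 0) {n : ℕ}
    {c : ℕ → ℝ} (hc : ∀ k ≤ n,
    ∑ i ∈ Finset.range (n + 1), c i * ((i + 1 : ℝ)⁻¹) ^ k = if k = 0 then 1 else 0) :
    ∃ C : ℝ, 0 ≤ C ∧ ∀ e : ℝ, 0 < e → ∀ g : Ed d → ℝ, IsTestFunction g → ∀ M,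
      (∀ x, ‖iteratedFDeriv ℝ (n + 1) g x‖ ≤ M) → ∀ y,
      |conv (scaled (khat φ c n) 0 e) g y - g y| ≤ C * e ^ (n + 1) * M := by
  set I := ∫ x, φ x with hI
  set A := ∑ i ∈ Finset.range (n + 1), |c i|
  have hcφ := tf_continuous hφ
  refine ⟨|I|⁻¹ * (A * ∫ u, |φ u| * ‖u‖ ^ (n + 1)), by positivity, fun e he g hg M hM y => ?_⟩
  have hcg := tf_continuous hg
  have hM0 : 0 ≤ M := (norm_nonneg _).trans (hM 0)
  have hint : ∀ i : ℕ, Integrable fun u => φ u * g (y - ((i + 1 : ℝ)⁻¹ * e) • u) := fun i =>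
    Continuous.integrable_of_hasCompactSupport (by fun_prop) hφ.2.mul_right
  have h1 : conv (scaled (khat φ c n) 0 e) g y =
      I⁻¹ * ∫ u, φ u * ∑ i ∈ Finset.range (n + 1), c i * g (y - (e * (i + 1 : ℝ)⁻¹) • u) := by
    rw [conv_apply', scaled_khat]
    simp only [Finset.sum_apply, Pi.smul_apply, smul_eq_mul, Finset.sum_mul]
    rw [integral_finsetSum]
    · simp only [Finset.mul_sum]
      rw [integral_finsetSum, Finset.mul_sum]
      · refine Finset.sum_congr rfl fun i _ => ?_
        simp only [mul_assoc]
        rw [integral_const_mul, int_scaled _ (fun u => g (y - u)) (by positivity),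
          div_eq_inv_mul, mul_assoc, ← integral_const_mul (c i)]
        congr 2; funext u; rw [mul_comm e]; ring
      · intro i _
        refine ((hint i).const_mul (c i)).congr (Eventually.of_forall fun u => ?_)
        simp only [mul_comm e]; ring
    · intro i _
      have := (tf_scaled hφ (0 : Ed d) (l := (i + 1 : ℝ)⁻¹ * e) (by positivity))
      have hc2 := tf_continuous this
      exact Continuous.integrable_of_hasCompactSupport (by fun_prop) (this.2.mul_left.mul_right)
  have h2 : g y = I⁻¹ * ∫ u, φ u * g y := by
    rw [integral_mul_const, ← hI, ← mul_assoc, inv_mul_cancel₀ hφi, one_mul]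
  have hi1 : Integrable fun u => φ u * ∑ i ∈ Finset.range (n + 1),
      c i * g (y - (e * (i + 1 : ℝ)⁻¹) • u) :=
    Continuous.integrable_of_hasCompactSupport (by fun_prop) hφ.2.mul_right
  have hi2 : Integrable fun u => φ u * g y :=
    Continuous.integrable_of_hasCompactSupport (by fun_prop) hφ.2.mul_right
  rw [h1]
  rw [h2, ← mul_sub, ← integral_sub hi1 hi2, abs_mul, abs_inv]
  have h3 : |∫ u, (φ u * ∑ i ∈ Finset.range (n + 1), c i * g (y - (e * (i + 1 : ℝ)⁻¹) • u)
      - φ u * g y)| ≤ ∫ u, (A * e ^ (n + 1) * M) * (|φ u| * ‖u‖ ^ (n + 1)) := by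
    rw [← Real.norm_eq_abs]
    refine norm_integral_le_of_norm_le ?_ (Eventually.of_forall fun u => ?_)
    · refine Integrable.const_mul ?_ _
      exact Continuous.integrable_of_hasCompactSupport (by fun_prop) hφ.2.norm.mul_right
    · have := taylor_coeff hc (G := fun t => g (y - t • u))
        (hg.1.comp (contDiff_const.sub (contDiff_id.smul contDiff_const)))
        (fun t => dir_deriv_bound hg hM y u t) he
      simp only [zero_smul, sub_zero] at this
      rw [← mul_sub, norm_mul, Real.norm_eq_abs, Real.norm_eq_abs]
      calc _ ≤ |φ u| * (A * (M * ‖u‖ ^ (n + 1) * e ^ (n + 1))) := by gcongr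
        _ = _ := by ring
  rw [integral_const_mul] at h3
  calc _ ≤ |I|⁻¹ * _ := mul_le_mul_of_nonneg_left h3 (by positivity)
    _ = _ := by ring

lemma khat_integral {φ : Ed d → ℝ} (hφ : IsTestFunction φ) (hφi : (∫ x, φ x) ≠ 0) {n : ℕ}
    {c : ℕ → ℝ} (hc : ∀ k ≤ n,
    ∑ i ∈ Finset.range (n + 1), c i * ((i + 1 : ℝ)⁻¹) ^ k = if k = 0 then 1 else 0)
    {e : ℝ} (he : 0 < e) : ∫ u, scaled (khat φ c n) 0 e u = 1 := by
  have h0 : ∀ (k : Ed d → ℝ) {l : ℝ}, 0 < l → ∫ u, scaled k 0 l u = ∫ u, k u := by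
    intro k l hl
    simpa using int_scaled k (fun _ => 1) hl
  rw [h0 _ he, khat]
  simp only [Finset.sum_apply, Pi.smul_apply, smul_eq_mul]
  rw [integral_finsetSum]
  · have h1 := hc 0 (Nat.zero_le n)
    simp only [pow_zero, mul_one, if_true] at h1
    rw [← h1]
    refine Finset.sum_congr rfl fun i _ => ?_
    rw [integral_const_mul, h0 _ (by positivity), div_mul_cancel₀ _ hφi]
  · intro i _
    have := tf_scaled hφ (0 : Ed d) (l := (i + 1 : ℝ)⁻¹) (by positivity)
    exact ((tf_continuous this).integrable_of_hasCompactSupport this.2).const_mul _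



lemma coh_nonneg {α γ : ℝ} {F : Ed d → ((Ed d → ℝ) →ₗ[ℝ] ℝ)} {φ : Ed d → ℝ}
    (h : AlphaGammaCoherent α γ F φ) {K : Set (Ed d)} (hK : IsCompact K) :
    ∃ C : ℝ, 0 ≤ C ∧ ∀ y ∈ K, ∀ z ∈ K, ∀ ε ∈ Set.Ioc (0:ℝ) 1,
    |F z (scaled φ y ε) - F y (scaled φ y ε)| ≤ C * ε ^ α * (‖z - y‖ + ε) ^ (γ - α) := by
  obtain ⟨C, hC⟩ := h K hK
  refine ⟨|C|, abs_nonneg C, fun y hy z hz ε hε => (hC y hy z hz ε hε).trans ?_⟩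
  have := hε.1
  gcongr
  exact le_abs_self C

lemma coh_khat {α γ : ℝ} (hαγ : α ≤ γ) {F : Ed d → ((Ed d → ℝ) →ₗ[ℝ] ℝ)} {φ : Ed d → ℝ}
    (h : AlphaGammaCoherent α γ F φ) (c : ℕ → ℝ) (n : ℕ) :
    AlphaGammaCoherent α γ F (khat φ c n) := by
  intro K hK
  obtain ⟨C, hC0, hC⟩ := coh_nonneg h hK
  refine ⟨∑ i ∈ Finset.range (n + 1), |c i / ∫ x, φ x| * (C * ((i + 1 : ℝ)⁻¹) ^ α),
    fun y hy z hz ε hε => ?_⟩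
  have hε0 := hε.1
  rw [scaled_khat, map_sum, map_sum, ← Finset.sum_sub_distrib, mul_assoc, Finset.sum_mul]
  refine (Finset.abs_sum_le_sum_abs _ _).trans (Finset.sum_le_sum fun i _ => ?_)
  have hl0 : (0 : ℝ) < (i + 1 : ℝ)⁻¹ := by positivity
  have hl1 : (i + 1 : ℝ)⁻¹ ≤ 1 :=
    inv_le_one_of_one_le₀ (by linarith [(Nat.cast_nonneg i : (0:ℝ) ≤ i)])
  have hle : (i + 1 : ℝ)⁻¹ * ε ≤ ε := mul_le_of_le_one_left hε0.le hl1
  rw [map_smul, map_smul, ← smul_sub, smul_eq_mul, abs_mul, mul_assoc]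
  refine mul_le_mul_of_nonneg_left ?_ (abs_nonneg _)
  refine (hC y hy z hz _ ⟨by positivity, hle.trans hε.2⟩).trans ?_
  rw [Real.mul_rpow hl0.le hε0.le]
  have : (‖z - y‖ + (i + 1 : ℝ)⁻¹ * ε) ^ (γ - α) ≤ (‖z - y‖ + ε) ^ (γ - α) :=
    Real.rpow_le_rpow (by positivity) (by linarith) (by linarith)
  calc _ ≤ C * (((i + 1 : ℝ)⁻¹) ^ α * ε ^ α) * (‖z - y‖ + ε) ^ (γ - α) := by gcongr
    _ = _ := by ring

/-- dyadic scales -/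
def en (n : ℕ) : ℝ := (1 / 2 : ℝ) ^ n

lemma en_pos (n : ℕ) : 0 < en n := by unfold en; positivity
lemma en_le_one (n : ℕ) : en n ≤ 1 := pow_le_one₀ (by norm_num) (by norm_num)
lemma en_mem (n : ℕ) : en n ∈ Set.Ioc (0:ℝ) 1 := ⟨en_pos n, en_le_one n⟩
lemma en_succ (n : ℕ) : en n = 2 * en (n + 1) := by unfold en; rw [pow_succ]; ring

/-- The localized pieces. -/
def hfun (k g : Ed d → ℝ) : ℕ → Ed d → ℝ
  | 0 => conv (scaled k 0 (en 1)) g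
  | n + 1 => conv (scaled k 0 (en (n + 2))) g - conv (scaled k 0 (en n)) g

lemma tf_hfun {k g : Ed d → ℝ} (hk : IsTestFunction k) (hg : IsTestFunction g) (n : ℕ) :
    IsTestFunction (hfun k g n) := by
  cases n with
  | zero => exact tf_conv (tf_scaled hk _ (en_pos _)) hg
  | succ n => exact tf_sub (tf_conv (tf_scaled hk _ (en_pos _)) hg)
                (tf_conv (tf_scaled hk _ (en_pos _)) hg)

lemma hfun_add {k g h : Ed d → ℝ} (hk : IsTestFunction k) (hg : IsTestFunction g)
    (hh : IsTestFunction h) (n : ℕ) : hfun k (g + h) n = hfun k g n + hfun k h n := by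
  cases n with
  | zero => exact conv_add (tf_scaled hk _ (en_pos _)) hg hh
  | succ n =>
    simp only [hfun]
    rw [conv_add (tf_scaled hk _ (en_pos _)) hg hh, conv_add (tf_scaled hk _ (en_pos _)) hg hh]
    abel

lemma hfun_smul (c : ℝ) (k g : Ed d → ℝ) (n : ℕ) : hfun k (c • g) n = c • hfun k g n := by
  cases n with
  | zero => exact conv_smul _ _ _
  | succ n => simp only [hfun, conv_smul, smul_sub]

lemma tele {k g : Ed d → ℝ} (hk : IsTestFunction k) (hg : IsTestFunction g) (N : ℕ) :
    ∑ n ∈ Finset.range (N + 1), conv (scaled k 0 (en n)) (hfun k g n)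
      = conv (scaled k 0 (en N)) (conv (scaled k 0 (en (N + 1))) g) := by
  have hkn : ∀ n, IsTestFunction (scaled k 0 (en n)) := fun n => tf_scaled hk _ (en_pos _)
  induction N with
  | zero => simp [hfun]
  | succ N ih =>
    rw [Finset.sum_range_succ, ih]
    simp only [hfun]
    rw [conv_sub (hkn _) (tf_conv (hkn _) hg) (tf_conv (hkn _) hg),
      conv_left_comm (hkn (N + 1)) (hkn N) hg]
    abel

lemma abs_scaled (k : Ed d → ℝ) {e : ℝ} (he : 0 < e) (u : Ed d) :
    |scaled k 0 e u| = scaled (fun z => |k z|) 0 e u := by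
  simp only [scaled, abs_mul, abs_inv, abs_pow, abs_of_pos he]

lemma avg_bound {k b : Ed d → ℝ} (hk : IsTestFunction k) (hb : Continuous b) {e R η c : ℝ}
    (he : 0 < e) (hR : ∀ x, R < ‖x‖ → k x = 0) (hi : ∫ u, scaled k 0 e u = 1)
    (h : ∀ y, ‖y‖ ≤ R * e → |b y - c| ≤ η) :
    |(∫ y, b y * scaled k 0 e y) - c| ≤ η * ∫ u, |k u| := by
  have ht := tf_scaled hk (0 : Ed d) he
  have hc := tf_continuous ht
  have h0 : ∀ y, R * e < ‖y‖ → scaled k 0 e y = 0 := by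
    intro y hy
    simp only [scaled, sub_zero]
    rw [hR, mul_zero]
    rw [norm_smul, norm_inv, Real.norm_of_nonneg he.le, ← div_eq_inv_mul, lt_div_iff₀ he]
    exact hy
  have hc' : c = ∫ y, c * scaled k 0 e y := by rw [integral_const_mul, hi, mul_one]
  have hA : ∫ u, |k u| = ∫ u, |scaled k 0 e u| := by
    simp only [abs_scaled k he]
    simpa using (int_scaled (fun z => |k z|) (fun _ => 1) he).symm
  have i1 : Integrable fun y => b y * scaled k 0 e y :=
    Continuous.integrable_of_hasCompactSupport (by fun_prop) ht.2.mul_left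
  have i2 : Integrable fun y => c * scaled k 0 e y :=
    Continuous.integrable_of_hasCompactSupport (by fun_prop) ht.2.mul_left
  have i3 : Integrable fun y => |scaled k 0 e y| := (hc.integrable_of_hasCompactSupport ht.2).norm
  rw [hA]
  conv_lhs => rw [hc']
  rw [← integral_sub i1 i2, ← integral_const_mul, ← Real.norm_eq_abs]
  refine norm_integral_le_of_norm_le (i3.const_mul _) (Eventually.of_forall fun y => ?_)
  rw [← sub_mul, norm_mul, Real.norm_eq_abs, Real.norm_eq_abs]
  by_cases hy : ‖y‖ ≤ R * e
  · exact mul_le_mul_of_nonneg_right (h y hy) (abs_nonneg _)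
  · rw [h0 y (by linarith)]; simp

lemma T_tend {T : (Ed d → ℝ) →ₗ[ℝ] ℝ} (hT : IsDistribution T) {k g : Ed d → ℝ}
    (hk : IsTestFunction k) (hg : IsTestFunction g)
    (hi : ∀ e : ℝ, 0 < e → ∫ u, scaled k 0 e u = 1) :
    Tendsto (fun N => T (conv (scaled k 0 (en N)) (conv (scaled k 0 (en (N + 1))) g)))
      atTop (𝓝 (T g)) := by
  have hkn : ∀ n, IsTestFunction (scaled k 0 (en n)) := fun n => tf_scaled hk _ (en_pos _)
  obtain ⟨R, hR0, hR⟩ := exists_radius hk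
  set A := ∫ u, |k u| with hA
  have hA0 : 0 ≤ A := integral_nonneg fun u => abs_nonneg _
  have hc := T_shift_continuous hT hg
  rw [Metric.tendsto_atTop]
  intro ε hε
  obtain ⟨δ, hδ, hδ'⟩ := Metric.continuous_iff.1 hc 0 (ε / (A * A + 1)) (by positivity)
  have hlim : Tendsto (fun N => R * en N) atTop (𝓝 0) := by
    have := (tendsto_pow_atTop_nhds_zero_of_lt_one (r := (1 / 2 : ℝ)) (by norm_num)
      (by norm_num)).const_mul R
    simpa [en] using this
  obtain ⟨N0, hN0⟩ := (Metric.tendsto_atTop.1 hlim) (δ / 2) (by positivity)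
  refine ⟨N0, fun N hN => ?_⟩
  have hN1 : R * en N < δ / 2 := by
    have := hN0 N hN
    rw [Real.dist_0_eq_abs] at this
    exact (le_abs_self _).trans_lt this
  have hN2 : R * en (N + 1) < δ / 2 := by
    have := hN0 (N + 1) (by omega)
    rw [Real.dist_0_eq_abs] at this
    exact (le_abs_self _).trans_lt this
  have hg0 : (fun z => g (z - 0)) = g := by simp
  -- inner average
  have hin : ∀ y, ‖y‖ ≤ R * en N →
      |T (fun z => conv (scaled k 0 (en (N + 1))) g (z - y)) - T g| ≤ ε / (A * A + 1) * A := by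
    intro y hy
    rw [conv_shift, conv_comm', T_conv hT (tf_shift hg y) (hkn _)]
    refine avg_bound hk (T_shift_continuous hT (tf_shift hg y)) (en_pos _) hR (hi _ (en_pos _)) ?_
    intro v hv
    have := hδ' (v + y) (by
      rw [dist_zero_right]
      exact (norm_add_le v y).trans_lt (by linarith))
    rw [hg0, Real.dist_eq] at this
    simp only [sub_sub]
    exact this.le
  have hout := avg_bound hk (T_shift_continuous hT (tf_conv (hkn (N + 1)) hg)) (en_pos N) hR
    (hi _ (en_pos _)) hin
  rw [Real.dist_eq, conv_comm', T_conv hT (tf_conv (hkn _) hg) (hkn _)]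
  refine hout.trans_lt ?_
  rw [← hA, mul_assoc, div_mul_eq_mul_div, div_lt_iff₀ (by positivity)]
  nlinarith

lemma F_meas {F : Ed d → ((Ed d → ℝ) →ₗ[ℝ] ℝ)} (hF : IsGerm F) {k : Ed d → ℝ}
    (hk : IsTestFunction k) {e : ℝ} (he : 0 < e) : Measurable fun y => F y (scaled k y e) := by
  have ht := tf_scaled hk (0 : Ed d) he
  have := measurable_uncurry_of_continuous_of_measurable
    (u := fun (i x : Ed d) => F x (fun z => scaled k 0 e (z - i)))
    (fun x => T_shift_continuous (hF.1 x) ht) (fun i => hF.2 _ (tf_shift ht i))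
  have h2 := this.comp (measurable_id.prodMk measurable_id)
  have hs : (fun y => F y (scaled k y e)) = fun y => F y (fun z => scaled k 0 e (z - y)) :=
    funext fun y => congrArg (F y) (scaled_shift k y e)
  rw [hs]
  exact h2

lemma Fx_cont {F : Ed d → ((Ed d → ℝ) →ₗ[ℝ] ℝ)} (hF : IsGerm F) {k : Ed d → ℝ}
    (hk : IsTestFunction k) {e : ℝ} (he : 0 < e) (x : Ed d) :
    Continuous fun y => F x (scaled k y e) := by
  have hs : (fun y => F x (scaled k y e)) = fun y => F x (fun z => scaled k 0 e (z - y)) :=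
    funext fun y => congrArg (F x) (scaled_shift k y e)
  rw [hs]
  exact T_shift_continuous (hF.1 x) (tf_scaled hk (0 : Ed d) he)

lemma int_Fx {F : Ed d → ((Ed d → ℝ) →ₗ[ℝ] ℝ)} (hF : IsGerm F) {k : Ed d → ℝ}
    (hk : IsTestFunction k) {e : ℝ} (he : 0 < e) (x : Ed d) {h : Ed d → ℝ}
    (hh : IsTestFunction h) : Integrable fun y => F x (scaled k y e) * h y :=
  Continuous.integrable_of_hasCompactSupport ((Fx_cont hF hk he x).mul (tf_continuous hh))
    hh.2.mul_left

lemma int_diff {α γ : ℝ} (hαγ : α ≤ γ) {F : Ed d → ((Ed d → ℝ) →ₗ[ℝ] ℝ)} (hF : IsGerm F)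
    {k : Ed d → ℝ} (hk : IsTestFunction k) (hcoh : AlphaGammaCoherent α γ F k)
    {e : ℝ} (he : e ∈ Set.Ioc (0:ℝ) 1) (x : Ed d) {h : Ed d → ℝ} (hh : IsTestFunction h) :
    Integrable fun y => (F y (scaled k y e) - F x (scaled k y e)) * h y := by
  obtain ⟨R, hR0, hR⟩ := exists_radius hh
  have he0 := he.1
  obtain ⟨C, hC0, hC⟩ := coh_nonneg hcoh (isCompact_closedBall (0 : Ed d) (R + ‖x‖))
  have ih : Integrable fun y => |h y| :=
    ((tf_continuous hh).integrable_of_hasCompactSupport hh.2).norm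
  refine (ih.const_mul (C * e ^ α * (‖x‖ + R + e) ^ (γ - α))).mono'
    (((F_meas hF hk he.1).sub (Fx_cont hF hk he.1 x).measurable).mul
      (tf_continuous hh).measurable).aestronglyMeasurable (Eventually.of_forall fun y => ?_)
  rw [norm_mul, Real.norm_eq_abs, Real.norm_eq_abs]
  by_cases hy : ‖y‖ ≤ R
  · refine mul_le_mul_of_nonneg_right ?_ (abs_nonneg _)
    rw [abs_sub_comm]
    refine (hC y (by simp; linarith [norm_nonneg x]) x (by simp; linarith) e he).trans ?_
    have : (‖x - y‖ + e) ^ (γ - α) ≤ (‖x‖ + R + e) ^ (γ - α) :=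
      Real.rpow_le_rpow (by positivity) (by linarith [norm_sub_le x y]) (by linarith)
    gcongr
  · rw [hR y (by linarith)]; simp

lemma int_F {α γ : ℝ} (hαγ : α ≤ γ) {F : Ed d → ((Ed d → ℝ) →ₗ[ℝ] ℝ)} (hF : IsGerm F)
    {k : Ed d → ℝ} (hk : IsTestFunction k) (hcoh : AlphaGammaCoherent α γ F k)
    {e : ℝ} (he : e ∈ Set.Ioc (0:ℝ) 1) {h : Ed d → ℝ} (hh : IsTestFunction h) :
    Integrable fun y => F y (scaled k y e) * h y := by
  refine ((int_diff hαγ hF hk hcoh he 0 hh).add (int_Fx hF hk he.1 0 hh)).congr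
    (Eventually.of_forall fun y => ?_)
  simp only [Pi.add_apply]; ring

/-- The partial sums. -/
def SN (k : Ed d → ℝ) (F : Ed d → ((Ed d → ℝ) →ₗ[ℝ] ℝ)) (N : ℕ) (g : Ed d → ℝ) : ℝ :=
  ∑ n ∈ Finset.range N, ∫ y, F y (scaled k y (en n)) * hfun k g n y

/-- The error terms. -/
def DN (k : Ed d → ℝ) (F : Ed d → ((Ed d → ℝ) →ₗ[ℝ] ℝ)) (x : Ed d) (g : Ed d → ℝ) (n : ℕ) : ℝ :=
  ∫ y, (F y (scaled k y (en n)) - F x (scaled k y (en n))) * hfun k g n y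

lemma SN_eq {α γ : ℝ} (hαγ : α ≤ γ) {F : Ed d → ((Ed d → ℝ) →ₗ[ℝ] ℝ)} (hF : IsGerm F)
    {k : Ed d → ℝ} (hk : IsTestFunction k) (hcoh : AlphaGammaCoherent α γ F k)
    {g : Ed d → ℝ} (hg : IsTestFunction g) (x : Ed d) (N : ℕ) :
    SN k F (N + 1) g = (∑ n ∈ Finset.range (N + 1), DN k F x g n) +
      F x (conv (scaled k 0 (en N)) (conv (scaled k 0 (en (N + 1))) g)) := by
  rw [← tele hk hg, map_sum, ← Finset.sum_add_distrib, SN]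
  refine Finset.sum_congr rfl fun n _ => ?_
  rw [T_conv (hF.1 x) (tf_scaled hk _ (en_pos _)) (tf_hfun hk hg n), DN]
  simp only [← scaled_shift]
  rw [← integral_add (int_diff hαγ hF hk hcoh (en_mem n) x (tf_hfun hk hg n))
    (int_Fx hF hk (en_pos n) x (tf_hfun hk hg n))]
  congr 1; funext y; ring

lemma SN_tend {α γ : ℝ} (hαγ : α ≤ γ) {F : Ed d → ((Ed d → ℝ) →ₗ[ℝ] ℝ)} (hF : IsGerm F)
    {k : Ed d → ℝ} (hk : IsTestFunction k) (hcoh : AlphaGammaCoherent α γ F k)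
    (hi : ∀ e : ℝ, 0 < e → ∫ u, scaled k 0 e u = 1)
    {g : Ed d → ℝ} (hg : IsTestFunction g) (x : Ed d) (hs : Summable (DN k F x g)) :
    Tendsto (fun N => SN k F N g) atTop (𝓝 ((∑' n, DN k F x g n) + F x g)) := by
  rw [← tendsto_add_atTop_iff_nat 1]
  simp only [SN_eq hαγ hF hk hcoh hg x]
  exact ((tendsto_add_atTop_iff_nat 1).2 hs.hasSum.tendsto_sum_nat).add (T_tend (hF.1 x) hk hg hi)



/-- volume of the unit ball -/
def vb (d : ℕ) : ℝ := (volume (ball (0 : Ed d) 1)).toReal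

lemma vb_nonneg (d : ℕ) : 0 ≤ vb d := ENNReal.toReal_nonneg

lemma int_bound {f : Ed d → ℝ} {x : Ed d} {ρ B : ℝ} (hρ : 0 ≤ ρ)
    (h0 : ∀ y, ρ < dist y x → f y = 0) (hB : ∀ y, dist y x ≤ ρ → |f y| ≤ B) :
    |∫ y, f y| ≤ B * (vb d * ρ ^ d) := by
  have hv : volume.real (closedBall x ρ) = vb d * ρ ^ d := by
    rw [Measure.real, Measure.addHaar_closedBall _ _ hρ, ENNReal.toReal_mul,
      ENNReal.toReal_ofReal (by positivity), finrank_euclideanSpace_fin, vb, mul_comm]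
  have : ∫ y, f y = ∫ y in closedBall x ρ, f y := by
    refine (setIntegral_eq_integral_of_forall_compl_eq_zero fun y hy => h0 y ?_).symm
    simpa using hy
  rw [this, ← hv, ← Real.norm_eq_abs]
  exact norm_setIntegral_le_of_norm_le_const measure_closedBall_lt_top fun y hy => hB y hy

lemma scaled_zero_of {k : Ed d → ℝ} {R e : ℝ} (he : 0 < e) (hR : ∀ x, R < ‖x‖ → k x = 0)
    (x y : Ed d) (hy : R * e < dist y x) : scaled k x e y = 0 := by
  simp only [scaled]
  rw [hR, mul_zero]
  rw [norm_smul, norm_inv, Real.norm_of_nonneg he.le, ← div_eq_inv_mul, lt_div_iff₀ he,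
    ← dist_eq_norm]
  exact hy

lemma conv_zero_of {k g : Ed d → ℝ} {R e l : ℝ} (he : 0 < e) (hR : ∀ x, R < ‖x‖ → k x = 0)
    {x : Ed d} (hg : ∀ y, l < dist y x → g y = 0) (y : Ed d) (hy : l + R * e < dist y x) :
    conv (scaled k 0 e) g y = 0 := by
  have : ∀ u, scaled k 0 e (y - u) * g u = 0 := by
    intro u
    by_cases h : l < dist u x
    · rw [hg u h, mul_zero]
    · rw [scaled_zero_of he hR, zero_mul]
      rw [dist_zero_right, ← dist_eq_norm]
      linarith [dist_triangle y u x]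
  simp [conv, this]

lemma conv_bound {k g : Ed d → ℝ} {B M e l : ℝ} (he : 0 < e) (hl : 0 < l) (hB0 : 0 ≤ B)
    (hB : ∀ x, |k x| ≤ B) {x : Ed d} (hg : ∀ y, l < dist y x → g y = 0)
    (hM : ∀ y, |g y| ≤ M * (l ^ d)⁻¹) (y : Ed d) :
    |conv (scaled k 0 e) g y| ≤ B * vb d * M * (e ^ d)⁻¹ := by
  have h := int_bound (f := fun u => scaled k 0 e (y - u) * g u) (x := x) (ρ := l)
    (B := ((e ^ d)⁻¹ * B) * (M * (l ^ d)⁻¹)) hl.le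
    (fun u hu => by simp only [hg u hu, mul_zero]) (fun u hu => by
      rw [abs_mul]
      refine mul_le_mul ?_ (hM u) (abs_nonneg _) (by positivity)
      simp only [scaled]
      rw [abs_mul, abs_of_pos (by positivity : 0 < (e ^ d)⁻¹)]
      exact mul_le_mul_of_nonneg_left (hB _) (by positivity))
  refine h.trans (le_of_eq ?_)
  have : l ^ d ≠ 0 := by positivity
  field_simp

lemma hfun_zero_of {k g : Ed d → ℝ} {R l : ℝ} (hR0 : 0 ≤ R) (hR : ∀ x, R < ‖x‖ → k x = 0)
    {x : Ed d} (hg : ∀ y, l < dist y x → g y = 0) (n : ℕ) (y : Ed d)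
    (hy : l + 2 * R * en n < dist y x) : hfun k g n y = 0 := by
  have hp := en_pos
  cases n with
  | zero =>
    refine conv_zero_of (en_pos _) hR hg y (lt_of_le_of_lt ?_ hy)
    rw [en_succ 0]
    nlinarith [mul_nonneg hR0 (hp 1).le]
  | succ n =>
    simp only [hfun, Pi.sub_apply]
    rw [conv_zero_of (en_pos _) hR hg y (lt_of_le_of_lt ?_ hy),
      conv_zero_of (en_pos _) hR hg y (lt_of_le_of_lt ?_ hy), sub_zero]
    · rw [en_succ n]; nlinarith [mul_nonneg hR0 (hp (n+1)).le]
    · rw [en_succ (n+1)]; nlinarith [mul_nonneg hR0 (hp (n+2)).le]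

lemma hfun_bound1 {k g : Ed d → ℝ} {B M l : ℝ} (hl : 0 < l) (hB0 : 0 ≤ B) (hM0 : 0 ≤ M)
    (hB : ∀ x, |k x| ≤ B) {x : Ed d} (hg : ∀ y, l < dist y x → g y = 0)
    (hM : ∀ y, |g y| ≤ M * (l ^ d)⁻¹) (n : ℕ) (y : Ed d) :
    |hfun k g n y| ≤ 2 * 2 ^ d * (B * vb d) * M * (en n ^ d)⁻¹ := by
  have hv := vb_nonneg d
  have hcb := fun m => conv_bound (en_pos m) hl hB0 hB hg hM y
  have key : ∀ n, (en (n + 1) ^ d)⁻¹ = 2 ^ d * (en n ^ d)⁻¹ := by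
    intro n
    rw [en_succ n, mul_pow]
    have := en_pos (n + 1)
    field_simp
  have h2 : (1:ℝ) ≤ 2 ^ d := one_le_pow₀ (by norm_num)
  have hq : ∀ n, 0 ≤ (en n ^ d)⁻¹ := fun n => by have := en_pos n; positivity
  have hc0 : 0 ≤ B * vb d * M := by positivity
  cases n with
  | zero =>
    refine (hcb 1).trans ?_
    rw [key 0]
    have := mul_nonneg hc0 (mul_nonneg (by positivity : (0:ℝ) ≤ 2 ^ d) (hq 0))
    nlinarith
  | succ n =>
    simp only [hfun, Pi.sub_apply]
    refine (abs_sub _ _).trans ?_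
    have h1 := hcb (n + 2)
    have h3 := hcb n
    rw [key (n+1)] at h1
    have h4 : (en n ^ d)⁻¹ ≤ (en (n+1) ^ d)⁻¹ := by
      rw [key n]; nlinarith [hq n]
    have h5 : (en n ^ d)⁻¹ ≤ 2 ^ d * (en (n+1) ^ d)⁻¹ := by nlinarith [hq (n+1)]
    have h6 := mul_le_mul_of_nonneg_left h5 hc0
    nlinarith

lemma hfun_bound2 {k g : Ed d → ℝ} {r : ℕ} {C1 M' : ℝ} (hC1 : 0 ≤ C1) (hM0 : 0 ≤ M')
    (hk : ∀ e : ℝ, 0 < e → ∀ y, |conv (scaled k 0 e) g y - g y| ≤ C1 * e ^ r * M')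
    (n : ℕ) (y : Ed d) :
    |hfun k g (n + 1) y| ≤ 2 * 2 ^ r * C1 * M' * en (n + 1) ^ r := by
  simp only [hfun, Pi.sub_apply]
  have h1 := hk _ (en_pos (n+2)) y
  have h2 := hk _ (en_pos n) y
  have h3 : en (n+2) ^ r ≤ en n ^ r := by
    refine pow_le_pow_left₀ (en_pos _).le ?_ _
    rw [en_succ n, en_succ (n+1)]; linarith [en_pos (n+2)]
  have h4 : en n ^ r = 2 ^ r * en (n+1) ^ r := by rw [en_succ n, mul_pow]
  have h5 := mul_le_mul_of_nonneg_left h3 (mul_nonneg hC1 hM0)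
  have h6 : conv (scaled k 0 (en (n + 2))) g y - conv (scaled k 0 (en n)) g y
    = (conv (scaled k 0 (en (n + 2))) g y - g y) - (conv (scaled k 0 (en n)) g y - g y) := by ring
  rw [h6]
  refine (abs_sub _ _).trans ?_
  rw [h4] at h2 h5
  nlinarith

lemma term_bound {α γ C : ℝ} (hαγ : α ≤ γ) {F : Ed d → ((Ed d → ℝ) →ₗ[ℝ] ℝ)} {k h : Ed d → ℝ}
    {K' : Set (Ed d)} (hC0 : 0 ≤ C)
    (hC : ∀ y ∈ K', ∀ z ∈ K', ∀ ε ∈ Set.Ioc (0:ℝ) 1,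
      |F z (scaled k y ε) - F y (scaled k y ε)| ≤ C * ε ^ α * (‖z - y‖ + ε) ^ (γ - α))
    {x : Ed d} {ρ B e : ℝ} (he : e ∈ Set.Ioc (0:ℝ) 1) (hρ : 0 ≤ ρ) (hK : closedBall x ρ ⊆ K')
    (h0 : ∀ y, ρ < dist y x → h y = 0) (hB : ∀ y, |h y| ≤ B) :
    |∫ y, (F y (scaled k y e) - F x (scaled k y e)) * h y|
      ≤ C * e ^ α * (ρ + e) ^ (γ - α) * B * (vb d * ρ ^ d) := by
  have he0 := he.1
  refine int_bound hρ (x := x) (fun y hy => by rw [h0 y hy, mul_zero]) fun y hy => ?_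
  rw [abs_mul]
  refine mul_le_mul ?_ (hB y) (abs_nonneg _) (by positivity)
  rw [abs_sub_comm]
  refine (hC y (hK hy) x (hK (by simpa using hρ)) e he).trans ?_
  have : (‖x - y‖ + e) ^ (γ - α) ≤ (ρ + e) ^ (γ - α) := by
    refine Real.rpow_le_rpow (by positivity) ?_ (by linarith)
    rw [← dist_eq_norm, dist_comm]; linarith
  gcongr



lemma D_bounds {α γ : ℝ} (hαγ : α ≤ γ) {F : Ed d → ((Ed d → ℝ) →ₗ[ℝ] ℝ)} {k : Ed d → ℝ}
    (hk : IsTestFunction k) (hcoh : AlphaGammaCoherent α γ F k) {r : ℕ} {C1 : ℝ} (hC1 : 0 ≤ C1)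
    (happ : ∀ e : ℝ, 0 < e → ∀ g : Ed d → ℝ, IsTestFunction g → ∀ M : ℝ,
      (∀ x, ‖iteratedFDeriv ℝ r g x‖ ≤ M) →
      ∀ y, |conv (scaled k 0 e) g y - g y| ≤ C1 * e ^ r * M)
    {K : Set (Ed d)} (hK : IsCompact K) {L : ℝ} (hL : 1 ≤ L) :
    ∃ C : ℝ, 0 ≤ C ∧ ∀ x ∈ K, ∀ l : ℝ, 0 < l → l ≤ L → ∀ g : Ed d → ℝ, IsTestFunction g →
      ∀ M : ℝ, 0 ≤ M → (∀ y, l < dist y x → g y = 0) → (∀ y, |g y| ≤ M * (l ^ d)⁻¹) →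
      (∀ y, ‖iteratedFDeriv ℝ r g y‖ ≤ M * (l ^ d)⁻¹ * (l ^ r)⁻¹) →
      |DN k F x g 0| ≤ C * M ∧
      (∀ n, l ≤ en n → |DN k F x g n| ≤ C * M * en n ^ γ) ∧
      (∀ n, 1 ≤ n → en n ≤ l → |DN k F x g n| ≤ C * M * (en n ^ (α + r) * l ^ (γ - (α + r)))) := by
  obtain ⟨R, hR0, hR⟩ := exists_radius hk
  obtain ⟨B, hB'⟩ := tf_bound hk 0
  have hB : ∀ x, |k x| ≤ B := fun x => by
    have := hB' x; rwa [norm_iteratedFDeriv_zero] at this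
  have hB0 : 0 ≤ B := (abs_nonneg _).trans (hB 0)
  have hv := vb_nonneg d
  obtain ⟨C, hC0, hC⟩ := coh_nonneg hcoh (hK.cthickening (r := L + 2 * R))
  set A := 2 + 2 * R with hA
  have hA0 : 0 < A := by positivity
  set B1 := 2 * 2 ^ d * (B * vb d) with hB1
  have hB10 : 0 ≤ B1 := by positivity
  set c1 := C * (L + 2 * R + 1) ^ (γ - α) * B1 * (vb d * (L + 2 * R) ^ d) with hc1
  set c2 := C * A ^ (γ - α) * B1 * (vb d * A ^ d) with hc2
  set c3 := C * A ^ (γ - α) * (2 * 2 ^ r * C1) * (vb d * A ^ d) with hc3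
  have hc10 : 0 ≤ c1 := by positivity
  have hc20 : 0 ≤ c2 := by positivity
  have hc30 : 0 ≤ c3 := by positivity
  refine ⟨c1 + c2 + c3, by positivity, fun x hx l hl hlL g hg M hM hg0 hgM hgD => ?_⟩
  have hsub : ∀ n, closedBall x (l + 2 * R * en n) ⊆ cthickening (L + 2 * R) K := by
    intro n y hy
    refine mem_cthickening_of_dist_le y x _ _ hx (le_trans hy ?_)
    nlinarith [en_le_one n]
  have hz := fun n => hfun_zero_of hR0.le hR hg0 n
  have hρ : ∀ n, 0 ≤ l + 2 * R * en n := fun n => by have := en_pos n; positivity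
  have hb1 := fun n => term_bound hαγ hC0 hC (en_mem n) (hρ n) (hsub n) (hz n)
    (hfun_bound1 hl hB0 hM hB hg0 hgM n)
  refine ⟨?_, fun n hn => ?_, fun n hn hnl => ?_⟩
  · refine (hb1 0).trans ?_
    have h0 : en 0 = 1 := by simp [en]
    rw [h0, Real.one_rpow]
    simp only [one_pow, inv_one, mul_one]
    rw [← hB1]
    have e1 : (l + 2 * R + 1) ^ (γ - α) ≤ (L + 2 * R + 1) ^ (γ - α) :=
      Real.rpow_le_rpow (by positivity) (by linarith) (by linarith)
    calc _ ≤ C * (L + 2 * R + 1) ^ (γ - α) * (B1 * M) * (vb d * (L + 2 * R) ^ d) := by gcongr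
      _ = c1 * M := by rw [hc1]; ring
      _ ≤ _ := by gcongr; linarith
  · refine (hb1 n).trans ?_
    rw [← hB1]
    have hp := en_pos n
    have e0 : l + 2 * R * en n + en n ≤ A * en n := by rw [hA]; linarith
    have e0' : l + 2 * R * en n ≤ A * en n := by linarith
    have e1 : (l + 2 * R * en n + en n) ^ (γ - α) ≤ A ^ (γ - α) * en n ^ (γ - α) := by
      rw [← Real.mul_rpow hA0.le hp.le]
      exact Real.rpow_le_rpow (by positivity) e0 (by linarith)
    have e2 : (l + 2 * R * en n) ^ d ≤ A ^ d * en n ^ d := by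
      rw [← mul_pow]; exact pow_le_pow_left₀ (hρ n) e0' _
    have e3 : en n ^ γ = en n ^ α * en n ^ (γ - α) := by
      rw [← Real.rpow_add hp]; congr 1; ring
    calc _ ≤ C * en n ^ α * (A ^ (γ - α) * en n ^ (γ - α)) * (B1 * M * (en n ^ d)⁻¹)
            * (vb d * (A ^ d * en n ^ d)) := by gcongr
      _ = c2 * M * en n ^ γ := by rw [hc2, e3]; field_simp
      _ ≤ _ := by gcongr; linarith
  · obtain ⟨n, rfl⟩ : ∃ m, n = m + 1 := ⟨n - 1, by omega⟩
    have hp := en_pos (n + 1)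
    have hM' : 0 ≤ M * (l ^ d)⁻¹ * (l ^ r)⁻¹ := by positivity
    refine (term_bound hαγ hC0 hC (en_mem (n + 1)) (hρ (n + 1)) (hsub (n + 1)) (hz (n + 1))
      (hfun_bound2 hC1 hM' (fun e he y => happ e he g hg _ hgD y) n)).trans ?_
    have e0 : l + 2 * R * en (n+1) + en (n+1) ≤ A * l := by rw [hA]; nlinarith
    have e0' : l + 2 * R * en (n+1) ≤ A * l := by linarith
    have e1 : (l + 2 * R * en (n+1) + en (n+1)) ^ (γ - α) ≤ A ^ (γ - α) * l ^ (γ - α) := by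
      rw [← Real.mul_rpow hA0.le hl.le]
      exact Real.rpow_le_rpow (by positivity) e0 (by linarith)
    have e2 : (l + 2 * R * en (n+1)) ^ d ≤ A ^ d * l ^ d := by
      rw [← mul_pow]; exact pow_le_pow_left₀ (hρ (n+1)) e0' _
    have e3 : en (n+1) ^ (α + r) = en (n+1) ^ α * en (n+1) ^ r := by
      rw [Real.rpow_add hp, Real.rpow_natCast]
    have e4 : l ^ (γ - (α + r)) = l ^ (γ - α) * (l ^ r)⁻¹ := by
      rw [← sub_sub, Real.rpow_sub hl, Real.rpow_natCast, div_eq_mul_inv]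
    calc _ ≤ C * en (n+1) ^ α * (A ^ (γ - α) * l ^ (γ - α))
            * (2 * 2 ^ r * C1 * (M * (l ^ d)⁻¹ * (l ^ r)⁻¹) * en (n+1) ^ r)
            * (vb d * (A ^ d * l ^ d)) := by gcongr
      _ = c3 * M * (en (n+1) ^ (α + r) * l ^ (γ - (α + r))) := by rw [hc3, e3, e4]; field_simp
      _ ≤ _ := by gcongr; linarith

lemma en_rpow (n : ℕ) (s : ℝ) : en n ^ s = ((1/2 : ℝ) ^ s) ^ n := by
  rw [en, Real.rpow_pow_comm (by norm_num)]

lemma sum_tail {s : ℝ} (hs : 0 < s) :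
    (Summable fun n => en n ^ s) ∧ 0 ≤ ∑' n, en n ^ s := by
  simp only [en_rpow]
  refine ⟨summable_geometric_of_lt_one (by positivity)
    (Real.rpow_lt_one (by norm_num) (by norm_num) hs), tsum_nonneg fun n => by positivity⟩

lemma numB {s : ℝ} (hs : 0 < s) {D : ℕ → ℝ} {B c : ℝ} (hB : 0 ≤ B) (hc : 0 ≤ c)
    (h0 : |D 0| ≤ B) (h1 : ∀ n, 1 ≤ n → |D n| ≤ B * (en n ^ s * c)) :
    Summable D ∧ |∑' n, D n| ≤ (1 + c) * (∑' n, en n ^ s) * B := by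
  have hsum := (sum_tail hs).1.mul_left ((1 + c) * B)
  have hle : ∀ n, ‖D n‖ ≤ (1 + c) * B * en n ^ s := by
    intro n
    have hp : 0 ≤ en n ^ s := Real.rpow_nonneg (en_pos n).le s
    rcases Nat.eq_zero_or_pos n with rfl | hn
    · have : en 0 = 1 := by simp [en]
      rw [this, Real.one_rpow, Real.norm_eq_abs]
      nlinarith
    · refine (h1 n hn).trans ?_
      nlinarith [mul_nonneg hB hp]
  refine ⟨Summable.of_norm_bounded hsum hle, ?_⟩
  refine (tsum_of_norm_bounded hsum.hasSum hle).trans (le_of_eq ?_)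
  rw [tsum_mul_left]; ring

lemma numA {γ s : ℝ} (hγ : γ ≤ 0) (hs : 0 < s) : ∃ C2 : ℝ, 0 ≤ C2 ∧ ∀ (D : ℕ → ℝ) (B l : ℝ),
    0 ≤ B → 0 < l → l ≤ 1 → (∀ n, l ≤ en n → |D n| ≤ B * en n ^ γ) →
    (∀ n, 1 ≤ n → en n ≤ l → |D n| ≤ B * (en n ^ s * l ^ (γ - s))) →
    Summable D ∧ |∑' n, D n| ≤ C2 * B * (if γ = 0 then 1 + |Real.log l| else l ^ γ) := by
  set S := ∑' n, en n ^ s with hS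
  have hS0 : 0 ≤ S := (sum_tail hs).2
  set q : ℝ := (1/2 : ℝ) ^ γ with hq
  set H : ℝ := if γ = 0 then (Real.log 2)⁻¹ + 1 else q / (q - 1) with hH
  have hq0 : 0 < q := by positivity
  have hl2 : 0 < Real.log 2 := Real.log_pos (by norm_num)
  have hH0 : 0 ≤ H := by
    rw [hH]; split_ifs with h
    · positivity
    · have : 1 < q := Real.one_lt_rpow_of_pos_of_lt_one_of_neg (by norm_num) (by norm_num)
        (lt_of_le_of_ne hγ h)
      have : 0 < q - 1 := by linarith
      positivity
  refine ⟨H + S, by positivity, fun D B l hB hl hl1 h1 h2 => ?_⟩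
  obtain ⟨m, hm1, hm2⟩ := exists_nat_pow_near_of_lt_one hl hl1 (y := (1/2:ℝ)) (by norm_num)
    (by norm_num)
  change en (m+1) < l at hm1
  change l ≤ en m at hm2
  set P := if γ = 0 then 1 + |Real.log l| else l ^ γ with hP
  -- tail
  have hanti : ∀ {a b : ℕ}, a ≤ b → en b ≤ en a := fun hab =>
    pow_le_pow_of_le_one (by norm_num) (by norm_num) hab
  have htail : ∀ i, ‖D (i + (m + 1))‖ ≤ B * l ^ γ * en i ^ s := by
    intro i
    refine (h2 _ (by omega) ((hanti (by omega : m + 1 ≤ i + (m+1))).trans hm1.le)).trans ?_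
    have e1 : en (i + (m+1)) = en i * en (m+1) := by simp only [en, pow_add]
    have e2 : en (m+1) ^ s ≤ l ^ s := Real.rpow_le_rpow (en_pos _).le hm1.le hs.le
    have e3 : l ^ γ = l ^ s * l ^ (γ - s) := by rw [← Real.rpow_add hl]; congr 1; ring
    rw [e1, Real.mul_rpow (en_pos _).le (en_pos _).le, e3]
    have := Real.rpow_nonneg (en_pos i).le s
    calc B * (en i ^ s * en (m + 1) ^ s * l ^ (γ - s))
        ≤ B * (en i ^ s * l ^ s * l ^ (γ - s)) := by gcongr
      _ = _ := by ring
  have hts := (sum_tail hs).1.mul_left (B * l ^ γ)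
  have hsD' : Summable fun i => D (i + (m+1)) := Summable.of_norm_bounded hts htail
  have hsD : Summable D := (summable_nat_add_iff (m+1)).1 hsD'
  refine ⟨hsD, ?_⟩
  have ht : |∑' i, D (i + (m+1))| ≤ S * B * l ^ γ := by
    refine (tsum_of_norm_bounded hts.hasSum htail).trans (le_of_eq ?_)
    rw [tsum_mul_left]; ring
  have hhead : |∑ n ∈ Finset.range (m+1), D n| ≤ B * ∑ n ∈ Finset.range (m+1), q ^ n := by
    rw [Finset.mul_sum]
    refine (Finset.abs_sum_le_sum_abs _ _).trans (Finset.sum_le_sum fun n hn => ?_)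
    rw [← en_rpow]
    exact h1 n (hm2.trans (hanti (by simp at hn; omega)))
  have hlP : l ^ γ ≤ P := by
    rw [hP]; split_ifs with h
    · rw [h, Real.rpow_zero]; linarith [abs_nonneg (Real.log l)]
    · exact le_rfl
  have hgeo : ∑ n ∈ Finset.range (m+1), q ^ n ≤ H * P := by
    rw [hH, hP]; split_ifs with h
    · have hq1 : q = 1 := by rw [hq, h, Real.rpow_zero]
      simp only [hq1, one_pow, Finset.sum_const, Finset.card_range, nsmul_eq_mul, mul_one]
      push_cast
      have hlog : (m : ℝ) * Real.log 2 ≤ |Real.log l| := by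
        have h5 := Real.log_le_log hl hm2
        rw [en, Real.log_pow, one_div, Real.log_inv] at h5
        rw [abs_of_nonpos (Real.log_nonpos hl.le hl1)]
        linarith
      have h6 : (m : ℝ) ≤ (Real.log 2)⁻¹ * |Real.log l| := by
        rw [inv_mul_eq_div, le_div_iff₀ hl2]; exact hlog
      have h7 : 0 ≤ (Real.log 2)⁻¹ := by positivity
      nlinarith [abs_nonneg (Real.log l)]
    · have h1q : 1 < q := Real.one_lt_rpow_of_pos_of_lt_one_of_neg (by norm_num) (by norm_num)
        (lt_of_le_of_ne hγ h)
      have hq1 : 0 < q - 1 := by linarith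
      rw [geom_sum_eq h1q.ne', div_mul_eq_mul_div]
      refine div_le_div_of_nonneg_right ?_ hq1.le
      have h8 : q ^ m ≤ l ^ γ := by
        rw [← en_rpow]
        exact Real.rpow_le_rpow_of_nonpos hl hm2 hγ
      rw [pow_succ]
      nlinarith
  rw [← hsD.sum_add_tsum_nat_add (m+1)]
  refine (abs_add_le _ _).trans ?_
  have e1 := mul_le_mul_of_nonneg_left hgeo hB
  have e2 := mul_le_mul_of_nonneg_left hlP (mul_nonneg hS0 hB)
  nlinarith



lemma scaled_deriv {ψ : Ed d → ℝ} (hψ : IsTestFunction ψ) (x : Ed d) {l M : ℝ} (hl : 0 < l) (i : ℕ)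
    (hM : ∀ y, ‖iteratedFDeriv ℝ i ψ y‖ ≤ M) (y : Ed d) :
    ‖iteratedFDeriv ℝ i (scaled ψ x l) y‖ ≤ M * (l ^ d)⁻¹ * (l ^ i)⁻¹ := by
  set f : Ed d →L[ℝ] Ed d := l⁻¹ • ContinuousLinearMap.id ℝ (Ed d) with hf
  have hfn : ‖f‖ ≤ l⁻¹ := by
    refine ContinuousLinearMap.opNorm_le_bound _ (by positivity) fun z => ?_
    simp [hf, norm_smul, abs_of_pos hl]
  have e : scaled ψ x l = fun z => ((l ^ d)⁻¹ • (ψ ∘ f)) (z - x) := by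
    funext z; simp [scaled, hf]
  have hc : ContDiff ℝ i (ψ ∘ f) :=
    (hψ.1.of_le (by exact_mod_cast le_top)).comp f.contDiff
  rw [e, iteratedFDeriv_comp_sub, iteratedFDeriv_const_smul_apply hc.contDiffAt,
    f.iteratedFDeriv_comp_right (hψ.1.of_le (m := (i : ℕ∞)) (by exact_mod_cast le_top)) _ le_rfl, norm_smul,
    Real.norm_of_nonneg (by positivity)]
  have h1 := ContinuousMultilinearMap.norm_compContinuousLinearMap_le
    (iteratedFDeriv ℝ i ψ (f (y - x))) (fun _ : Fin i => f)
  rw [Finset.prod_const, Finset.card_univ, Fintype.card_fin] at h1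
  have h2 : ‖f‖ ^ i ≤ (l ^ i)⁻¹ := by
    rw [← inv_pow]; exact pow_le_pow_left₀ (norm_nonneg _) hfn _
  have hM0 : 0 ≤ M := (norm_nonneg _).trans (hM 0)
  calc _ ≤ (l ^ d)⁻¹ * (M * (l ^ i)⁻¹) := by
        refine mul_le_mul_of_nonneg_left (h1.trans ?_) (by positivity)
        exact mul_le_mul (hM _) h2 (by positivity) hM0
    _ = _ := by ring

lemma SN_add {α γ : ℝ} (hαγ : α ≤ γ) {F : Ed d → ((Ed d → ℝ) →ₗ[ℝ] ℝ)} (hF : IsGerm F)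
    {k : Ed d → ℝ} (hk : IsTestFunction k) (hcoh : AlphaGammaCoherent α γ F k) (N : ℕ)
    {g h : Ed d → ℝ} (hg : IsTestFunction g) (hh : IsTestFunction h) :
    SN k F N (g + h) = SN k F N g + SN k F N h := by
  simp only [SN]
  rw [← Finset.sum_add_distrib]
  refine Finset.sum_congr rfl fun n _ => ?_
  rw [← integral_add (int_F hαγ hF hk hcoh (en_mem n) (tf_hfun hk hg n))
    (int_F hαγ hF hk hcoh (en_mem n) (tf_hfun hk hh n)), hfun_add hk hg hh]
  congr 1; funext y; simp only [Pi.add_apply]; ring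

lemma SN_smul (k : Ed d → ℝ) (F : Ed d → ((Ed d → ℝ) →ₗ[ℝ] ℝ)) (N : ℕ) (c : ℝ) (g : Ed d → ℝ) :
    SN k F N (c • g) = c * SN k F N g := by
  simp only [SN, Finset.mul_sum]
  refine Finset.sum_congr rfl fun n _ => ?_
  rw [← integral_const_mul, hfun_smul]
  congr 1; funext y; simp only [Pi.smul_apply, smul_eq_mul]; ring

lemma SN_lin {α γ : ℝ} (hαγ : α ≤ γ) {F₁ F₂ : Ed d → ((Ed d → ℝ) →ₗ[ℝ] ℝ)}
    (hF₁ : IsGerm F₁) (hF₂ : IsGerm F₂) {k : Ed d → ℝ} (hk : IsTestFunction k)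
    (hc₁ : AlphaGammaCoherent α γ F₁ k) (hc₂ : AlphaGammaCoherent α γ F₂ k) (a b : ℝ) (N : ℕ)
    {g : Ed d → ℝ} (hg : IsTestFunction g) :
    SN k (fun x => a • F₁ x + b • F₂ x) N g = a * SN k F₁ N g + b * SN k F₂ N g := by
  simp only [SN, Finset.mul_sum]
  rw [← Finset.sum_add_distrib]
  refine Finset.sum_congr rfl fun n _ => ?_
  rw [← integral_const_mul, ← integral_const_mul,
    ← integral_add ((int_F hαγ hF₁ hk hc₁ (en_mem n) (tf_hfun hk hg n)).const_mul _)
    ((int_F hαγ hF₂ hk hc₂ (en_mem n) (tf_hfun hk hg n)).const_mul _)]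
  congr 1; funext y
  simp only [LinearMap.add_apply, LinearMap.smul_apply, smul_eq_mul]; ring

/-- The space of test functions. -/
def TF (d : ℕ) : Submodule ℝ (Ed d → ℝ) where
  carrier := {g | IsTestFunction g}
  add_mem' := fun ha hb => tf_add ha hb
  zero_mem' := tf_zero
  smul_mem' := fun c _ hg => tf_smul c hg

/-- `T` is the limit functional. -/
def IsLim (k : Ed d → ℝ) (F : Ed d → ((Ed d → ℝ) →ₗ[ℝ] ℝ)) (T : (Ed d → ℝ) →ₗ[ℝ] ℝ) : Prop :=
  ∀ g, IsTestFunction g → Tendsto (fun N => SN k F N g) atTop (𝓝 (T g))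

lemma exists_lim {α γ : ℝ} (hαγ : α ≤ γ) {F : Ed d → ((Ed d → ℝ) →ₗ[ℝ] ℝ)} (hF : IsGerm F)
    {k : Ed d → ℝ} (hk : IsTestFunction k) (hcoh : AlphaGammaCoherent α γ F k)
    (hlim : ∀ g, IsTestFunction g → ∃ a, Tendsto (fun N => SN k F N g) atTop (𝓝 a)) :
    ∃ T, IsLim k F T := by
  choose! t ht using hlim
  let T0 : TF d →ₗ[ℝ] ℝ :=
    { toFun := fun g => t g
      map_add' := fun g h => by
        refine tendsto_nhds_unique (ht _ (tf_add g.2 h.2)) ?_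
        have := (ht _ g.2).add (ht _ h.2)
        refine this.congr fun N => (SN_add hαγ hF hk hcoh N g.2 h.2).symm
      map_smul' := fun c g => by
        refine tendsto_nhds_unique (ht _ (tf_smul c g.2)) ?_
        have := (ht _ g.2).const_mul c
        refine this.congr fun N => (SN_smul k F N c g).symm }
  obtain ⟨T, hT⟩ := LinearMap.exists_extend T0
  refine ⟨T, fun g hg => ?_⟩
  have h1 : T g = t g := by
    have := LinearMap.congr_fun hT (⟨g, hg⟩ : TF d)
    exact this
  rw [h1]; exact ht g hg

open Classical in
/-- The reconstruction operator. -/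
def Rec (k : Ed d → ℝ) (F : Ed d → ((Ed d → ℝ) →ₗ[ℝ] ℝ)) : (Ed d → ℝ) →ₗ[ℝ] ℝ :=
  if h : ∃ T, IsLim k F T then h.choose else 0

lemma Rec_spec {k : Ed d → ℝ} {F : Ed d → ((Ed d → ℝ) →ₗ[ℝ] ℝ)} (h : ∃ T, IsLim k F T) :
    IsLim k F (Rec k F) := by
  rw [Rec, dif_pos h]; exact h.choose_spec

/-- global bound for the error terms at the origin -/
lemma glob {α γ : ℝ} (hαγ : α ≤ γ) {F : Ed d → ((Ed d → ℝ) →ₗ[ℝ] ℝ)} {k : Ed d → ℝ}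
    (hk : IsTestFunction k) (hcoh : AlphaGammaCoherent α γ F k) {r : ℕ} (hs : 0 < α + r)
    {C1 : ℝ} (hC1 : 0 ≤ C1)
    (happ : ∀ e : ℝ, 0 < e → ∀ g : Ed d → ℝ, IsTestFunction g → ∀ M : ℝ,
      (∀ x, ‖iteratedFDeriv ℝ r g x‖ ≤ M) →
      ∀ y, |conv (scaled k 0 e) g y - g y| ≤ C1 * e ^ r * M)
    {L : ℝ} (hL : 1 ≤ L) :
    ∃ C : ℝ, 0 ≤ C ∧ ∀ g : Ed d → ℝ, IsTestFunction g → (∀ y, L < ‖y‖ → g y = 0) →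
      Summable (DN k F 0 g) ∧ |∑' n, DN k F 0 g n| ≤ C * Cnorm r g := by
  obtain ⟨C, hC0, hC⟩ := D_bounds hαγ hk hcoh hC1 happ (isCompact_singleton (x := (0 : Ed d))) hL
  have hL0 : 0 < L := by linarith
  set c := L ^ (γ - (α + r)) with hc
  have hc0 : 0 ≤ c := by positivity
  set S := ∑' n, en n ^ (α + r) with hS
  have hS0 : 0 ≤ S := (sum_tail hs).2
  set P := L ^ d * L ^ r with hP
  have hP0 : 0 ≤ P := by positivity
  refine ⟨(1 + c) * S * (C * P), by positivity, fun g hg hg0 => ?_⟩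
  have hN := Cnorm_nonneg hg r
  have hLr : 1 ≤ L ^ r := one_le_pow₀ hL
  obtain ⟨h0, -, h2⟩ := hC 0 rfl L hL0 le_rfl g hg (P * Cnorm r g) (by positivity)
    (fun y hy => hg0 y (by simpa using hy))
    (fun y => by
      have := le_Cnorm hg (Nat.zero_le r) y
      rw [norm_iteratedFDeriv_zero, Real.norm_eq_abs] at this
      have e : P * Cnorm r g * (L ^ d)⁻¹ = L ^ r * Cnorm r g := by rw [hP]; field_simp
      rw [e]; nlinarith)
    (fun y => by
      have := le_Cnorm hg (le_refl r) y
      have e : P * Cnorm r g * (L ^ d)⁻¹ * (L ^ r)⁻¹ = Cnorm r g := by rw [hP]; field_simp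
      rw [e]; exact this)
  have := numB hs (D := DN k F 0 g) (B := C * (P * Cnorm r g)) (by positivity) hc0 h0
    (fun n hn => h2 n hn ((en_le_one n).trans hL))
  refine ⟨this.1, this.2.trans (le_of_eq (by ring))⟩

lemma exists_radius_one {g : Ed d → ℝ} (hg : IsTestFunction g) :
    ∃ L : ℝ, 1 ≤ L ∧ ∀ y, L < ‖y‖ → g y = 0 := by
  obtain ⟨R, -, hR⟩ := exists_radius hg
  exact ⟨max R 1, le_max_right _ _, fun y hy => hR y ((le_max_left _ _).trans_lt hy)⟩


end Helpers


/-- Reconstruction Theorem for γ ≤ 0: existence of a (linear in the germ)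
reconstruction with rate λ^γ (or 1 + |log λ| if γ = 0). -/
theorem stmt9 {d : ℕ} (γ α β : ℝ) (hγ : γ ≤ 0) (hαγ : α ≤ γ) (hβ : β ≤ 0)
    (φ : Ed d → ℝ) (hφ : IsTestFunction φ) (hφi : (∫ x, φ x) ≠ 0) :
    ∃ R : (Ed d → ((Ed d → ℝ) →ₗ[ℝ] ℝ)) → ((Ed d → ℝ) →ₗ[ℝ] ℝ),
      (∀ F : Ed d → ((Ed d → ℝ) →ₗ[ℝ] ℝ),
        IsGerm F → AlphaGammaCoherent α γ F φ → HomBound β F φ →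
        IsDistribution (R F) ∧
        ∀ K : Set (Ed d), IsCompact K → ∀ r : ℕ, (r : ℝ) > max (-α) (-β) →
          ∃ C : ℝ, ∀ ψ : Ed d → ℝ, Br r ψ → ∀ x ∈ K, ∀ l ∈ Set.Ioc (0:ℝ) 1,
            |R F (scaled ψ x l) - F x (scaled ψ x l)| ≤
              C * (if γ = 0 then 1 + |Real.log l| else l ^ γ)) ∧
      (∀ F₁ F₂ : Ed d → ((Ed d → ℝ) →ₗ[ℝ] ℝ), ∀ a b : ℝ,
        IsGerm F₁ → AlphaGammaCoherent α γ F₁ φ → HomBound β F₁ φ →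
        IsGerm F₂ → AlphaGammaCoherent α γ F₂ φ → HomBound β F₂ φ →
        ∀ ψ : Ed d → ℝ, IsTestFunction ψ →
          R (fun x => a • F₁ x + b • F₂ x) ψ = a * R F₁ ψ + b * R F₂ ψ) := by
  obtain ⟨c, hc⟩ := exists_coeff (Nat.floor (-α))
  set r0 : ℕ := Nat.floor (-α) + 1 with hr0
  set k := khat φ c (Nat.floor (-α)) with hkdef
  have hk : IsTestFunction k := tf_khat hφ c _
  have hi : ∀ e : ℝ, 0 < e → ∫ u, scaled k 0 e u = 1 := fun e he => khat_integral hφ hφi hc he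
  obtain ⟨C1, hC1, happ⟩ := khat_approx hφ hφi hc
  have hs : 0 < α + (r0 : ℝ) := by
    have := Nat.lt_floor_add_one (-α)
    rw [hr0]; push_cast; linarith
  have hex : ∀ F : Ed d → ((Ed d → ℝ) →ₗ[ℝ] ℝ), IsGerm F → AlphaGammaCoherent α γ F φ →
      ∃ T, IsLim k F T := by
    intro F hF hcF
    have hck := coh_khat hαγ hcF c (Nat.floor (-α))
    refine exists_lim hαγ hF hk hck fun g hg => ?_
    obtain ⟨L, hL, hL0⟩ := exists_radius_one hg
    obtain ⟨C, -, hC⟩ := glob hαγ hk hck hs hC1 happ hL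
    exact ⟨_, SN_tend hαγ hF hk hck hi hg 0 (hC g hg hL0).1⟩
  refine ⟨Rec k, fun F hF hcF _ => ⟨?_, ?_⟩, ?_⟩
  · have hck := coh_khat hαγ hcF c (Nat.floor (-α))
    have hR := Rec_spec (hex F hF hcF)
    intro K hK
    obtain ⟨L', hL'⟩ := hK.isBounded.subset_closedBall (0 : Ed d)
    obtain ⟨C, hC0, hC⟩ := glob hαγ hk hck hs hC1 happ (le_max_right L' 1)
    obtain ⟨rF, CF, hCF⟩ := hF.1 0 K hK
    refine ⟨max r0 rF, C + |CF|, fun g hg hgK => ?_⟩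
    have hg0 : ∀ y, max L' 1 < ‖y‖ → g y = 0 := by
      intro y hy
      by_contra h
      have := hL' (hgK (subset_tsupport g h))
      rw [mem_closedBall_zero_iff] at this
      exact absurd ((le_max_left L' 1).trans_lt hy) (not_lt.2 this)
    obtain ⟨hsum, hb⟩ := hC g hg hg0
    rw [tendsto_nhds_unique (hR g hg) (SN_tend hαγ hF hk hck hi hg 0 hsum)]
    refine (abs_add_le _ _).trans ?_
    have h1 := Cnorm_mono hg (le_max_left r0 rF)
    have h2 := Cnorm_mono hg (le_max_right r0 rF)
    have h3 := hCF g hg hgK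
    have h4 := mul_le_mul_of_nonneg_right (le_abs_self CF) (Cnorm_nonneg hg rF)
    have h5 := mul_le_mul_of_nonneg_left h1 hC0
    have h6 := mul_le_mul_of_nonneg_left h2 (abs_nonneg CF)
    linarith
  · have hck := coh_khat hαγ hcF c (Nat.floor (-α))
    have hR := Rec_spec (hex F hF hcF)
    intro K hK r hr
    have hrr : r0 ≤ r := by
      have h1 : (-α) < r := (le_max_left _ _).trans_lt hr
      have h2 : 0 ≤ -α := by linarith
      exact (Nat.floor_lt h2).2 h1
    obtain ⟨C, hC0, hC⟩ := D_bounds hαγ hk hck hC1 happ hK (le_refl (1 : ℝ))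
    obtain ⟨C2, hC20, hC2⟩ := numA hγ hs
    refine ⟨C2 * C, fun ψ hψ x hx l hl => ?_⟩
    obtain ⟨hψt, hψs, hψn⟩ := hψ
    have hg := tf_scaled hψt x hl.1
    have hd : ∀ i ≤ r, ∀ y, ‖iteratedFDeriv ℝ i ψ y‖ ≤ 1 := fun i hi' y =>
      (le_Cnorm hψt hi' y).trans hψn
    have hz : ∀ y, (1 : ℝ) < ‖y‖ → ψ y = 0 := by
      intro y hy
      by_contra h
      have := hψs (subset_tsupport ψ h)
      rw [mem_closedBall_zero_iff] at this
      linarith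
    obtain ⟨-, hA, hB⟩ := hC x hx l hl.1 hl.2 (scaled ψ x l) hg 1 zero_le_one
      (fun y hy => scaled_zero_of hl.1 hz x y (by simpa using hy))
      (fun y => by
        have := scaled_deriv hψt x hl.1 0 (hd 0 (Nat.zero_le r)) y
        rw [norm_iteratedFDeriv_zero, Real.norm_eq_abs] at this
        simpa using this)
      (fun y => scaled_deriv hψt x hl.1 r0 (hd r0 hrr) y)
    obtain ⟨hsum, hb⟩ := hC2 (DN k F x (scaled ψ x l)) (C * 1) l (by linarith) hl.1 hl.2 hA hB
    rw [tendsto_nhds_unique (hR _ hg) (SN_tend hαγ hF hk hck hi hg x hsum), add_sub_cancel_right]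
    rw [mul_one] at hb
    exact hb
  · intro F₁ F₂ a b h1 hc1 _ h2 hc2 _ ψ hψ
    have hck1 := coh_khat hαγ hc1 c (Nat.floor (-α))
    have hck2 := coh_khat hαγ hc2 c (Nat.floor (-α))
    have hR1 := Rec_spec (hex F₁ h1 hc1)
    have hR2 := Rec_spec (hex F₂ h2 hc2)
    have hl : ∀ g, IsTestFunction g →
        Tendsto (fun N => SN k (fun x => a • F₁ x + b • F₂ x) N g) atTop
          (nhds (a * Rec k F₁ g + b * Rec k F₂ g)) := fun g hg =>
      (((hR1 g hg).const_mul a).add ((hR2 g hg).const_mul b)).congr fun N =>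
        (SN_lin hαγ h1 h2 hk hck1 hck2 a b N hg).symm
    have hR := Rec_spec (k := k) (F := fun x => a • F₁ x + b • F₂ x)
      ⟨a • Rec k F₁ + b • Rec k F₂, fun g hg => by simpa using hl g hg⟩
    exact tendsto_nhds_unique (hR ψ hψ) (hl ψ hψ)
end
end
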